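/- Let G be a simple graph on n ≥ 3 vertices that is outer 5-planar, i.e., its vertices can be arranged in a cyclic order (equivalently, placed in convex position with straight-line edges) such that every edge is crossed by at most 5 other edges. Then G has at most (389/98)·(n − 2) edges. -/

import Mathlib

/-- `x` lies strictly between `a` and `b` in the cyclic order of `Fin n`
(going forward from `a` to `b` along the cycle). -/
def cycBtw (n : ℕ) (a b x : Fin n) : Prop :=
  0 < (x.val + n - a.val) % n ∧ (x.val + n - a.val) % n < (b.val + n - a.val) % n

/-- Two edges `e` and `f` cross in the cyclic order determined by the positions `σ`:
they have four distinct endpoints and the endpoints interleave, i.e. exactly one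
endpoint of `f` lies strictly between the endpoints of `e`. -/
def crossing (n : ℕ) (σ : Fin n → Fin n) (e f : Sym2 (Fin n)) : Prop :=
  ∃ a b c d : Fin n, e = s(a, b) ∧ f = s(c, d) ∧
    a ≠ b ∧ c ≠ d ∧ a ≠ c ∧ a ≠ d ∧ b ≠ c ∧ b ≠ d ∧
    (cycBtw n (σ a) (σ b) (σ c) ↔ ¬ cycBtw n (σ a) (σ b) (σ d))

/-- With respect to the cyclic order given by positions `σ`, every edge of `G`
is crossed by at most `k` other edges. -/
def OuterKPlanarOrd (n k : ℕ) (σ : Fin n → Fin n) (G : SimpleGraph (Fin n)) : Prop :=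
  ∀ e ∈ G.edgeSet, ({f ∈ G.edgeSet | crossing n σ e f}).ncard ≤ k

/-- `G` is outer `k`-planar: its vertices can be arranged in a cyclic order such
that every edge is crossed by at most `k` other edges. -/
def IsOuterKPlanar (n k : ℕ) (G : SimpleGraph (Fin n)) : Prop :=
  ∃ σ : Fin n ≃ Fin n, OuterKPlanarOrd n k (⇑σ) G

section counting

open Finset

/-- The number of ones of the adjacency function `A` in the block `[p, q) × [r, s)`. -/
def blockSum (A : ℕ → ℕ → ℕ) (p q r s : ℕ) : ℕ := ∑ u ∈ Ico p q, ∑ v ∈ Ico r s, A u v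

/-- The number of edges of `A` on the vertices `0, …, n - 1` that cross the chord `{i, j}`,
where `i < j`. -/
def crossCount (n : ℕ) (A : ℕ → ℕ → ℕ) (i j : ℕ) : ℕ :=
  blockSum A (i + 1) j 0 i + blockSum A (i + 1) j (j + 1) n

/-- `A` is the adjacency function of a graph on `0, …, n - 1`, drawn in convex position in this
order, in which every edge is crossed by at most five others. -/
structure IsOuterFive (n : ℕ) (A : ℕ → ℕ → ℕ) : Prop where
  le_one : ∀ i j, A i j ≤ 1
  symm : ∀ i j, A i j = A j i
  diag : ∀ i, A i i = 0
  cross : ∀ i j, i < j → j < n → A i j ≠ 0 → crossCount n A i j ≤ 5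

section blockSum

variable {A : ℕ → ℕ → ℕ} {p q r s m : ℕ}

theorem blockSum_split_left (h₁ : p ≤ m) (h₂ : m ≤ q) :
    blockSum A p q r s = blockSum A p m r s + blockSum A m q r s :=
  (sum_Ico_consecutive _ h₁ h₂).symm

theorem blockSum_split_right (h₁ : r ≤ m) (h₂ : m ≤ s) :
    blockSum A p q r s = blockSum A p q r m + blockSum A p q m s := by
  simp only [blockSum, ← sum_add_distrib]
  exact sum_congr rfl fun u _ => (sum_Ico_consecutive _ h₁ h₂).symm

theorem blockSum_comm (hA : ∀ i j, A i j = A j i) (p q r s : ℕ) :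
    blockSum A p q r s = blockSum A r s p q := by
  rw [blockSum, sum_comm]
  exact sum_congr rfl fun v _ => sum_congr rfl fun u _ => hA u v

@[simp] theorem blockSum_single (i j : ℕ) : blockSum A i (i + 1) j (j + 1) = A i j := by
  simp [blockSum]

theorem blockSum_eq_zero_of_le_left (h : q ≤ p) : blockSum A p q r s = 0 := by
  simp [blockSum, Ico_eq_empty_of_le h]

theorem blockSum_eq_zero_of_le_right (h : s ≤ r) : blockSum A p q r s = 0 := by
  simp [blockSum, Ico_eq_empty_of_le h]

theorem blockSum_eq_zero (h : ∀ u v, p ≤ u → u < q → r ≤ v → v < s → A u v = 0) :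
    blockSum A p q r s = 0 :=
  sum_eq_zero fun u hu => sum_eq_zero fun v hv =>
    h u v (mem_Ico.1 hu).1 (mem_Ico.1 hu).2 (mem_Ico.1 hv).1 (mem_Ico.1 hv).2

theorem exists_of_blockSum_pos (h : 0 < blockSum A p q r s) :
    ∃ u v, p ≤ u ∧ u < q ∧ r ≤ v ∧ v < s ∧ A u v ≠ 0 := by
  by_contra! hc
  exact h.ne' (blockSum_eq_zero fun u v h₁ h₂ h₃ h₄ => hc u v h₁ h₂ h₃ h₄)

theorem eq_zero_of_blockSum_eq_zero (h : blockSum A p q r s = 0) {u v : ℕ} (h₁ : p ≤ u)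
    (h₂ : u < q) (h₃ : r ≤ v) (h₄ : v < s) : A u v = 0 :=
  sum_eq_zero_iff.1 (sum_eq_zero_iff.1 h u (mem_Ico.2 ⟨h₁, h₂⟩)) v (mem_Ico.2 ⟨h₃, h₄⟩)

theorem blockSum_comp_le {φ : ℕ → ℕ} (hφ : Function.Injective φ) {p' q' r' s' : ℕ}
    (h₁ : ∀ u, p ≤ u → u < q → p' ≤ φ u ∧ φ u < q')
    (h₂ : ∀ v, r ≤ v → v < s → r' ≤ φ v ∧ φ v < s') :
    blockSum (fun i j => A (φ i) (φ j)) p q r s ≤ blockSum A p' q' r' s' := by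
  simp only [blockSum, ← sum_product']
  have := sum_image (s := Ico p q ×ˢ Ico r s) (f := fun x : ℕ × ℕ => A x.1 x.2)
    (g := Prod.map φ φ) (hφ.prodMap hφ).injOn
  simp only [Prod.map_fst, Prod.map_snd] at this
  rw [← this]
  refine sum_le_sum_of_subset fun x hx => ?_
  obtain ⟨⟨u, v⟩, huv, rfl⟩ := mem_image.1 hx
  simp only [mem_product, mem_Ico, Prod.map_apply] at huv ⊢
  exact ⟨h₁ u huv.1.1 huv.1.2, h₂ v huv.2.1 huv.2.2⟩

theorem blockSum_mono {p' q' r' s' : ℕ} (hp : p' ≤ p) (hq : q ≤ q') (hr : r' ≤ r)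
    (hs : s ≤ s') : blockSum A p q r s ≤ blockSum A p' q' r' s' :=
  blockSum_comp_le (φ := id) Function.injective_id
    (fun _ h₁ h₂ => ⟨hp.trans h₁, h₂.trans_le hq⟩) fun _ h₁ h₂ => ⟨hr.trans h₁, h₂.trans_le hs⟩

/-- The adjacency function of the mirror image. -/
def mirror (n : ℕ) (A : ℕ → ℕ → ℕ) (i j : ℕ) : ℕ := A (n - 1 - i) (n - 1 - j)

theorem blockSum_mirror {n : ℕ} (hq : q ≤ n) (hs : s ≤ n) :
    blockSum (mirror n A) (n - q) (n - p) (n - s) (n - r) = blockSum A p q r s := by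
  rcases Nat.eq_zero_or_pos n with rfl | hn
  · rw [blockSum_eq_zero_of_le_left (by omega), blockSum_eq_zero_of_le_left (by omega)]
  have key : ∀ (f : ℕ → ℕ) {x y : ℕ}, y ≤ n →
      ∑ u ∈ Ico (n - y) (n - x), f (n - 1 - u) = ∑ u ∈ Ico x y, f u := by
    intro f x y hy
    have := sum_Ico_reflect (fun u => f (n - 1 - u)) x (m := y) (n := n - 1) (by omega)
    rw [Nat.sub_add_cancel hn] at this
    rw [← this]
    refine sum_congr rfl fun u hu => congrArg f ?_
    have := (mem_Ico.1 hu).2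
    omega
  simp only [blockSum, mirror]
  rw [key (fun u => ∑ v ∈ Ico (n - s) (n - r), A u (n - 1 - v)) hq]
  exact sum_congr rfl fun u _ => key (fun v => A u v) hs

end blockSum

section apex

variable {n : ℕ} {A : ℕ → ℕ → ℕ}

theorem crossCount_mirror {i j : ℕ} (hij : i < j) (hj : j < n) :
    crossCount n (mirror n A) (n - 1 - j) (n - 1 - i) = crossCount n A i j := by
  have h₁ := blockSum_mirror (A := A) (p := i + 1) (q := j) (r := j + 1) (s := n) hj.le le_rfl
  have h₂ := blockSum_mirror (A := A) (p := i + 1) (q := j) (r := 0) (s := i) hj.le (by omega)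
  rw [crossCount, crossCount, ← h₁, ← h₂, add_comm]
  congr 2 <;> omega

theorem IsOuterFive.mirror (hA : IsOuterFive n A) : IsOuterFive n (mirror n A) where
  le_one _ _ := hA.le_one _ _
  symm _ _ := hA.symm _ _
  diag _ := hA.diag _
  cross i j hij hj h := by
    have := crossCount_mirror (A := A) (i := n - 1 - j) (j := n - 1 - i) (n := n)
      (by omega) (by omega)
    rw [show n - 1 - (n - 1 - i) = i by omega, show n - 1 - (n - 1 - j) = j by omega] at this
    rw [this]
    exact hA.cross _ _ (by omega) (by omega) (by rw [hA.symm]; exact h)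

/-- The number of edges from `[p, q)` to the vertices outside `[a, b]`. -/
def outSum (n : ℕ) (A : ℕ → ℕ → ℕ) (a b p q : ℕ) : ℕ :=
  blockSum A p q 0 a + blockSum A p q (b + 1) n

theorem outSum_split {a b p m q : ℕ} (h₁ : p ≤ m) (h₂ : m ≤ q) :
    outSum n A a b p q = outSum n A a b p m + outSum n A a b m q := by
  simp only [outSum, blockSum_split_left h₁ h₂]
  omega

theorem outSum_self {a b p : ℕ} : outSum n A a b p p = 0 := by
  simp [outSum, blockSum_eq_zero_of_le_left]

theorem crossCount_eq_outSum {a b s z : ℕ} (ha : a ≤ s) (hz : z ≤ b) (hb : b < n) :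
    crossCount n A s z = outSum n A a b (s + 1) z + blockSum A (s + 1) z a s +
      blockSum A (s + 1) z (z + 1) (b + 1) := by
  simp only [crossCount, outSum]
  rw [blockSum_split_right (Nat.zero_le a) ha,
    blockSum_split_right (m := b + 1) (r := z + 1) (by omega) hb]
  omega

theorem outSum_mirror {a b p q p' q' : ℕ} (hab : a ≤ b) (hb : b < n) (hq : q ≤ n)
    (hp' : p' = n - q) (hq' : q' = n - p) :
    outSum n (mirror n A) (n - 1 - b) (n - 1 - a) p' q' = outSum n A a b p q := by
  subst hp' hq'
  have h₁ := blockSum_mirror (A := A) (p := p) (q := q) (r := b + 1) (s := n) hq le_rfl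
  have h₂ := blockSum_mirror (A := A) (p := p) (q := q) (r := 0) (s := a) hq (by omega)
  rw [outSum, outSum, ← h₁, ← h₂, add_comm]
  congr 2 <;> omega

theorem exists_apex_of_not_left (hA : IsOuterFive n A) {a u b : ℕ} (hau : a < u) (hub : u < b)
    (hb : b < n) (h5 : outSum n A a b (a + 1) b ≤ 5)
    (hl : 2 * outSum n A a b (a + 1) u ≤ outSum n A a b (a + 1) b)
    (hr : 2 * outSum n A a b (u + 1) b ≤ outSum n A a b (a + 1) b)
    (hu : 5 < crossCount n A a u) :
    ∃ x, a < x ∧ x < b ∧ crossCount n A a x ≤ 5 ∧ crossCount n A x b ≤ 5 := by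
  classical
  have comm := blockSum_comm hA.symm
  have su1 := outSum_split (n := n) (A := A) (a := a) (b := b) (p := a + 1) (m := u) (q := b)
    hau hub.le
  have su2 := outSum_split (n := n) (A := A) (a := a) (b := b) (p := u) (m := u + 1) (q := b)
    (by omega) hub
  by_cases hw : ∃ w, u < w ∧ w < b ∧ A a w ≠ 0
  · -- the last neighbour of `a` beyond `u` is an apex
    obtain ⟨w, ⟨huw, hwb, haw⟩, hmax⟩ : ∃ w, (u < w ∧ w < b ∧ A a w ≠ 0) ∧
        ∀ v, w < v → v < b → A a v = 0 := by
      obtain ⟨w₀, hw₀⟩ := hw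
      have hP := Nat.findGreatest_spec (P := fun w => u < w ∧ w < b ∧ A a w ≠ 0) hw₀.2.1.le hw₀
      refine ⟨_, hP, fun v h₁ h₂ => ?_⟩
      by_contra h₃
      exact Nat.findGreatest_is_greatest h₁ h₂.le ⟨by omega, h₂, h₃⟩
    have hc := hA.cross a w (by omega) (by omega) haw
    refine ⟨w, by omega, hwb, hc, ?_⟩
    rw [crossCount_eq_outSum le_rfl hwb.le hb, blockSum_eq_zero_of_le_right le_rfl] at hc
    rw [crossCount_eq_outSum (a := a) (b := b) (by omega) le_rfl hb,
      blockSum_eq_zero_of_le_right le_rfl, comm,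
      blockSum_split_left (m := a + 1) (by omega) (by omega),
      blockSum_eq_zero (p := a) (q := a + 1) fun i v h₁ h₂ h₃ h₄ => by
        obtain rfl : i = a := by omega
        exact hmax v (by omega) h₄]
    have h₁ := outSum_split (n := n) (A := A) (a := a) (b := b) (p := a + 1) (m := w) (q := b)
      (by omega) hwb.le
    have h₂ := outSum_split (n := n) (A := A) (a := a) (b := b) (p := w) (m := w + 1) (q := b)
      (by omega) hwb
    have h₃ := outSum_split (n := n) (A := A) (a := a) (b := b) (p := u + 1) (m := w) (q := b)
      (by omega) hwb.le
    have h₄ := blockSum_split_right (A := A) (p := a + 1) (q := w) (r := w + 1) (m := b)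
      (s := b + 1) hwb (by omega)
    omega
  push Not at hw
  -- `y` is the last vertex before `u` for which `{a, y}` is crossed at most five times
  obtain ⟨y, ⟨hay, hyu, hy⟩, hymax⟩ : ∃ y, (a < y ∧ y < u ∧ crossCount n A a y ≤ 5) ∧
      ∀ v, y < v → v ≤ u → 5 < crossCount n A a v := by
    have h₀ : crossCount n A a (a + 1) = 0 := by
      simp [crossCount, blockSum_eq_zero_of_le_left]
    have hau' : a + 1 ≠ u := by rintro rfl; omega
    have hP := Nat.findGreatest_spec (P := fun y => a < y ∧ y < u ∧ crossCount n A a y ≤ 5)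
      (m := a + 1) (n := u) (by omega) ⟨by omega, by omega, by omega⟩
    refine ⟨_, hP, fun v h₁ h₂ => ?_⟩
    rcases h₂.eq_or_lt with rfl | h₂
    · exact hu
    by_contra h₃
    exact Nat.findGreatest_is_greatest h₁ h₂.le ⟨by omega, h₂, by omega⟩
  have ha0 : ∀ v, y < v → v < b → A a v = 0 := by
    intro v h₁ h₂
    rcases le_or_gt v u with h₃ | h₃
    · by_contra h₄
      have := hA.cross a v (by omega) (by omega) h₄
      have := hymax v h₁ h₃
      omega
    · exact hw v h₃ h₂
  have hq := hymax (y + 1) (by omega) hyu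
  rw [crossCount_eq_outSum (a := a) (b := b) le_rfl (by omega) hb,
    blockSum_eq_zero_of_le_right le_rfl] at hq
  have sq := outSum_split (n := n) (A := A) (a := a) (b := b) (p := a + 1) (m := y + 1) (q := u)
    (by omega) hyu
  obtain ⟨s₀, z₀, hs₀, hs₀', hz₀, hz₀', hsz₀⟩ := exists_of_blockSum_pos (A := A) (p := a + 1)
    (q := y + 1) (r := y + 1 + 1) (s := b + 1) (by omega)
  -- `z` is the furthest end of an edge passing over `y + 1`
  obtain ⟨z, ⟨hyz, hzb, s₁, hs₁, hs₁', hsz₁⟩, hzmax⟩ : ∃ z, (y + 1 < z ∧ z ≤ b ∧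
      ∃ s, a < s ∧ s < y + 1 ∧ A s z ≠ 0) ∧
      ∀ s v, z < v → v ≤ b → a < s → s < y + 1 → A s v = 0 := by
    have hP := Nat.findGreatest_spec (P := fun z => y + 1 < z ∧ z ≤ b ∧
      ∃ s, a < s ∧ s < y + 1 ∧ A s z ≠ 0) (m := z₀) (n := b) (by omega)
      ⟨by omega, by omega, s₀, by omega, hs₀', hsz₀⟩
    refine ⟨_, hP, fun s v h₁ h₂ h₃ h₄ => ?_⟩
    by_contra h₅
    exact Nat.findGreatest_is_greatest h₁ h₂ ⟨by omega, h₂, s, h₃, h₄, h₅⟩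
  obtain ⟨s, ⟨has, hsy, hsz⟩, hsmin⟩ : ∃ s, (a < s ∧ s < y + 1 ∧ A s z ≠ 0) ∧
      ∀ v, a < v → v < s → A v z = 0 := by
    have hex : ∃ s, a < s ∧ s < y + 1 ∧ A s z ≠ 0 := ⟨s₁, hs₁, hs₁', hsz₁⟩
    refine ⟨_, Nat.find_spec hex, fun v h₁ h₂ => ?_⟩
    by_contra h₃
    have := (Nat.find_spec hex).2.1
    exact Nat.find_min hex h₂ ⟨h₁, by omega, h₃⟩
  have hc := hA.cross s z (by omega) (by omega) hsz
  have ss := outSum_split (n := n) (A := A) (a := a) (b := b) (p := a + 1) (m := s) (q := b)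
    (by omega) (by omega)
  have ss' := outSum_split (n := n) (A := A) (a := a) (b := b) (p := s) (m := s + 1) (q := b)
    (by omega) (by omega)
  have ssu := outSum_split (n := n) (A := A) (a := a) (b := b) (p := a + 1) (m := s) (q := u)
    (by omega) (by omega)
  have ssu' := outSum_split (n := n) (A := A) (a := a) (b := b) (p := s) (m := s + 1) (q := u)
    (by omega) (by omega)
  have hz1 : blockSum A (a + 1) s z (z + 1) = 0 := blockSum_eq_zero fun i v h₁ h₂ h₃ h₄ => by
    obtain rfl : v = z := by omega
    exact hsmin i (by omega) h₂
  have has5 := crossCount_eq_outSum (n := n) (A := A) (a := a) (b := b) (s := a) (z := s)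
    le_rfl (by omega) hb
  rw [blockSum_eq_zero_of_le_right le_rfl] at has5
  have hsb5 := crossCount_eq_outSum (n := n) (A := A) (a := a) (b := b) (s := s) (z := b)
    (by omega) le_rfl hb
  rw [blockSum_eq_zero_of_le_right (r := b + 1) le_rfl, comm _ _ a s,
    blockSum_split_left (m := a + 1) (by omega) (by omega)] at hsb5
  rcases hzb.eq_or_lt with rfl | hzb
  · refine ⟨s, has, by omega, ?_, hc⟩
    have := blockSum_split_right (A := A) (p := a + 1) (q := s) (r := s + 1) (m := z)
      (s := z + 1) (by omega) (by omega)
    omega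
  have hc' := hc
  rw [crossCount_eq_outSum (a := a) (b := b) (by omega) (by omega) hb, comm _ _ a s,
    blockSum_split_left (p := a) (m := a + 1) (q := s) (by omega) (by omega)] at hc'
  have haz := crossCount_eq_outSum (n := n) (A := A) (a := a) (b := b) (s := a) (z := z)
    le_rfl (by omega) hb
  rw [blockSum_eq_zero_of_le_right (r := a) le_rfl] at haz
  have hzb5 := crossCount_eq_outSum (n := n) (A := A) (a := a) (b := b) (s := z) (z := b)
    (by omega) le_rfl hb
  rw [blockSum_eq_zero_of_le_right (r := b + 1) le_rfl, comm _ _ a z,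
    blockSum_split_left (m := a + 1) (by omega) (by omega),
    blockSum_eq_zero (p := a) (q := a + 1) fun i v h₁ h₂ h₃ h₄ => by
      obtain rfl : i = a := by omega
      exact ha0 v (by omega) h₄] at hzb5
  have e1 := blockSum_split_right (A := A) (p := a) (q := a + 1) (r := s + 1) (m := z) (s := b)
    (by omega) (by omega)
  rw [blockSum_eq_zero (r := z) (s := b) fun i v h₁ h₂ h₃ h₄ => by
      obtain rfl : i = a := by omega
      exact ha0 v (by omega) h₄] at e1
  have e2 := blockSum_split_right (A := A) (p := a + 1) (q := s) (r := s + 1) (m := z)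
    (s := b + 1) (by omega) (by omega)
  have e3 := blockSum_split_right (A := A) (p := a + 1) (q := s) (r := z) (m := z + 1)
    (s := b + 1) (by omega) (by omega)
  rw [hz1, blockSum_eq_zero (r := z + 1) fun i v h₁ h₂ h₃ h₄ =>
    hzmax i v (by omega) (by omega) (by omega) (by omega)] at e3
  have e4 := blockSum_split_right (A := A) (p := a + 1) (q := s) (r := s + 1) (m := b)
    (s := b + 1) (by omega) (by omega)
  have e5 := blockSum_split_left (A := A) (p := a + 1) (m := y + 1) (q := z) (r := z + 1)
    (s := b + 1) (by omega) (by omega)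
  rw [blockSum_eq_zero (q := y + 1) fun i v h₁ h₂ h₃ h₄ =>
    hzmax i v (by omega) (by omega) (by omega) (by omega)] at e5
  have e6 := blockSum_split_left (A := A) (p := s + 1) (m := y + 1) (q := z) (r := z + 1)
    (s := b + 1) (by omega) (by omega)
  have e7 := blockSum_split_right (A := A) (p := a + 1) (q := z) (r := z + 1) (m := b)
    (s := b + 1) (by omega) (by omega)
  have o1 := outSum_split (n := n) (A := A) (a := a) (b := b) (p := s + 1) (m := z) (q := b)
    (by omega) (by omega)
  have o2 := outSum_split (n := n) (A := A) (a := a) (b := b) (p := z) (m := z + 1) (q := b)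
    (by omega) (by omega)
  have o3 := outSum_split (n := n) (A := A) (a := a) (b := b) (p := a + 1) (m := z) (q := b)
    (by omega) (by omega)
  by_contra! hno
  have n1 := hno s has (by omega)
  have n2 := hno z (by omega) hzb
  rcases le_or_gt z u with hzu | hzu
  · have n3 := hymax z (by omega) hzu
    omega
  · have o4 := outSum_split (n := n) (A := A) (a := a) (b := b) (p := u + 1) (m := z) (q := b)
      (by omega) (by omega)
    omega

theorem exists_median {a b : ℕ} (hab : a + 1 < b) :
    ∃ u, a < u ∧ u < b ∧ 2 * outSum n A a b (a + 1) u ≤ outSum n A a b (a + 1) b ∧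
      2 * outSum n A a b (u + 1) b ≤ outSum n A a b (a + 1) b := by
  have h₀ : 2 * outSum n A a b (a + 1) (a + 1) ≤ outSum n A a b (a + 1) b := by
    simp [outSum_self]
  obtain ⟨u, ⟨hau, hub, hu⟩, hmax⟩ : ∃ u, (a < u ∧ u < b ∧
      2 * outSum n A a b (a + 1) u ≤ outSum n A a b (a + 1) b) ∧ ∀ v, u < v → v < b →
      outSum n A a b (a + 1) b < 2 * outSum n A a b (a + 1) v := by
    have hP := Nat.findGreatest_spec (n := b) (m := a + 1) (P := fun u => a < u ∧ u < b ∧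
      2 * outSum n A a b (a + 1) u ≤ outSum n A a b (a + 1) b) (by omega)
      ⟨by omega, hab, h₀⟩
    refine ⟨_, hP, fun v h₁ h₂ => ?_⟩
    by_contra h₃
    exact Nat.findGreatest_is_greatest h₁ h₂.le ⟨by omega, h₂, by omega⟩
  refine ⟨u, hau, hub, hu, ?_⟩
  rcases (show u + 1 ≤ b from hub).eq_or_lt with h | h
  · simp [h, outSum_self]
  · have := hmax (u + 1) (by omega) (by omega)
    have := outSum_split (n := n) (A := A) (a := a) (b := b) (p := a + 1) (m := u + 1) (q := b)
      (by omega) hub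
    omega

/-- Every chord that is crossed at most five times and has vertices behind it spans a triangle
with two chords that are crossed at most five times. -/
theorem IsOuterFive.exists_apex (hA : IsOuterFive n A) {a b : ℕ} (hab : a + 1 < b) (hb : b < n)
    (h5 : crossCount n A a b ≤ 5) :
    ∃ x, a < x ∧ x < b ∧ crossCount n A a x ≤ 5 ∧ crossCount n A x b ≤ 5 := by
  obtain ⟨u, hau, hub, hl, hr⟩ := exists_median (n := n) (A := A) hab
  have h5' : outSum n A a b (a + 1) b ≤ 5 := h5
  by_cases h₁ : crossCount n A a u ≤ 5
  · by_cases h₂ : crossCount n A u b ≤ 5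
    · exact ⟨u, hau, hub, h₁, h₂⟩
    · have m := fun p q p' q' => outSum_mirror (A := A) (p := p) (q := q) (p' := p') (q' := q')
        (hau.trans hub).le hb
      have m₁ := m (a + 1) b (n - 1 - b + 1) (n - 1 - a) hb.le (by omega) (by omega)
      have m₂ := m (a + 1) u (n - 1 - u + 1) (n - 1 - a) (by omega) (by omega) (by omega)
      have m₃ := m (u + 1) b (n - 1 - b + 1) (n - 1 - u) hb.le (by omega) (by omega)
      obtain ⟨x, h₃, h₄, h₅, h₆⟩ := exists_apex_of_not_left hA.mirror (a := n - 1 - b)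
        (u := n - 1 - u) (b := n - 1 - a) (by omega) (by omega) (by omega)
        (by rwa [m₁]) (by rwa [m₁, m₃]) (by rwa [m₁, m₂])
        (by rw [crossCount_mirror hub hb]; omega)
      refine ⟨n - 1 - x, by omega, by omega, ?_, ?_⟩
      · rw [← crossCount_mirror (by omega) (by omega), show n - 1 - (n - 1 - x) = x by omega]
        exact h₆
      · rw [← crossCount_mirror (by omega) (by omega), show n - 1 - (n - 1 - x) = x by omega]
        exact h₅
  · exact exists_apex_of_not_left hA hau hub hb h5' hl hr (by omega)

end apex

end counting

/-! ### The finite check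

A *port* of a chord is a vertex behind it with edges to vertices beyond the chord; it is recorded as
the pair of the number of these edges and the number of edges behind the chord passing over it. -/

/-- `⟨t, inner, ports⟩` stands for chords with `t` vertices and at most `inner` edges behind them;
the list of ports is packed as a decimal number, see `unpackPorts`. -/
structure SideRecord where
  size : ℕ
  inner : ℕ
  ports : ℕ

/-- A port of the side `{a, x}` of a triangle `a, x, b`: `corner` edges end at `b`, `far` edges end
behind `{x, b}`, and `out` edges cross `{a, b}`. -/
structure SplitPort where
  passing : ℕ
  corner : ℕ
  far : ℕ
  out : ℕ

/-- A side of a triangle, with its ports split: see `SplitGroup` for the remaining data. -/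
structure SplitRecord where
  size : ℕ
  inner : ℕ
  load : ℕ
  width : ℕ
  ports : ℕ

/-- The digits of `key` are the numbers of edges of the three kinds in `SplitPort`: `far`, `out`,
`corner`. The number `peak` bounds the crossings of some `corner` edge from below. -/
structure SplitGroup where
  key : ℕ
  peak : ℕ
  sides : List SplitRecord

/-- Application, evaluating the argument first. -/
noncomputable def force (x : ℕ) (f : ℕ → Bool) : Bool :=
  Nat.rec (f 0) (fun n _ => f (Nat.succ n)) x

noncomputable def allBelow (n : ℕ) (p : ℕ → Bool) : Bool :=
  Nat.rec true (fun i ih => p i && ih) n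

noncomputable def allOf {α : Type} (p : α → Bool) (l : List α) : Bool :=
  List.rec true (fun x _ ih => p x && ih) l

noncomputable def anyOf {α : Type} (p : α → Bool) (l : List α) : Bool :=
  List.rec false (fun x _ ih => p x || ih) l

noncomputable def sumOf {α : Type} (f : α → ℕ) (l : List α) : ℕ :=
  List.rec 0 (fun x _ ih => f x + ih) l

noncomputable def unpackPorts (x : ℕ) : List (ℕ × ℕ) :=
  Nat.rec (motive := fun _ => ℕ → List (ℕ × ℕ)) (fun _ => [])
    (fun _ ih x => bif Nat.beq x 0 then [] else (x / 10 % 10, x % 10) :: ih (x / 100)) 5 x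

/-- Lets `d` further edges pass over all ports. -/
def shiftPorts (d : ℕ) (l : List (ℕ × ℕ)) : List (ℕ × ℕ) := l.map fun x => (x.1, x.2 + d)

noncomputable def allSplits (g : List (ℕ × ℕ)) : (List SplitPort → Bool) → Bool :=
  List.rec (fun k => k []) (fun x _ ih k => force x.1 fun w => force x.2 fun v => ih fun l =>
    allBelow (w + 1) (fun q => force (w - q) fun o => k (⟨v, 0, q, o⟩ :: l)) &&
    allBelow w (fun q => force (w - 1 - q) fun o => k (⟨v, 1, q, o⟩ :: l))) g

noncomputable def peakCrossing (l : List SplitPort) : ℕ → ℕ :=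
  List.rec (fun _ => 0) (fun e l ih pre => bif Nat.beq e.corner 0 then ih (pre + e.far) else
    max (e.passing + pre + sumOf SplitPort.out l) (ih (pre + e.far))) l

noncomputable def outPorts (l : List SplitPort) : ℕ → List (ℕ × ℕ) :=
  List.rec (fun _ => []) (fun e _ ih pre => bif Nat.beq e.out 0 then ih (pre + (e.corner + e.far))
    else (e.out, e.passing + pre) :: ih (pre + (e.corner + e.far))) l

noncomputable def dominatesB (l : List (ℕ × ℕ)) : List (ℕ × ℕ) → Bool :=
  List.rec (fun m => List.rec true (fun _ _ _ => false) m) (fun x _ ih m =>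
    List.rec false (fun y m _ => Nat.beq x.1 y.1 && (Nat.ble y.2 x.2 && ih m)) m) l

noncomputable def maxOver (l : List (ℕ × ℕ)) : ℕ := List.rec 0 (fun x _ ih => max x.2 ih) l

noncomputable def splitOK (H : List SplitGroup) (t inner : ℕ) (l : List SplitPort) : Bool :=
  force (sumOf SplitPort.corner l) fun E => force (sumOf SplitPort.far l) fun F =>
  force (peakCrossing l 0) fun M => force (sumOf (fun e => e.far * e.passing) l) fun C =>
  Nat.ble (5 * F + 1) C || (Nat.ble 6 M || (Nat.ble 6 (maxOver (outPorts l 0)) ||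
  (force (100 * F + 10 * sumOf SplitPort.out l + E) fun key =>
  anyOf (fun g => Nat.beq g.key key && (Nat.ble g.peak M &&
    anyOf (fun r => Nat.beq r.size t && (Nat.ble inner r.inner && (Nat.ble r.load C &&
      (Nat.ble (sumOf (fun e => bif Nat.beq e.far 0 then 0 else 1) l) r.width &&
        dominatesB (outPorts l 0) (unpackPorts r.ports))))) g.sides)) H)))

noncomputable def sideOK (H : List SplitGroup) (s : SideRecord) (c : ℕ) : Bool :=
  (Nat.ble 1 s.size && Nat.ble (98 * (s.inner + c + sumOf Prod.fst (unpackPorts s.ports)))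
    (389 * s.size + 98)) || (Nat.ble 6 (maxOver (shiftPorts c (unpackPorts s.ports))) ||
  allSplits (shiftPorts c (unpackPorts s.ports)) (splitOK H s.size (s.inner + c)))

noncomputable def sidesOK (S : List SideRecord) (H : List SplitGroup) : Bool :=
  allOf (fun s => sideOK H s 1 && (Nat.beq s.size 0 || sideOK H s 0)) S

/-- The ports of the third side of a triangle. -/
def joinPorts (EA EB x v : ℕ) (l m : List (ℕ × ℕ)) : List (ℕ × ℕ) :=
  shiftPorts EB l ++ ((if x = 0 then [] else [(x, v)]) ++ (shiftPorts EA m).reverse)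

noncomputable def pairOK (S : List SideRecord) (F PA EA MA PB EB MB : ℕ) (A B : SplitRecord) :
    Bool :=
  force ((A.size.add B.size).succ) fun t =>
  force ((A.inner.add B.inner).add ((EA.add EB).add F)) fun inner =>
  Nat.ble (Nat.mul 98 (inner.add 5)) (Nat.mul 389 t) ||
  (Nat.blt (A.width.mul B.width) F ||
  allBelow (6 - (PA + PB)) fun x =>
    (Nat.ble 1 EA && Nat.ble 6 (MA + EB + x + PB)) ||
    ((Nat.ble 1 EB && Nat.ble 6 (MB + EA + x + PA)) ||
    (Nat.ble (5 * F + 1) (A.load + B.load + F * x) ||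
    ((Nat.ble 1 x && Nat.ble 6 (EA + EB + F)) ||
    (force (PA + PB + x) fun h =>
      bif Nat.beq h 0 then Nat.ble (98 * (inner + 1)) (389 * t) || (Nat.beq t 5 && Nat.beq inner 19)
      else Nat.ble (98 * (inner + h)) (389 * t) ||
        (Nat.ble 6 (maxOver (unpackPorts A.ports) + EB) ||
        (Nat.ble 6 (maxOver (unpackPorts B.ports) + EA) ||
        anyOf (fun s => Nat.beq s.size t && (Nat.ble inner s.inner && dominatesB
          (joinPorts EA EB x (EA + EB + F) (unpackPorts A.ports) (unpackPorts B.ports))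
          (unpackPorts s.ports))) S)))))))

noncomputable def groupOK (S : List SideRecord) (A B : SplitGroup) : Bool :=
  force (A.key / 100) fun F => bif Nat.beq F (B.key / 100) then
    force (A.key / 10 % 10) fun PA => force (B.key / 10 % 10) fun PB => Nat.ble 6 (PA + PB) ||
    (force (A.key % 10) fun EA => force (B.key % 10) fun EB =>
    (Nat.ble 1 EA && Nat.ble 6 (A.peak + EB + PB)) ||
    ((Nat.ble 1 EB && Nat.ble 6 (B.peak + EA + PA)) ||
    allOf (fun a => allOf (pairOK S F PA EA A.peak PB EB B.peak a) B.sides) A.sides))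
  else true

noncomputable def groupsOK (S : List SideRecord) (H : List SplitGroup) : Bool :=
  allOf (fun g => allOf (groupOK S g) H) H

section check

theorem force_eq (x : ℕ) (f : ℕ → Bool) : force x f = f x := by cases x <;> rfl

theorem allBelow_iff {n : ℕ} {p : ℕ → Bool} : allBelow n p = true ↔ ∀ i < n, p i = true := by
  induction n with
  | zero => simp [allBelow]
  | succ n ih =>
    rw [show allBelow (n + 1) p = (p n && allBelow n p) from rfl, Bool.and_eq_true, ih]
    refine ⟨fun h i hi => ?_, fun h => ⟨h n (by omega), fun i hi => h i (by omega)⟩⟩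
    rcases Nat.lt_succ_iff_lt_or_eq.1 hi with hi | rfl
    exacts [h.2 i hi, h.1]

theorem allOf_iff {α : Type} {p : α → Bool} {l : List α} :
    allOf p l = true ↔ ∀ x ∈ l, p x = true := by
  induction l with
  | nil => simp [allOf]
  | cons x l ih =>
    rw [show allOf p (x :: l) = (p x && allOf p l) from rfl, Bool.and_eq_true, ih,
      List.forall_mem_cons]

theorem anyOf_iff {α : Type} {p : α → Bool} {l : List α} :
    anyOf p l = true ↔ ∃ x ∈ l, p x = true := by
  induction l with
  | nil => simp [anyOf]
  | cons x l ih =>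
    rw [show anyOf p (x :: l) = (p x || anyOf p l) from rfl, Bool.or_eq_true, ih]
    simp

theorem sumOf_eq {α : Type} (f : α → ℕ) (l : List α) : sumOf f l = (l.map f).sum := by
  induction l with
  | nil => rfl
  | cons x l ih => rw [show sumOf f (x :: l) = f x + sumOf f l from rfl, ih, List.map_cons,
      List.sum_cons]

/-- The ports in `l` have the same weights as those in `m`, and at least as many edges pass over
them. -/
abbrev Dominates : List (ℕ × ℕ) → List (ℕ × ℕ) → Prop :=
  List.Forall₂ fun x y => x.1 = y.1 ∧ y.2 ≤ x.2

theorem dominatesB_iff {l m : List (ℕ × ℕ)} : dominatesB l m = true ↔ Dominates l m := by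
  induction l generalizing m with
  | nil =>
    cases m with
    | nil => exact ⟨fun _ => .nil, fun _ => rfl⟩
    | cons y m => exact ⟨fun h => (Bool.false_ne_true h).elim, fun h => nomatch h⟩
  | cons x l ih =>
    cases m with
    | nil => exact ⟨fun h => (Bool.false_ne_true h).elim, fun h => nomatch h⟩
    | cons y m =>
      rw [show dominatesB (x :: l) (y :: m) =
        (Nat.beq x.1 y.1 && (Nat.ble y.2 x.2 && dominatesB l m)) from rfl, Bool.and_eq_true,
        Bool.and_eq_true, ih, Dominates, List.forall₂_cons, Nat.beq_eq, Nat.ble_eq, and_assoc]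

theorem Dominates.trans {l m k : List (ℕ × ℕ)} (h₁ : Dominates l m) (h₂ : Dominates m k) :
    Dominates l k := by
  induction h₁ generalizing k with
  | nil => exact h₂
  | cons h _ ih =>
    obtain _ | ⟨h', h₂⟩ := h₂
    exact .cons ⟨h.1.trans h'.1, h'.2.trans h.2⟩ (ih h₂)

theorem Dominates.shiftPorts {l m : List (ℕ × ℕ)} (h : Dominates l m) (d : ℕ) :
    Dominates (shiftPorts d l) (shiftPorts d m) := by
  rw [Dominates, _root_.shiftPorts, _root_.shiftPorts, List.forall₂_map_left_iff,
    List.forall₂_map_right_iff]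
  exact h.imp fun x y h => ⟨h.1, by simpa using h.2⟩

theorem Dominates.maxOver_le {l m : List (ℕ × ℕ)} (h : Dominates l m) {d : ℕ}
    (hl : ∀ x ∈ l, x.2 ≤ d) : maxOver m ≤ d := by
  induction h with
  | nil => exact Nat.zero_le d
  | @cons x y l m hxy _ ih =>
    exact max_le (hxy.2.trans (hl x (by simp))) (ih fun z hz => hl z (by simp [hz]))

/-- `l` and `m` are equal up to fewer edges passing over the ports of `l`. -/
abbrev SplitLE : List SplitPort → List SplitPort → Prop :=
  List.Forall₂ fun d e => d.corner = e.corner ∧ d.far = e.far ∧ d.out = e.out ∧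
    d.passing ≤ e.passing

theorem exists_of_allSplits {g : List (ℕ × ℕ)} {k : List SplitPort → Bool} {l : List SplitPort}
    (hk : allSplits g k = true)
    (hl : List.Forall₂ (fun e x => e.corner + e.far + e.out = x.1 ∧ x.2 ≤ e.passing) l g)
    (hc : ∀ e ∈ l, e.corner ≤ 1) : ∃ m, SplitLE m l ∧ k m = true := by
  induction hl generalizing k with
  | nil => exact ⟨[], .nil, hk⟩
  | @cons e x l g hex _ ih =>
    rw [show allSplits (x :: g) k = force x.1 fun w => force x.2 fun v => allSplits g fun l =>
      allBelow (w + 1) (fun q => force (w - q) fun o => k (⟨v, 0, q, o⟩ :: l)) &&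
      allBelow w (fun q => force (w - 1 - q) fun o => k (⟨v, 1, q, o⟩ :: l)) from rfl,
      force_eq, force_eq] at hk
    obtain ⟨m, hm, hm'⟩ := ih hk fun d hd => hc d (by simp [hd])
    simp only [force_eq, Bool.and_eq_true, allBelow_iff] at hm'
    have := hc e (by simp)
    rcases Nat.le_one_iff_eq_zero_or_eq_one.1 this with h | h
    · exact ⟨⟨x.2, 0, e.far, x.1 - e.far⟩ :: m,
        .cons ⟨h.symm, rfl, by simp only; omega, hex.2⟩ hm,
        hm'.1 e.far (by omega)⟩
    · exact ⟨⟨x.2, 1, e.far, x.1 - 1 - e.far⟩ :: m,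
        .cons ⟨h.symm, rfl, by simp only; omega, hex.2⟩ hm,
        hm'.2 e.far (by omega)⟩

theorem peakCrossing_cons (e : SplitPort) (l : List SplitPort) (pre : ℕ) :
    peakCrossing (e :: l) pre = if e.corner = 0 then peakCrossing l (pre + e.far) else
      max (e.passing + pre + (l.map SplitPort.out).sum) (peakCrossing l (pre + e.far)) := by
  rw [← sumOf_eq, show peakCrossing (e :: l) pre = bif Nat.beq e.corner 0 then
    peakCrossing l (pre + e.far) else
      max (e.passing + pre + sumOf SplitPort.out l) (peakCrossing l (pre + e.far)) from rfl]
  cases h : e.corner <;> rfl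

theorem outPorts_cons (e : SplitPort) (l : List SplitPort) (pre : ℕ) :
    outPorts (e :: l) pre = if e.out = 0 then outPorts l (pre + (e.corner + e.far)) else
      (e.out, e.passing + pre) :: outPorts l (pre + (e.corner + e.far)) := by
  rw [show outPorts (e :: l) pre = bif Nat.beq e.out 0 then outPorts l (pre + (e.corner + e.far))
    else (e.out, e.passing + pre) :: outPorts l (pre + (e.corner + e.far)) from rfl]
  cases h : e.out <;> rfl

theorem SplitLE.sum_eq {l m : List SplitPort} (h : SplitLE l m) {f : SplitPort → ℕ}
    (hf : ∀ d e : SplitPort, d.corner = e.corner → d.far = e.far → d.out = e.out → f d = f e) :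
    (l.map f).sum = (m.map f).sum := by
  induction h with
  | nil => rfl
  | cons h _ ih => rw [List.map_cons, List.map_cons, List.sum_cons, List.sum_cons, ih,
      hf _ _ h.1 h.2.1 h.2.2.1]

theorem SplitLE.load_le {l m : List SplitPort} (h : SplitLE l m) :
    (l.map fun e => e.far * e.passing).sum ≤ (m.map fun e => e.far * e.passing).sum := by
  induction h with
  | nil => exact le_rfl
  | cons h _ ih =>
    rw [List.map_cons, List.map_cons, List.sum_cons, List.sum_cons, h.2.1]
    exact add_le_add (Nat.mul_le_mul_left _ h.2.2.2) ih

theorem SplitLE.peakCrossing_le {l m : List SplitPort} (h : SplitLE l m) (pre : ℕ) :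
    peakCrossing l pre ≤ peakCrossing m pre := by
  induction h generalizing pre with
  | nil => exact le_rfl
  | @cons d e l m h hlm ih =>
    have := SplitLE.sum_eq hlm (f := SplitPort.out) fun _ _ _ _ h => h
    have := ih (pre + e.far)
    rw [peakCrossing_cons, peakCrossing_cons, h.1, h.2.1]
    split_ifs <;> omega

theorem SplitLE.outPorts {l m : List SplitPort} (h : SplitLE l m) (pre : ℕ) :
    Dominates (outPorts m pre) (outPorts l pre) := by
  induction h generalizing pre with
  | nil => exact .nil
  | @cons d e l m h hlm ih =>
    rw [outPorts_cons, outPorts_cons, h.1, h.2.1, h.2.2.1]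
    split_ifs
    · exact ih _
    · exact .cons ⟨rfl, Nat.add_le_add_right h.2.2.2 _⟩ (ih _)

/-- The number of `corner` edges. -/
def cornerSum (l : List SplitPort) : ℕ := (l.map SplitPort.corner).sum

/-- The number of `far` edges. -/
def farSum (l : List SplitPort) : ℕ := (l.map SplitPort.far).sum

/-- The number of `out` edges. -/
def exitSum (l : List SplitPort) : ℕ := (l.map SplitPort.out).sum

/-- The number of pairs of a `far` edge and an edge passing over its port. -/
def farLoad (l : List SplitPort) : ℕ := (l.map fun e => e.far * e.passing).sum

/-- The number of ports with `far` edges. -/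
def farWidth (l : List SplitPort) : ℕ := (l.map fun e => if e.far = 0 then 0 else 1).sum

/-- The record `r` in the group `g` describes a side with split ports `l`. -/
structure Certifies (g : SplitGroup) (r : SplitRecord) (t inner : ℕ) (l : List SplitPort) :
    Prop where
  mem : r ∈ g.sides
  key : g.key = 100 * farSum l + 10 * exitSum l + cornerSum l
  peak : g.peak ≤ peakCrossing l 0
  size : r.size = t
  inner : inner ≤ r.inner
  load : r.load ≤ farLoad l
  width : farWidth l ≤ r.width
  ports : Dominates (outPorts l 0) (unpackPorts r.ports)

theorem exists_certifies_of_splitOK {H : List SplitGroup} {t inner : ℕ} {l m : List SplitPort}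
    (h : splitOK H t inner m = true) (hml : SplitLE m l) (hload : farLoad l ≤ 5 * farSum l)
    (hpeak : peakCrossing l 0 ≤ 5) (hout : ∀ x ∈ outPorts l 0, x.2 ≤ 5) :
    ∃ g ∈ H, ∃ r, Certifies g r t inner l := by
  have hF : farSum m = farSum l := hml.sum_eq fun _ _ _ h _ => h
  have hE : cornerSum m = cornerSum l := hml.sum_eq fun _ _ h _ _ => h
  have hP : exitSum m = exitSum l := hml.sum_eq fun _ _ _ _ h => h
  have hW : farWidth m = farWidth l := hml.sum_eq fun _ _ _ h _ => by simp only [h]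
  have hC : farLoad m ≤ farLoad l := hml.load_le
  have hM := hml.peakCrossing_le 0
  have hO := (hml.outPorts 0).maxOver_le hout
  have hb : (fun e : SplitPort => bif Nat.beq e.far 0 then 0 else 1) =
      fun e : SplitPort => if e.far = 0 then 0 else 1 := by
    funext e
    cases e.far <;> rfl
  rw [splitOK] at h
  simp only [force_eq, sumOf_eq, Bool.or_eq_true, Nat.ble_eq, anyOf_iff, Bool.and_eq_true,
    Nat.beq_eq, dominatesB_iff, hb] at h
  change 5 * farSum m + 1 ≤ farLoad m ∨ 6 ≤ peakCrossing m 0 ∨ 6 ≤ maxOver (outPorts m 0) ∨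
    ∃ g ∈ H, g.key = 100 * farSum m + 10 * exitSum m + cornerSum m ∧ g.peak ≤ peakCrossing m 0 ∧
      ∃ r ∈ g.sides, r.size = t ∧ inner ≤ r.inner ∧ r.load ≤ farLoad m ∧
        farWidth m ≤ r.width ∧ Dominates (outPorts m 0) (unpackPorts r.ports) at h
  rcases h with h | h | h | ⟨g, hg, h₁, h₂, r, hr, h₃, h₄, h₅, h₆, h₇⟩
  · omega
  · omega
  · omega
  · exact ⟨g, hg, r, hr, by rw [h₁, hF, hP, hE], h₂.trans hM, h₃, h₄, h₅.trans hC, hW ▸ h₆,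
      (hml.outPorts 0).trans h₇⟩

/-- The list `l` describes how the ports of a side covered by `s` are split. -/
theorem exists_certifies {S : List SideRecord} {H : List SplitGroup} (hS : sidesOK S H = true)
    {s : SideRecord} (hs : s ∈ S) {c : ℕ} (hc : c ≤ 1) (hc0 : s.size = 0 → c = 1)
    (hred : 1 ≤ s.size → 389 * s.size + 98 <
      98 * (s.inner + c + ((unpackPorts s.ports).map Prod.fst).sum))
    {l : List SplitPort} (hl : List.Forall₂ (fun e x => e.corner + e.far + e.out = x.1 ∧
      x.2 ≤ e.passing) l (shiftPorts c (unpackPorts s.ports)))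
    (hcorner : ∀ e ∈ l, e.corner ≤ 1) (hpassing : ∀ e ∈ l, e.passing ≤ 5)
    (hload : farLoad l ≤ 5 * farSum l)
    (hpeak : peakCrossing l 0 ≤ 5) (hout : ∀ x ∈ outPorts l 0, x.2 ≤ 5) :
    ∃ g ∈ H, ∃ r, Certifies g r s.size (s.inner + c) l := by
  have h := allOf_iff.1 hS s hs
  replace h : sideOK H s c = true := by
    rw [Bool.and_eq_true, Bool.or_eq_true, Nat.beq_eq] at h
    rcases Nat.le_one_iff_eq_zero_or_eq_one.1 hc with rfl | rfl
    · exact h.2.resolve_left fun h => by simpa using hc0 h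
    · exact h.1
  simp only [sideOK, Bool.or_eq_true, Bool.and_eq_true, Nat.ble_eq, sumOf_eq] at h
  have hmax : maxOver (shiftPorts c (unpackPorts s.ports)) ≤ 5 := by
    refine Dominates.maxOver_le (l := l.map fun e => (e.corner + e.far + e.out, e.passing)) ?_ ?_
    · rw [Dominates, List.forall₂_map_left_iff]
      exact hl
    · simpa using hpassing
  rcases h with h | h | h
  · have := hred h.1
    omega
  · omega
  · obtain ⟨m, hm, hm'⟩ := exists_of_allSplits h hl hcorner
    exact exists_certifies_of_splitOK hm' hm hload hpeak hout

theorem Certifies.of_groupsOK {S : List SideRecord} {H : List SplitGroup}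
    (hH : groupsOK S H = true) {g g' : SplitGroup} {r r' : SplitRecord} {t t' i i' : ℕ}
    {l l' : List SplitPort} (hr : Certifies g r t i l) (hr' : Certifies g' r' t' i' l')
    (hg : g ∈ H) (hg' : g' ∈ H) {F EA EB PA PB x : ℕ}
    (hF : farSum l = F) (hF' : farSum l' = F) (hEA : cornerSum l = EA) (hEB : cornerSum l' = EB)
    (hPA : exitSum l = PA) (hPB : exitSum l' = PB)
    (hEA5 : EA ≤ 5) (hEB5 : EB ≤ 5)
    (hP : PA + x + PB ≤ 5) (hpA : EA ≠ 0 → peakCrossing l 0 + EB + x + PB ≤ 5)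
    (hpB : EB ≠ 0 → peakCrossing l' 0 + EA + x + PA ≤ 5)
    (hload : farLoad l + farLoad l' + F * x ≤ 5 * F) (hwidth : F ≤ farWidth l * farWidth l')
    (hx : x ≠ 0 → EA + EB + F ≤ 5) (hA : ∀ p ∈ outPorts l 0, p.2 + EB ≤ 5)
    (hB : ∀ p ∈ outPorts l' 0, p.2 + EA ≤ 5) :
    98 * (i + i' + (EA + EB + F) + max 1 (PA + PB + x)) ≤ 389 * (t + t' + 1) ∨
    PA + PB + x = 0 ∧ t + t' = 4 ∧ i + i' + (EA + EB + F) ≤ 19 ∨ PA + PB + x ≠ 0 ∧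
      ∃ s ∈ S, s.size = t + t' + 1 ∧ i + i' + (EA + EB + F) ≤ s.inner ∧
        Dominates (joinPorts EA EB x (EA + EB + F) (outPorts l 0) (outPorts l' 0))
          (unpackPorts s.ports) := by
  have k := hr.key
  have k' := hr'.key
  have hp := hr.peak
  have hp' := hr'.peak
  have hl := hr.load
  have hl' := hr'.load
  have hi := hr.inner
  have hi' := hr'.inner
  have ht := hr.size
  have ht' := hr'.size
  have hw := hwidth.trans (Nat.mul_le_mul hr.width hr'.width)
  rw [hF, hPA, hEA] at k
  rw [hF', hPB, hEB] at k'
  have kF : g.key / 100 = F := by omega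
  have kF' : g'.key / 100 = F := by omega
  have kP : g.key / 10 % 10 = PA := by omega
  have kP' : g'.key / 10 % 10 = PB := by omega
  have kE : g.key % 10 = EA := by omega
  have kE' : g'.key % 10 = EB := by omega
  have hmA : maxOver (unpackPorts r.ports) ≤ 5 - EB :=
    hr.ports.maxOver_le fun p h => Nat.le_sub_of_add_le (hA p h)
  have hmB : maxOver (unpackPorts r'.ports) ≤ 5 - EA :=
    hr'.ports.maxOver_le fun p h => Nat.le_sub_of_add_le (hB p h)
  have h := allOf_iff.1 (allOf_iff.1 hH g hg) g' hg'
  simp only [groupOK, force_eq, kF, kF', kP, kP', kE, kE', Nat.beq_refl, cond_true,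
    Bool.or_eq_true, Bool.and_eq_true, Nat.ble_eq] at h
  replace h := h.resolve_left (by omega)
  replace h := h.resolve_left (by omega)
  replace h := h.resolve_left (by omega)
  replace h := allOf_iff.1 (allOf_iff.1 h r hr.mem) r' hr'.mem
  rw [pairOK] at h
  simp only [force_eq, Bool.or_eq_true, Bool.and_eq_true, Nat.ble_eq, Nat.blt_eq, allBelow_iff,
    Nat.add_eq, Nat.mul_eq, Nat.succ_eq_add_one] at h
  rcases h with h | h | h
  · exact .inl (by omega)
  · exact absurd h hw.not_gt
  replace h := h x (by omega)
  replace h := h.resolve_left (by omega)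
  replace h := h.resolve_left (by omega)
  replace h := h.resolve_left (by omega)
  replace h := h.resolve_left (by omega)
  by_cases h0 : PA + PB + x = 0
  · simp only [h0, Nat.beq_refl, cond_true, Bool.or_eq_true, Bool.and_eq_true, Nat.ble_eq,
      Nat.beq_eq] at h
    omega
  · have hb : Nat.beq (PA + PB + x) 0 = false := by
      rw [← Bool.not_eq_true, Nat.beq_eq]
      exact h0
    simp only [hb, cond_false, Bool.or_eq_true, Bool.and_eq_true, Nat.ble_eq, Nat.beq_eq,
      anyOf_iff, dominatesB_iff] at h
    rcases h with h | h | h | ⟨s, hs, h₁, h₂, h₃⟩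
    · exact .inl (by omega)
    · exact absurd (h.trans (Nat.add_le_add_right hmA EB)) (by omega)
    · exact absurd (h.trans (Nat.add_le_add_right hmB EA)) (by omega)
    · refine .inr (.inr ⟨h0, s, hs, by omega, by omega, .trans ?_ h₃⟩)
      exact List.rel_append (hr.ports.shiftPorts EB) (List.rel_append (List.forall₂_same.2
        fun _ _ => ⟨rfl, le_rfl⟩) (List.rel_reverse (hr'.ports.shiftPorts EA)))

end check

section ports

open Finset

/-- The number of edges passing over the vertex `u` behind the chord `{a, b}`, this chord
included. -/
def coverCount (A : ℕ → ℕ → ℕ) (a b u : ℕ) : ℕ := blockSum A a u (u + 1) (b + 1)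

/-- The ports of the chord `{a, b}` in `[p, p + m)`. -/
def chordPorts (n : ℕ) (A : ℕ → ℕ → ℕ) (a b p m : ℕ) : List (ℕ × ℕ) :=
  ((List.range' p m).map fun u => (outSum n A a b u (u + 1), coverCount A a b u)).filter
    fun x => x.1 ≠ 0

/-- The vertices in `[p, p + m)` as ports of the side `{a, x}` of the triangle `a, x, b`. -/
def splitPorts (n : ℕ) (A : ℕ → ℕ → ℕ) (a x b p m : ℕ) : List SplitPort :=
  (List.range' p m).map fun i =>
    ⟨coverCount A a x i, A i b, blockSum A i (i + 1) (x + 1) b, outSum n A a b i (i + 1)⟩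

/-- The proper ports among `l`. -/
def properPorts (l : List SplitPort) : List SplitPort :=
  l.filter fun e => e.corner + e.far + e.out ≠ 0

theorem properPorts_cons (e : SplitPort) (l : List SplitPort) :
    properPorts (e :: l) =
      if e.corner + e.far + e.out = 0 then properPorts l else e :: properPorts l := by
  by_cases h : e.corner + e.far + e.out = 0
  · rw [if_pos h, properPorts, List.filter_cons_of_neg (by simp [h]), properPorts]
  · rw [if_neg h, properPorts, List.filter_cons_of_pos
      (p := fun e : SplitPort => decide (e.corner + e.far + e.out ≠ 0)) (decide_eq_true h),
      properPorts]

theorem sum_map_properPorts {f : SplitPort → ℕ}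
    (hf : ∀ e : SplitPort, e.corner + e.far + e.out = 0 → f e = 0) (l : List SplitPort) :
    ((properPorts l).map f).sum = (l.map f).sum := by
  induction l with
  | nil => rfl
  | cons e l ih =>
    rw [properPorts_cons, List.map_cons, List.sum_cons]
    split_ifs with h
    · rw [ih, hf e h, zero_add]
    · rw [List.map_cons, List.sum_cons, ih]

theorem peakCrossing_properPorts (l : List SplitPort) (pre : ℕ) :
    peakCrossing (properPorts l) pre = peakCrossing l pre := by
  induction l generalizing pre with
  | nil => rfl
  | cons e l ih =>
    rw [properPorts_cons, peakCrossing_cons]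
    split_ifs with h h' h'
    · rw [ih, show e.far = 0 by omega, add_zero]
    · omega
    · rw [peakCrossing_cons, if_pos h', ih]
    · rw [peakCrossing_cons, if_neg h', ih, sum_map_properPorts fun _ _ => by omega]

theorem outPorts_properPorts (l : List SplitPort) (pre : ℕ) :
    outPorts (properPorts l) pre = outPorts l pre := by
  induction l generalizing pre with
  | nil => rfl
  | cons e l ih =>
    rw [properPorts_cons, outPorts_cons]
    split_ifs with h h' h'
    · rw [ih, show e.corner + e.far = 0 by omega, add_zero]
    · omega
    · rw [outPorts_cons, if_pos h', ih]
    · rw [outPorts_cons, if_neg h', ih]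

theorem Certifies.of_properPorts {g : SplitGroup} {r : SplitRecord} {t i : ℕ}
    {l : List SplitPort} (h : Certifies g r t i (properPorts l)) : Certifies g r t i l where
  mem := h.mem
  key := by
    rw [h.key, farSum, exitSum, cornerSum, sum_map_properPorts fun _ _ => by omega,
      sum_map_properPorts fun _ _ => by omega, sum_map_properPorts fun _ _ => by omega]
    rfl
  peak := h.peak.trans_eq (peakCrossing_properPorts l 0)
  size := h.size
  inner := h.inner
  load := h.load.trans_eq (sum_map_properPorts (fun e he => by simp [show e.far = 0 by omega]) l)
  width := (sum_map_properPorts (fun e he => by simp [show e.far = 0 by omega]) l).symm.trans_le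
    h.width
  ports := outPorts_properPorts l 0 ▸ h.ports

theorem sum_map_range' (f : ℕ → ℕ) (p m : ℕ) :
    ((List.range' p m).map f).sum = ∑ i ∈ Ico p (p + m), f i := by
  induction m generalizing p with
  | zero => simp
  | succ m ih =>
    rw [List.range'_succ, List.map_cons, List.sum_cons, ih, ← add_assoc, add_right_comm,
      sum_eq_sum_Ico_succ_bot (a := p) (by omega) f]

variable {n : ℕ} {A : ℕ → ℕ → ℕ} {a x b : ℕ}

theorem splitPorts_succ (p m : ℕ) : splitPorts n A a x b p (m + 1) =
    ⟨coverCount A a x p, A p b, blockSum A p (p + 1) (x + 1) b, outSum n A a b p (p + 1)⟩ ::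
      splitPorts n A a x b (p + 1) m := by
  rw [splitPorts, splitPorts, List.range'_succ, List.map_cons]

theorem cornerSum_splitPorts (p m : ℕ) :
    cornerSum (splitPorts n A a x b p m) = blockSum A p (p + m) b (b + 1) := by
  rw [cornerSum, splitPorts, List.map_map, Function.comp_def, sum_map_range']
  simp [blockSum]

theorem farSum_splitPorts (p m : ℕ) :
    farSum (splitPorts n A a x b p m) = blockSum A p (p + m) (x + 1) b := by
  rw [farSum, splitPorts, List.map_map, Function.comp_def, sum_map_range']
  simp [blockSum]

theorem exitSum_splitPorts (p m : ℕ) :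
    exitSum (splitPorts n A a x b p m) = outSum n A a b p (p + m) := by
  rw [exitSum, splitPorts, List.map_map, Function.comp_def, sum_map_range']
  simp [blockSum, outSum, sum_add_distrib]

theorem farLoad_splitPorts (p m : ℕ) : farLoad (splitPorts n A a x b p m) =
    ∑ i ∈ Ico p (p + m), blockSum A i (i + 1) (x + 1) b * coverCount A a x i := by
  rw [farLoad, splitPorts, List.map_map, Function.comp_def, sum_map_range']

theorem farWidth_splitPorts (p m : ℕ) : farWidth (splitPorts n A a x b p m) =
    ∑ i ∈ Ico p (p + m), if blockSum A i (i + 1) (x + 1) b = 0 then 0 else 1 := by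
  rw [farWidth, splitPorts, List.map_map, Function.comp_def, sum_map_range']

theorem peakCrossing_splitPorts_le {p m pre M : ℕ} (h : ∀ i, p ≤ i → i < p + m → A i b ≠ 0 →
    coverCount A a x i + pre + blockSum A p i (x + 1) b + outSum n A a b (i + 1) (p + m) ≤ M) :
    peakCrossing (splitPorts n A a x b p m) pre ≤ M := by
  induction m generalizing p pre with
  | zero => exact Nat.zero_le M
  | succ m ih =>
    have hrec : peakCrossing (splitPorts n A a x b (p + 1) m)
        (pre + blockSum A p (p + 1) (x + 1) b) ≤ M := by
      refine ih fun i h₁ h₂ h₃ => ?_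
      have := h i (by omega) (by omega) h₃
      rw [blockSum_split_left (m := p + 1) (by omega) h₁,
        show p + (m + 1) = p + 1 + m by omega] at this
      omega
    rw [splitPorts_succ, peakCrossing_cons]
    split_ifs with h₀
    · exact hrec
    · refine max_le ?_ hrec
      have := h p le_rfl (by omega) h₀
      rw [blockSum_eq_zero_of_le_left le_rfl, show p + (m + 1) = p + 1 + m by omega,
        ← exitSum_splitPorts (x := x)] at this
      simp only [exitSum] at this ⊢
      omega

theorem chordPorts_append (p m k : ℕ) :
    chordPorts n A a b p (m + k) = chordPorts n A a b p m ++ chordPorts n A a b (p + m) k := by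
  rw [chordPorts, chordPorts, chordPorts, ← List.filter_append, ← List.map_append,
    List.range'_append_1]

theorem chordPorts_one (p : ℕ) : chordPorts n A a b p 1 =
    if outSum n A a b p (p + 1) = 0 then [] else
      [(outSum n A a b p (p + 1), coverCount A a b p)] := by
  by_cases h : outSum n A a b p (p + 1) = 0 <;> simp [chordPorts, h]

theorem coverCount_mirror (hA : ∀ i j, A i j = A j i) {u : ℕ} (hau : a ≤ u) (hub : u ≤ b)
    (hb : b < n) :
    coverCount (mirror n A) (n - 1 - b) (n - 1 - a) (n - 1 - u) = coverCount A a b u := by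
  have := blockSum_mirror (A := A) (p := u + 1) (q := b + 1) (r := a) (s := u) hb (by omega)
  rw [coverCount, coverCount, blockSum_comm hA, ← this]
  congr 1 <;> omega

theorem chordPorts_mirror (hA : ∀ i j, A i j = A j i) (hb : b < n) {p m p' : ℕ} (ha : a < p)
    (hp : p + m ≤ b) (hp' : p' = n - (p + m)) :
    chordPorts n (mirror n A) (n - 1 - b) (n - 1 - a) p' m = (chordPorts n A a b p m).reverse := by
  induction m generalizing p p' with
  | zero => rfl
  | succ m ih =>
    rw [chordPorts_append, ih (p := p + 1) (by omega) (by omega) (by omega), add_comm m 1,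
      chordPorts_append, List.reverse_append, chordPorts_one, chordPorts_one,
      outSum_mirror (p := p) (q := p + 1) (by omega) hb (by omega) (by omega) (by omega),
      show p' + m = n - 1 - p by omega, coverCount_mirror hA (by omega) (by omega) hb]
    split_ifs <;> rfl

theorem outSum_left_side (hxb : x < b) (hb : b < n) (p q : ℕ) :
    outSum n A a x p q =
      outSum n A a b p q + blockSum A p q (x + 1) b + blockSum A p q b (b + 1) := by
  rw [outSum, outSum, blockSum_split_right (r := x + 1) (m := b) hxb (by omega),
    blockSum_split_right (r := b) (m := b + 1) (by omega) hb]
  omega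

theorem coverCount_left_side {u : ℕ} (hau : a < u) (hux : u < x) (hxb : x < b) :
    coverCount A a b u = coverCount A a x u + A a b + blockSum A a (a + 1) (x + 1) b +
      (blockSum A (a + 1) u (x + 1) b + blockSum A (a + 1) u b (b + 1)) := by
  rw [coverCount, coverCount, blockSum_split_right (m := x + 1) (s := b + 1) (by omega) (by omega),
    blockSum_split_right (r := x + 1) (m := b) (s := b + 1) (by omega) (by omega),
    blockSum_split_left (p := a) (m := a + 1) (r := x + 1) (by omega) (by omega),
    blockSum_split_left (p := a) (m := a + 1) (r := b) (by omega) (by omega), blockSum_single]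
  omega

theorem chordPorts_left_side (hxb : x < b) {p m : ℕ} (hap : a < p) (hpm : p + m = x) :
    chordPorts n A a b p m = shiftPorts (A a b + blockSum A a (a + 1) (x + 1) b)
      (outPorts (splitPorts n A a x b p m)
        (blockSum A (a + 1) p (x + 1) b + blockSum A (a + 1) p b (b + 1))) := by
  induction m generalizing p with
  | zero => rfl
  | succ m ih =>
    have h₁ := blockSum_split_left (A := A) (p := a + 1) (m := p) (q := p + 1) (r := x + 1)
      (s := b) hap (by omega)
    have h₂ := blockSum_split_left (A := A) (p := a + 1) (m := p) (q := p + 1) (r := b)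
      (s := b + 1) hap (by omega)
    rw [add_comm m 1, chordPorts_append, chordPorts_one, add_comm 1 m, splitPorts_succ,
      outPorts_cons, ih (p := p + 1) (by omega) (by omega), h₁, h₂, blockSum_single,
      coverCount_left_side hap (by omega) hxb]
    dsimp only
    rw [add_add_add_comm (blockSum A (a + 1) p (x + 1) b), add_comm (A p b)]
    split_ifs with h
    · rfl
    · rw [shiftPorts, shiftPorts, List.map_cons, List.singleton_append]
      congr 2
      omega

theorem map_properPorts_splitPorts (hxb : x < b) (hb : b < n) (p m : ℕ) :
    (properPorts (splitPorts n A a x b p m)).map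
      (fun e => (e.corner + e.far + e.out, e.passing)) = chordPorts n A a x p m := by
  induction m generalizing p with
  | zero => rfl
  | succ m ih =>
    rw [splitPorts_succ, properPorts_cons, add_comm m 1, chordPorts_append, chordPorts_one, ← ih,
      outSum_left_side hxb hb, blockSum_single]
    dsimp only
    rw [show A p b + blockSum A p (p + 1) (x + 1) b + outSum n A a b p (p + 1) =
      outSum n A a b p (p + 1) + blockSum A p (p + 1) (x + 1) b + A p b by omega]
    split_ifs
    · rfl
    · rw [List.map_cons, List.singleton_append]
      dsimp only
      congr 2
      omega

theorem IsOuterFive.coverCount_le (hA : IsOuterFive n A) {u : ℕ} (hau : a < u) (hub : u < b)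
    (hb : b < n) (h : outSum n A a b u (u + 1) ≠ 0) : coverCount A a b u ≤ 5 := by
  rcases Nat.eq_zero_or_pos (blockSum A u (u + 1) 0 a) with h₀ | h₀
  · obtain ⟨i, v, hi, hi', hv, hv', huv⟩ := exists_of_blockSum_pos (A := A) (p := u) (q := u + 1)
      (r := b + 1) (s := n) (by rw [outSum] at h; omega)
    obtain rfl : i = u := by omega
    refine le_trans ?_ (hA.cross i v (by omega) hv' huv)
    rw [crossCount, coverCount, blockSum_comm hA.symm]
    exact le_trans (blockSum_mono le_rfl (by omega) (by omega) le_rfl) (Nat.le_add_right _ _)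
  · obtain ⟨i, v, hi, hi', hv, hv', huv⟩ := exists_of_blockSum_pos h₀
    obtain rfl : i = u := by omega
    refine le_trans ?_ (hA.cross v i (by omega) (by omega) (by rwa [hA.symm]))
    exact le_trans (blockSum_mono (by omega) le_rfl le_rfl (by omega)) (Nat.le_add_left _ _)

end ports

section triangle

open Finset

variable {n : ℕ} {A : ℕ → ℕ → ℕ} {a x b : ℕ}

theorem IsOuterFive.coverCount_corner_le (hA : IsOuterFive n A) (hxb : x < b) (hb : b < n) {i : ℕ}
    (hai : a < i) (hix : i < x) (hib : A i b ≠ 0) :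
    coverCount A a x i + blockSum A (a + 1) i (x + 1) b + outSum n A a b (i + 1) x +
      (blockSum A a (a + 1) (x + 1) b + outSum n A a b x (x + 1) + outSum n A a b (x + 1) b)
        ≤ 5 := by
  have h := hA.cross i b (by omega) hb hib
  rw [crossCount_eq_outSum (a := a) (b := b) hai.le le_rfl hb,
    outSum_split (p := i + 1) (m := x) (q := b) (by omega) hxb.le,
    outSum_split (p := x) (m := x + 1) (q := b) (by omega) hxb,
    blockSum_comm hA.symm (i + 1) b a i,
    blockSum_split_right (m := x + 1) (s := b) (by omega) hxb,
    blockSum_split_left (p := a) (m := a + 1) (r := x + 1) (by omega) (by omega)] at h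
  rw [coverCount]
  omega

theorem IsOuterFive.peakCrossing_le (hA : IsOuterFive n A) (hax : a < x) (hxb : x < b)
    (hb : b < n) (h : blockSum A (a + 1) x b (b + 1) ≠ 0) :
    peakCrossing (splitPorts n A a x b (a + 1) (x - a - 1)) 0 +
      (blockSum A a (a + 1) (x + 1) b + outSum n A a b x (x + 1) + outSum n A a b (x + 1) b)
        ≤ 5 := by
  obtain ⟨i, j, hai, hix, hj, hj', hij⟩ := exists_of_blockSum_pos (Nat.pos_of_ne_zero h)
  obtain rfl : j = b := by omega
  have := hA.coverCount_corner_le (a := a) hxb hb hai hix hij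
  refine Nat.add_le_of_le_sub (by omega) (peakCrossing_splitPorts_le fun k hk hk' hkb => ?_)
  rw [show a + 1 + (x - a - 1) = x by omega] at hk' ⊢
  have := hA.coverCount_corner_le (a := a) hxb hb hk hk' hkb
  omega

theorem IsOuterFive.peakCrossing_le_five (hA : IsOuterFive n A) (hax : a < x) (hxb : x < b)
    (hb : b < n) : peakCrossing (splitPorts n A a x b (a + 1) (x - a - 1)) 0 ≤ 5 := by
  refine peakCrossing_splitPorts_le fun k hk hk' hkb => ?_
  rw [show a + 1 + (x - a - 1) = x by omega] at hk' ⊢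
  have := hA.coverCount_corner_le (a := a) hxb hb hk hk' hkb
  omega

theorem IsOuterFive.snd_le_of_mem_chordPorts (hA : IsOuterFive n A) (hb : b < n) {p m : ℕ}
    (ha : a < p) (hp : p + m ≤ b) {y : ℕ × ℕ} (hy : y ∈ chordPorts n A a b p m) : y.2 ≤ 5 := by
  simp only [chordPorts, List.mem_filter, List.mem_map, List.mem_range'_1, ne_eq,
    decide_eq_true_eq] at hy
  obtain ⟨⟨u, hu, rfl⟩, hu'⟩ := hy
  exact hA.coverCount_le (by omega) (by omega) hb hu'

theorem IsOuterFive.snd_le_of_mem_outPorts (hA : IsOuterFive n A) (hax : a < x) (hxb : x < b)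
    (hb : b < n) {y : ℕ × ℕ} (hy : y ∈ outPorts (splitPorts n A a x b (a + 1) (x - a - 1)) 0) :
    y.2 + (A a b + blockSum A a (a + 1) (x + 1) b) ≤ 5 := by
  have h := chordPorts_left_side (n := n) (A := A) (a := a) (x := x) (p := a + 1) (m := x - a - 1)
    hxb (by omega) (by omega)
  rw [blockSum_eq_zero_of_le_left le_rfl, blockSum_eq_zero_of_le_left le_rfl] at h
  exact hA.snd_le_of_mem_chordPorts (n := n) (a := a) (b := b) (p := a + 1) (m := x - a - 1)
    (y := (y.1, _)) hb (by omega) (by omega) (h ▸ List.mem_map_of_mem hy)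

theorem IsOuterFive.sum_load_le (hA : IsOuterFive n A) (hb : b < n) :
    ∑ i ∈ Ico (a + 1) x, blockSum A i (i + 1) (x + 1) b * coverCount A a x i +
      ∑ j ∈ Ico (x + 1) b, blockSum A (a + 1) x j (j + 1) * coverCount A x b j +
      blockSum A (a + 1) x (x + 1) b * outSum n A a b x (x + 1) ≤
    5 * blockSum A (a + 1) x (x + 1) b := by
  have h₁ : ∀ i, blockSum A i (i + 1) (x + 1) b = ∑ j ∈ Ico (x + 1) b, A i j := fun i => by
    simp [blockSum]
  have h₂ : ∀ j, blockSum A (a + 1) x j (j + 1) = ∑ i ∈ Ico (a + 1) x, A i j := fun j => by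
    simp [blockSum]
  simp only [h₁, h₂, sum_mul]
  rw [sum_comm (s := Ico (x + 1) b)]
  simp only [blockSum, sum_mul, mul_sum, ← sum_add_distrib]
  refine sum_le_sum fun i hi => sum_le_sum fun j hj => ?_
  rw [← mul_add, ← mul_add, mul_comm 5]
  rcases Nat.eq_zero_or_pos (A i j) with h | h
  · simp [h]
  rw [mem_Ico] at hi hj
  refine Nat.mul_le_mul_left _ (le_trans ?_ (hA.cross i j (by omega) (by omega) h.ne'))
  rw [crossCount_eq_outSum (a := a) (b := b) (by omega) (by omega) hb]
  have h₁ := outSum_split (n := n) (A := A) (a := a) (b := b) (p := i + 1) (m := x) (q := j)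
    (by omega) (by omega)
  have h₂ := outSum_split (n := n) (A := A) (a := a) (b := b) (p := x) (m := x + 1) (q := j)
    (by omega) (by omega)
  have h₃ : blockSum A a i (i + 1) (x + 1) ≤ blockSum A a i (i + 1) j :=
    blockSum_mono le_rfl le_rfl le_rfl (by omega)
  have h₄ : blockSum A x j (j + 1) (b + 1) ≤ blockSum A (i + 1) j (j + 1) (b + 1) :=
    blockSum_mono (by omega) le_rfl le_rfl le_rfl
  rw [blockSum_comm hA.symm (i + 1) j a i]
  simp only [blockSum, coverCount] at *
  omega

theorem blockSum_le_width_mul_width (hA : ∀ i j, A i j ≤ 1) (p q r s : ℕ) :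
    blockSum A p q r s ≤ (∑ i ∈ Ico p q, if blockSum A i (i + 1) r s = 0 then 0 else 1) *
      ∑ j ∈ Ico r s, if blockSum A p q j (j + 1) = 0 then 0 else 1 := by
  rw [blockSum, sum_mul_sum]
  refine sum_le_sum fun i hi => sum_le_sum fun j hj => ?_
  rw [mem_Ico] at hi hj
  rcases Nat.eq_zero_or_pos (A i j) with h | h
  · simp [h]
  rw [if_neg, if_neg]
  · exact hA i j
  · exact fun h₀ => h.ne' (eq_zero_of_blockSum_eq_zero h₀ hi.1 hi.2 le_rfl (by omega))
  · exact fun h₀ => h.ne' (eq_zero_of_blockSum_eq_zero h₀ le_rfl (by omega) hj.1 hj.2)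

/-- The chord `{a, b}` is described by a record in `S`. -/
def IsCovered (S : List SideRecord) (n : ℕ) (A : ℕ → ℕ → ℕ) (a b : ℕ) : Prop :=
  ∃ s ∈ S, s.size = b - a - 1 ∧ blockSum A a (b + 1) a (b + 1) ≤ 2 * (s.inner + A a b) ∧
    Dominates (chordPorts n A a b (a + 1) (b - a - 1)) (shiftPorts (A a b) (unpackPorts s.ports))

/-- The vertices behind `{a, b}` cannot be removed from a minimal counterexample. -/
def IsIrremovable (n : ℕ) (A : ℕ → ℕ → ℕ) (a b : ℕ) : Prop :=
  a + 1 < b → 389 * (b - a - 1) + 98 <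
    49 * blockSum A a (b + 1) a (b + 1) + 98 * crossCount n A a b

theorem Dominates.map_fst {l m : List (ℕ × ℕ)} (h : Dominates l m) :
    l.map Prod.fst = m.map Prod.fst := by
  induction h with
  | nil => rfl
  | cons h _ ih => rw [List.map_cons, List.map_cons, ih, h.1]

theorem sum_fst_chordPorts (p m : ℕ) :
    ((chordPorts n A a b p m).map Prod.fst).sum = outSum n A a b p (p + m) := by
  induction m generalizing p with
  | zero => exact outSum_self.symm
  | succ m ih =>
    rw [add_comm m 1, chordPorts_append, chordPorts_one, List.map_append, List.sum_append, ih,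
      outSum_split (p := p) (m := p + 1) (q := p + (1 + m)) (by omega) (by omega),
      ← add_assoc p]
    split_ifs with h <;> simp [h]

theorem IsCovered.exists_certifies {S : List SideRecord} {H : List SplitGroup}
    (hS : sidesOK S H = true) (hA : IsOuterFive n A) (hax : a < x) (hxb : x < b) (hb : b < n)
    (hc : IsCovered S n A a x) (hi : IsIrremovable n A a x) (h1 : x = a + 1 → A a x = 1) :
    ∃ g ∈ H, ∃ r i, blockSum A a (x + 1) a (x + 1) ≤ 2 * i ∧
      Certifies g r (x - a - 1) i (splitPorts n A a x b (a + 1) (x - a - 1)) := by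
  obtain ⟨s, hs, hsize, hinner, hports⟩ := hc
  have hax' : a + 1 + (x - a - 1) = x := by omega
  have hload := hA.sum_load_le (a := a) (x := x) hb
  have hcert : ∃ g ∈ H, ∃ r, Certifies g r s.size (s.inner + A a x)
      (properPorts (splitPorts n A a x b (a + 1) (x - a - 1))) := by
    refine _root_.exists_certifies hS hs (hA.le_one a x) (fun h => h1 (by omega)) (fun h => ?_)
      ?_ ?_ ?_ ?_ ?_ ?_
    · have h₁ := hports.map_fst
      have h₂ := sum_fst_chordPorts (n := n) (A := A) (a := a) (b := x) (a + 1) (x - a - 1)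
      rw [h₁, hax', shiftPorts, List.map_map] at h₂
      have h₃ := hi (by omega)
      change ((unpackPorts s.ports).map Prod.fst).sum = crossCount n A a x at h₂
      rw [h₂, hsize]
      omega
    · rw [← map_properPorts_splitPorts hxb hb, Dominates, List.forall₂_map_left_iff] at hports
      exact hports
    · simp only [properPorts, splitPorts, List.mem_filter, List.mem_map]
      rintro _ ⟨⟨i, -, rfl⟩, -⟩
      exact hA.le_one i b
    · intro e he
      exact hA.snd_le_of_mem_chordPorts (n := n) (a := a) (b := x) (p := a + 1) (m := x - a - 1)
        (y := (e.corner + e.far + e.out, e.passing)) (by omega) (by omega) (by omega)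
        (map_properPorts_splitPorts hxb hb (a + 1) (x - a - 1) ▸ List.mem_map_of_mem he)
    · rw [farLoad, farSum, sum_map_properPorts fun e he => by simp [show e.far = 0 by omega],
        sum_map_properPorts fun e he => by omega, ← farLoad, ← farSum, farLoad_splitPorts,
        farSum_splitPorts, hax']
      omega
    · rw [peakCrossing_properPorts]
      exact hA.peakCrossing_le_five hax hxb hb
    · rw [outPorts_properPorts]
      exact fun y hy => (Nat.le_add_right _ _).trans (hA.snd_le_of_mem_outPorts hax hxb hb hy)
  obtain ⟨g, hg, r, hr⟩ := hcert
  exact ⟨g, hg, r, _, hinner, hsize ▸ hr.of_properPorts⟩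

end triangle

section triangle

open Finset

variable {n : ℕ} {A : ℕ → ℕ → ℕ} {a x b : ℕ}

theorem IsOuterFive.blockSum_triangle (hA : IsOuterFive n A) (hax : a < x) (hxb : x < b) :
    blockSum A a (b + 1) a (b + 1) = blockSum A a (x + 1) a (x + 1) +
      blockSum A x (b + 1) x (b + 1) + 2 * (blockSum A (a + 1) x b (b + 1) +
        blockSum A a (a + 1) (x + 1) b + blockSum A (a + 1) x (x + 1) b) + 2 * A a b := by
  have comm := blockSum_comm hA.symm
  have h : ∀ p q, blockSum A p q a (b + 1) =
      blockSum A p q a x + blockSum A p q x (x + 1) + blockSum A p q (x + 1) (b + 1) :=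
    fun p q => by
      rw [blockSum_split_right (m := x) (s := b + 1) hax.le (by omega),
        blockSum_split_right (r := x) (m := x + 1) (by omega) (by omega), add_assoc]
  have h₁ := blockSum_split_right (A := A) (p := x + 1) (q := b + 1) (r := x) (m := x + 1)
    (s := b + 1) (by omega) (by omega)
  have h₂ := blockSum_split_right (A := A) (p := a) (q := x) (r := a) (m := x)
    (s := x + 1) (by omega) (by omega)
  have h₃ := blockSum_split_left (A := A) (p := a) (m := a + 1) (q := x) (r := x + 1)
    (s := b + 1) (by omega) (by omega)
  have h₄ := blockSum_split_right (A := A) (p := a) (q := a + 1) (r := x + 1) (m := b)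
    (s := b + 1) (by omega) (by omega)
  have h₅ := blockSum_split_right (A := A) (p := a + 1) (q := x) (r := x + 1) (m := b)
    (s := b + 1) (by omega) (by omega)
  rw [blockSum_split_left (p := a) (m := x) (q := b + 1) hax.le (by omega),
    blockSum_split_left (p := x) (m := x + 1) (q := b + 1) (r := a) (by omega) (by omega), h, h, h,
    blockSum_split_left (p := a) (m := x) (q := x + 1) hax.le (by omega),
    blockSum_split_right (p := x) (q := x + 1) (r := a) (m := x) (s := x + 1) hax.le (by omega),
    blockSum_split_left (p := x) (m := x + 1) (q := b + 1) (r := x) (by omega) (by omega),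
    blockSum_split_right (p := x) (q := x + 1) (r := x) (m := x + 1) (s := b + 1)
      (by omega) (by omega), comm x (x + 1) a x, comm (x + 1) (b + 1) a x,
      comm (x + 1) (b + 1) x (x + 1), h₁, h₂, h₃, h₄, h₅, blockSum_single, blockSum_single, hA.diag,
      comm (x + 1) (b + 1) x (x + 1)]
  omega

theorem blockSum_mirror' {p q r s p' q' r' s' : ℕ} (hq : q ≤ n) (hs : s ≤ n) (h₁ : p' = n - q)
    (h₂ : q' = n - p) (h₃ : r' = n - s) (h₄ : s' = n - r) :
    blockSum (mirror n A) p' q' r' s' = blockSum A p q r s := by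
  subst h₁ h₂ h₃ h₄
  exact blockSum_mirror hq hs

theorem sum_Ico_mirror (f : ℕ → ℕ) {p q : ℕ} (hq : q ≤ n) :
    ∑ u ∈ Ico (n - q) (n - p), f u = ∑ u ∈ Ico p q, f (n - 1 - u) := by
  rcases Nat.eq_zero_or_pos n with rfl | hn
  · simp [show q = 0 by omega]
  have := sum_Ico_reflect f p (m := q) (n := n - 1) (by omega)
  rw [Nat.sub_add_cancel hn] at this
  exact this.symm

/-- The number of edges behind `{a, b}`, given the triangle `a, x, b`. -/
theorem triangle_alternatives {S : List SideRecord} {H : List SplitGroup}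
    (hS : sidesOK S H = true) (hH : groupsOK S H = true) (hA : IsOuterFive n A) (hax : a < x)
    (hxb : x < b) (hb : b < n) (hab5 : crossCount n A a b ≤ 5) (hax5 : crossCount n A a x ≤ 5)
    (hxb5 : crossCount n A x b ≤ 5) (hca : IsCovered S n A a x)
    (hcb : IsCovered S n (mirror n A) (n - 1 - b) (n - 1 - x)) (hia : IsIrremovable n A a x)
    (hib : IsIrremovable n (mirror n A) (n - 1 - b) (n - 1 - x)) (ha1 : x = a + 1 → A a x = 1)
    (hb1 : b = x + 1 → A x b = 1) :
    49 * blockSum A a (b + 1) a (b + 1) + 98 * max 1 (crossCount n A a b) ≤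
      389 * (b - a - 1) + 98 * A a b ∨
    crossCount n A a b = 0 ∧ b - a - 1 = 5 ∧
      blockSum A a (b + 1) a (b + 1) ≤ 2 * (19 + A a b) ∨
    crossCount n A a b ≠ 0 ∧ IsCovered S n A a b := by
  have comm := blockSum_comm hA.symm
  have hM := hA.mirror
  have hsub : n - 1 - (n - 1 - a) = a := by omega
  have hsub' : n - 1 - (n - 1 - b) = b := by omega
  have hsub'' : n - 1 - (n - 1 - x) = x := by omega
  have hlA : a + 1 + (x - a - 1) = x := by omega
  have hlB : n - 1 - b + 1 + (n - 1 - x - (n - 1 - b) - 1) = n - 1 - x := by omega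
  have hoff : mirror n A (n - 1 - b) (n - 1 - a) = A a b := by
    rw [mirror, hsub, hsub', hA.symm]
  obtain ⟨g, hg, r, i, hi, hr⟩ := hca.exists_certifies hS hA hax hxb hb hia ha1
  obtain ⟨g', hg', r', i', hi', hr'⟩ := hcb.exists_certifies (b := n - 1 - a) hS hM (by omega)
    (by omega) (by omega) hib fun h => by
      rw [mirror, hsub', hsub'', hA.symm]
      exact hb1 (by omega)
  have hmA : blockSum (mirror n A) (n - 1 - b) (n - 1 - b + 1) (n - 1 - x + 1) (n - 1 - a) =
      blockSum A (a + 1) x b (b + 1) := by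
    rw [blockSum_mirror' (p := b) (q := b + 1) (r := a + 1) (s := x) (by omega) (by omega)
      (by omega) (by omega) (by omega) (by omega), comm]
  have hmB : blockSum (mirror n A) (n - 1 - b + 1) (n - 1 - x) (n - 1 - a) (n - 1 - a + 1) =
      blockSum A a (a + 1) (x + 1) b := by
    rw [blockSum_mirror' (p := x + 1) (q := b) (r := a) (s := a + 1) (by omega) (by omega)
      (by omega) (by omega) (by omega) (by omega), comm]
  have hEB := cornerSum_splitPorts (n := n) (A := mirror n A) (a := n - 1 - b) (x := n - 1 - x)
    (b := n - 1 - a) (n - 1 - b + 1) (n - 1 - x - (n - 1 - b) - 1)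
  rw [hlB, hmB] at hEB
  have hFB := farSum_splitPorts (n := n) (A := mirror n A) (a := n - 1 - b) (x := n - 1 - x)
    (b := n - 1 - a) (n - 1 - b + 1) (n - 1 - x - (n - 1 - b) - 1)
  rw [hlB, blockSum_mirror' (p := x + 1) (q := b) (r := a + 1) (s := x) (by omega) (by omega)
    (by omega) (by omega) (by omega) (by omega), comm] at hFB
  have hPB := exitSum_splitPorts (n := n) (A := mirror n A) (a := n - 1 - b) (x := n - 1 - x)
    (b := n - 1 - a) (n - 1 - b + 1) (n - 1 - x - (n - 1 - b) - 1)
  rw [hlB, outSum_mirror (p := x + 1) (q := b) (by omega) (by omega) (by omega) (by omega)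
    (by omega)] at hPB
  have hLB := farLoad_splitPorts (n := n) (A := mirror n A) (a := n - 1 - b) (x := n - 1 - x)
    (b := n - 1 - a) (n - 1 - b + 1) (n - 1 - x - (n - 1 - b) - 1)
  have hWB := farWidth_splitPorts (n := n) (A := mirror n A) (a := n - 1 - b) (x := n - 1 - x)
    (b := n - 1 - a) (n - 1 - b + 1) (n - 1 - x - (n - 1 - b) - 1)
  have hblock : ∀ j ∈ Ico (x + 1) b, blockSum (mirror n A) (n - 1 - j) (n - 1 - j + 1)
      (n - 1 - x + 1) (n - 1 - a) = blockSum A (a + 1) x j (j + 1) := fun j hj => by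
    rw [mem_Ico] at hj
    rw [blockSum_mirror' (p := j) (q := j + 1) (r := a + 1) (s := x) (by omega) (by omega)
      (by omega) (by omega) (by omega) (by omega), comm]
  have hIco : ∀ f : ℕ → ℕ, ∑ j ∈ Ico (n - 1 - b + 1) (n - 1 - x), f j =
      ∑ j ∈ Ico (x + 1) b, f (n - 1 - j) := fun f => by
    rw [← sum_Ico_mirror f hb.le]
    congr 2 <;> omega
  rw [hlB, hIco, sum_congr rfl fun j hj => congrArg₂ (· * ·) (hblock j hj)
    (coverCount_mirror hA.symm (by rw [mem_Ico] at hj; omega) (by rw [mem_Ico] at hj; omega) hb)]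
    at hLB
  rw [hlB, hIco, sum_congr rfl fun j hj => by rw [hblock j hj]] at hWB
  have hpA := hA.peakCrossing_le hax hxb hb
  have hpB := hM.peakCrossing_le (a := n - 1 - b) (x := n - 1 - x) (b := n - 1 - a) (by omega)
    (by omega) (by omega)
  rw [hmA, hmB, outSum_mirror (p := x) (q := x + 1) (by omega) (by omega) (by omega) (by omega)
      (by omega),
    outSum_mirror (p := a + 1) (q := x) (by omega) (by omega) (by omega) (by omega) (by omega)]
    at hpB
  have hoA := fun y => hA.snd_le_of_mem_outPorts (y := y) hax hxb hb
  have hoB := fun y => hM.snd_le_of_mem_outPorts (a := n - 1 - b) (x := n - 1 - x)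
    (b := n - 1 - a) (y := y) (by omega) (by omega) (by omega)
  have hkA := chordPorts_left_side (n := n) (A := A) (a := a) (p := a + 1) (m := x - a - 1) hxb
    (by omega) (by omega)
  have hkB := chordPorts_left_side (n := n) (A := mirror n A) (a := n - 1 - b) (x := n - 1 - x)
    (b := n - 1 - a) (p := n - 1 - b + 1) (m := n - 1 - x - (n - 1 - b) - 1) (by omega) (by omega)
    (by omega)
  rw [hmA, hoff] at hoB hkB
  rw [blockSum_eq_zero_of_le_left le_rfl, blockSum_eq_zero_of_le_left le_rfl] at hkA hkB
  rw [chordPorts_mirror (p := x + 1) (m := n - 1 - x - (n - 1 - b) - 1) hA.symm hb (by omega)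
    (by omega) (by omega)] at hkB
  have hload := hA.sum_load_le (a := a) (x := x) hb
  have hwidth := blockSum_le_width_mul_width hA.le_one (a + 1) x (x + 1) b
  have hI := hA.blockSum_triangle hax hxb
  rw [blockSum_mirror' (p := x) (q := b + 1) (r := x) (s := b + 1) (by omega) (by omega)
    (by omega) (by omega) (by omega) (by omega)] at hi'
  have hEA := cornerSum_splitPorts (n := n) (A := A) (a := a) (x := x) (b := b) (a + 1) (x - a - 1)
  have hFA := farSum_splitPorts (n := n) (A := A) (a := a) (x := x) (b := b) (a + 1) (x - a - 1)
  have hPA := exitSum_splitPorts (n := n) (A := A) (a := a) (x := x) (b := b) (a + 1) (x - a - 1)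
  have hLA := farLoad_splitPorts (n := n) (A := A) (a := a) (x := x) (b := b) (a + 1) (x - a - 1)
  have hWA := farWidth_splitPorts (n := n) (A := A) (a := a) (x := x) (b := b) (a + 1) (x - a - 1)
  rw [hlA] at hEA hFA hPA hLA hWA
  have hcross : crossCount n A a b = outSum n A a b (a + 1) x + outSum n A a b (x + 1) b +
      outSum n A a b x (x + 1) := by
    change outSum n A a b (a + 1) b = _
    rw [outSum_split (m := x) (by omega) (by omega),
      outSum_split (p := x) (m := x + 1) (by omega) (by omega)]
    omega
  have hcover : coverCount A a b x = blockSum A (a + 1) x b (b + 1) +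
      blockSum A a (a + 1) (x + 1) b + blockSum A (a + 1) x (x + 1) b + A a b := by
    have h₁ := blockSum_split_right (A := A) (p := a) (q := a + 1) (r := x + 1) (m := b)
      (s := b + 1) (by omega) (by omega)
    have h₂ := blockSum_split_right (A := A) (p := a + 1) (q := x) (r := x + 1) (m := b)
      (s := b + 1) (by omega) (by omega)
    rw [coverCount, blockSum_split_left (m := a + 1) (by omega) (by omega), h₁, h₂,
      blockSum_single]
    omega
  have hcover5 := hA.coverCount_le hax hxb hb
  have hEA5 : blockSum A (a + 1) x b (b + 1) ≤ 5 :=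
    ((blockSum_mono le_rfl le_rfl (by omega) hb).trans (Nat.le_add_left _ _)).trans hax5
  have hEB5 : blockSum A a (a + 1) (x + 1) b ≤ 5 := by
    rw [comm]
    exact ((blockSum_mono le_rfl le_rfl (by omega) (by omega)).trans (Nat.le_add_right _ _)).trans
      hxb5
  obtain h | h | ⟨h, s, hs, hsize, hinner, hports⟩ := hr.of_groupsOK hH hr' hg hg'
    (x := outSum n A a b x (x + 1)) hFA hFB hEA hEB hPA hPB hEA5 hEB5 (by omega)
    (fun h => by have := hpA h; omega) (fun h => by have := hpB h; omega)
    (by rw [hLA, hLB]; exact hload) (by rw [hWA, hWB]; exact hwidth)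
    (fun h => by have := hcover5 h; omega)
    (fun p hp => by have := hoA p hp; omega) (fun p hp => by have := hoB p hp; omega)
  · left
    omega
  · right; left
    omega
  · refine .inr (.inr ⟨by omega, s, hs, by omega, by omega, ?_⟩)
    have hm : b - a - 1 = x - a - 1 + (1 + (n - 1 - x - (n - 1 - b) - 1)) := by omega
    convert hports.shiftPorts (A a b) using 1
    rw [hm, chordPorts_append, hlA, hkA, chordPorts_append, chordPorts_one, ← List.reverse_reverse
      (chordPorts n A a b (x + 1) _), hkB, hcover, joinPorts]
    simp only [shiftPorts, List.map_append, List.map_reverse, List.map_map, apply_ite (List.map _),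
      Function.comp_def, List.map_cons, List.map_nil, add_comm, add_left_comm, add_zero]

end triangle

section total

open Finset

variable {n : ℕ} {A B : ℕ → ℕ → ℕ} {a b p q r s : ℕ}

theorem blockSum_add_le (h : ∀ u v, A u v ≤ B u v) {u v : ℕ} (hpu : p ≤ u) (huq : u < q)
    (hrv : r ≤ v) (hvs : v < s) : blockSum A p q r s + B u v ≤ blockSum B p q r s + A u v := by
  simp only [blockSum, ← sum_product']
  have huv : (u, v) ∈ Ico p q ×ˢ Ico r s := by simp; omega
  rw [← add_sum_erase _ _ huv, ← add_sum_erase _ _ huv, add_right_comm, add_right_comm (B _ _),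
    add_comm (A u v)]
  exact Nat.add_le_add_left (sum_le_sum fun _ _ => h _ _) _

theorem blockSum_le_blockSum (h : ∀ u v, A u v ≤ B u v) (p q r s : ℕ) :
    blockSum A p q r s ≤ blockSum B p q r s :=
  sum_le_sum fun _ _ => sum_le_sum fun _ _ => h _ _

theorem blockSum_square (hA : ∀ i j, A i j = A j i) {m : ℕ} (h₁ : p ≤ m) (h₂ : m ≤ q) :
    blockSum A p q p q = blockSum A p m p m + 2 * blockSum A p m m q + blockSum A m q m q := by
  rw [blockSum_split_left h₁ h₂, blockSum_split_right h₁ h₂, blockSum_split_right h₁ h₂,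
    blockSum_comm hA m q p m]
  omega

/-- Add the edges of the outer cycle. -/
def fillCycle (n : ℕ) (A : ℕ → ℕ → ℕ) (i j : ℕ) : ℕ :=
  if i = j + 1 ∨ j = i + 1 ∨ i = 0 ∧ j + 1 = n ∨ j = 0 ∧ i + 1 = n then 1 else A i j

theorem IsOuterFive.le_fillCycle (hA : IsOuterFive n A) (i j : ℕ) :
    A i j ≤ fillCycle n A i j := by
  rw [fillCycle]
  split_ifs
  · exact hA.le_one i j
  · exact le_rfl

theorem crossCount_fillCycle {i j : ℕ} (hj : j < n) :
    crossCount n (fillCycle n A) i j = crossCount n A i j := by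
  unfold crossCount blockSum
  congr 1 <;> refine sum_congr rfl fun u hu => sum_congr rfl fun v hv => if_neg ?_ <;>
    rw [mem_Ico] at hu hv <;> omega

theorem IsOuterFive.fillCycle (hA : IsOuterFive n A) (hn : 2 ≤ n) :
    IsOuterFive n (fillCycle n A) where
  le_one i j := by
    rw [_root_.fillCycle]
    split_ifs
    · exact le_rfl
    · exact hA.le_one i j
  symm i j := by
    rw [_root_.fillCycle, _root_.fillCycle, hA.symm i j]
    exact if_congr (by omega) rfl rfl
  diag i := by
    rw [_root_.fillCycle, if_neg (by omega), hA.diag]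
  cross i j hij hj h := by
    rw [crossCount_fillCycle hj]
    rw [_root_.fillCycle] at h
    split_ifs at h with hc
    · rw [crossCount]
      obtain rfl | ⟨rfl, rfl⟩ : j = i + 1 ∨ i = 0 ∧ n = j + 1 := by omega
      · rw [blockSum_eq_zero_of_le_left le_rfl, blockSum_eq_zero_of_le_left le_rfl]
        omega
      · rw [blockSum_eq_zero_of_le_right le_rfl, blockSum_eq_zero_of_le_right le_rfl]
        omega
    · exact hA.cross i j hij hj h

/-- The labels of the vertices that remain after removing `t` vertices after `a`. -/
def skip (a t i : ℕ) : ℕ := if i ≤ a then i else i + t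

theorem skip_lt_skip {t i j : ℕ} (h : i < j) : skip a t i < skip a t j := by
  simp only [skip]; split_ifs <;> omega

theorem IsOuterFive.comp_skip {t : ℕ} (hA : IsOuterFive (n + t) A) :
    IsOuterFive n fun i j => A (skip a t i) (skip a t j) where
  le_one _ _ := hA.le_one _ _
  symm _ _ := hA.symm _ _
  diag _ := hA.diag _
  cross i j hij hj h := by
    have hmono : StrictMono (skip a t) := fun i j => skip_lt_skip
    have hlt : ∀ v < n, skip a t v < n + t := fun v hv => by
      simp only [skip]; split_ifs <;> omega
    refine le_trans (Nat.add_le_add (blockSum_comp_le hmono.injective ?_ ?_)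
      (blockSum_comp_le hmono.injective ?_ ?_)) (hA.cross _ _ (hmono hij) (hlt j hj) h)
    · exact fun u h₁ h₂ => ⟨hmono h₁, hmono h₂⟩
    · exact fun u _ h₂ => ⟨Nat.zero_le _, hmono h₂⟩
    · exact fun u h₁ h₂ => ⟨hmono h₁, hmono h₂⟩
    · exact fun u h₁ h₂ => ⟨hmono h₁, hlt u h₂⟩

theorem blockSum_comp_skip {t : ℕ} (han : a < n) (hA : ∀ i j, A i j = A j i) :
    blockSum (fun i j => A (skip a t i) (skip a t j)) 0 n 0 n =
      blockSum A 0 (a + 1) 0 (a + 1) + 2 * blockSum A 0 (a + 1) (a + 1 + t) (n + t) +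
        blockSum A (a + 1 + t) (n + t) (a + 1 + t) (n + t) := by
  have h₁ : ∀ f : ℕ → ℕ, ∑ i ∈ Ico 0 (a + 1), f (skip a t i) = ∑ i ∈ Ico 0 (a + 1), f i :=
    fun f => sum_congr rfl fun i hi => by rw [skip, if_pos (by rw [mem_Ico] at hi; omega)]
  have h₂ : ∀ f : ℕ → ℕ, ∑ i ∈ Ico (a + 1) n, f (skip a t i) =
      ∑ i ∈ Ico (a + 1 + t) (n + t), f i := fun f => by
    rw [← sum_Ico_add']
    exact sum_congr rfl fun i hi => by rw [skip, if_neg (by rw [mem_Ico] at hi; omega)]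
  rw [blockSum_square (m := a + 1) (fun _ _ => hA _ _) (by omega) han]
  simp only [blockSum]
  rw [h₁ fun i => ∑ j ∈ Ico 0 (a + 1), A i (skip a t j),
    h₁ fun i => ∑ j ∈ Ico _ n, A i (skip a t j),
    h₂ fun i => ∑ j ∈ Ico _ n, A i (skip a t j)]
  simp only [h₁ (A _), h₂ (A _)]

theorem IsOuterFive.blockSum_total (hA : IsOuterFive n A) (hab : a < b) (hb : b < n) :
    blockSum A 0 n 0 n + 2 * A a b = blockSum A 0 (a + 1) 0 (a + 1) +
      2 * blockSum A 0 (a + 1) b n + blockSum A b n b n +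
        (2 * crossCount n A a b + blockSum A a (b + 1) a (b + 1)) := by
  have comm := blockSum_comm hA.symm
  rw [blockSum_square (p := 0) (m := a + 1) (q := n) hA.symm (by omega) (by omega),
    blockSum_square (p := a + 1) (m := b) (q := n) hA.symm (by omega) (by omega),
    blockSum_square (p := a) (m := a + 1) (q := b + 1) hA.symm (by omega) (by omega),
    blockSum_square (p := a + 1) (m := b) (q := b + 1) hA.symm (by omega) (by omega),
    blockSum_split_right (p := 0) (q := a + 1) (r := a + 1) (m := b) (s := n) (by omega) (by omega),
    blockSum_split_right (p := a) (q := a + 1) (r := a + 1) (m := b) (s := b + 1)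
      (by omega) (by omega),
    blockSum_split_right (p := a + 1) (q := b) (r := b) (m := b + 1) (s := n) (by omega) (by omega),
    blockSum_split_left (p := 0) (m := a) (q := a + 1) (r := a + 1) (s := b) (by omega) (by omega),
    crossCount, comm (a + 1) b 0 a]
  simp only [blockSum_single, hA.diag]
  omega

/-- Every outer 5-planar graph on `m` vertices has at most `389 / 98 * (m - 2)` edges. -/
def TotalBound (m : ℕ) : Prop :=
  ∀ A, IsOuterFive m A → 49 * blockSum A 0 m 0 m ≤ 389 * (m - 2)

theorem IsOuterFive.isIrremovable (hA : IsOuterFive n A) (hmin : ∀ m, 3 ≤ m → m < n → TotalBound m)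
    (hlarge : 389 * (n - 2) < 49 * blockSum A 0 n 0 n) (hab : a < b) (hb : b < n)
    (hroot : b - a + 1 < n) : IsIrremovable n A a b := by
  intro hab1
  obtain ⟨t, rfl⟩ : ∃ t, b = a + 1 + t := ⟨b - (a + 1), by omega⟩
  obtain ⟨m, rfl⟩ : ∃ m, n = m + t := ⟨n - t, by omega⟩
  have hA' : IsOuterFive m fun i j => A (skip a t i) (skip a t j) := hA.comp_skip
  have h := hmin m (by omega) (by omega) _ (hA'.fillCycle (by omega))
  have hF := (hA'.fillCycle (by omega)).symm
  have h₁ := blockSum_comp_skip (n := m) (a := a) (t := t) (by omega) hA.symm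
  have h₂ := blockSum_square (p := 0) (m := a + 1) (q := m) hA'.symm (by omega) (by omega)
  have h₃ := blockSum_square (p := 0) (m := a + 1) (q := m) hF (by omega) (by omega)
  have h₄ := blockSum_le_blockSum hA'.le_fillCycle 0 (a + 1) 0 (a + 1)
  have h₅ := blockSum_le_blockSum hA'.le_fillCycle (a + 1) m (a + 1) m
  have h₆ := blockSum_add_le (p := 0) (q := a + 1) (r := a + 1) (s := m) hA'.le_fillCycle
    (Nat.zero_le a) (by omega) le_rfl (by omega)
  have h₇ : _root_.fillCycle m (fun i j => A (skip a t i) (skip a t j)) a (a + 1) = 1 := by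
    simp [_root_.fillCycle]
  have h₈ : A (skip a t a) (skip a t (a + 1)) = A a (a + 1 + t) := by simp [skip]
  have h₉ := hA.blockSum_total hab hb
  simp only [h₇, h₈] at h₆
  omega

end total

section critical

open Finset

variable {n : ℕ} {A : ℕ → ℕ → ℕ} {a b : ℕ}

/-- The properties of a minimal counterexample that contains the outer cycle. -/
structure IsCritical (n : ℕ) (A : ℕ → ℕ → ℕ) : Prop extends IsOuterFive n A where
  cycle : ∀ i, i + 1 < n → A i (i + 1) = 1
  irremovable : ∀ a b, a < b → b < n → b - a + 1 < n → IsIrremovable n A a b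

theorem IsCritical.mirror (hA : IsCritical n A) : IsCritical n (mirror n A) where
  toIsOuterFive := hA.toIsOuterFive.mirror
  cycle i hi := by
    rw [_root_.mirror, hA.symm, show n - 1 - i = n - 1 - (i + 1) + 1 by omega]
    exact hA.cycle _ (by omega)
  irremovable a b hab hb hroot h := by
    have h₁ := crossCount_mirror (A := A) (i := n - 1 - b) (j := n - 1 - a) (n := n)
      (by omega) (by omega)
    rw [show n - 1 - (n - 1 - a) = a by omega, show n - 1 - (n - 1 - b) = b by omega] at h₁
    have h₂ := hA.irremovable (n - 1 - b) (n - 1 - a) (by omega) (by omega) (by omega) (by omega)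
    rw [blockSum_mirror' (p := n - 1 - b) (q := n - 1 - a + 1) (r := n - 1 - b)
      (s := n - 1 - a + 1) (by omega) (by omega) (by omega) (by omega) (by omega) (by omega), h₁]
    omega

theorem isCritical_fillCycle (hA : IsOuterFive n A) (hn : 3 ≤ n)
    (hmin : ∀ m, 3 ≤ m → m < n → TotalBound m)
    (hlarge : 389 * (n - 2) < 49 * blockSum A 0 n 0 n) : IsCritical n (fillCycle n A) where
  toIsOuterFive := hA.fillCycle (by omega)
  cycle i hi := by simp [fillCycle]
  irremovable a b hab hb hroot := by
    have := blockSum_le_blockSum hA.le_fillCycle 0 n 0 n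
    exact (hA.fillCycle (by omega)).isIrremovable hmin (by omega) hab hb hroot

theorem IsCritical.triangle_alternatives {S : List SideRecord} {H : List SplitGroup}
    (hS : sidesOK S H = true) (hH : groupsOK S H = true) (hA : IsCritical n A) (hab : a + 1 < b)
    (hb : b < n) (hab5 : crossCount n A a b ≤ 5)
    (hcov : ∀ A c d, IsCritical n A → d - c < b - a → c < d → d < n → crossCount n A c d ≤ 5 →
      IsCovered S n A c d) :
    49 * blockSum A a (b + 1) a (b + 1) + 98 * max 1 (crossCount n A a b) ≤
      389 * (b - a - 1) + 98 * A a b ∨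
    crossCount n A a b = 0 ∧ b - a - 1 = 5 ∧
      blockSum A a (b + 1) a (b + 1) ≤ 2 * (19 + A a b) ∨
    crossCount n A a b ≠ 0 ∧ IsCovered S n A a b := by
  obtain ⟨x, hax, hxb, hax5, hxb5⟩ := hA.exists_apex hab hb hab5
  refine _root_.triangle_alternatives hS hH hA.toIsOuterFive hax hxb hb hab5 hax5 hxb5
    (hcov _ _ _ hA (by omega) hax (by omega) hax5)
    (hcov _ _ _ hA.mirror (by omega) (by omega) (by omega) ?_)
    (hA.irremovable a x hax (by omega) (by omega))
    (hA.mirror.irremovable _ _ (by omega) (by omega) (by omega)) (fun h => ?_) (fun h => ?_)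
  · rwa [crossCount_mirror hxb hb]
  · rw [h]
    exact hA.cycle a (by omega)
  · rw [h]
    exact hA.cycle x (by omega)

theorem IsCritical.isCovered {S : List SideRecord} {H : List SplitGroup}
    (hS : sidesOK S H = true) (hH : groupsOK S H = true) (h0 : ⟨0, 0, 0⟩ ∈ S) (t : ℕ) :
    ∀ A a b, IsCritical n A → b - a = t → t + 1 < n → a < b → b < n → crossCount n A a b ≤ 5 →
      IsCovered S n A a b := by
  induction t using Nat.strong_induction_on with
  | _ t ih =>
    intro A a b hA ht htn hab hb hab5
    obtain rfl | hab1 : b = a + 1 ∨ a + 1 < b := by omega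
    · refine ⟨_, h0, by simp, ?_, ?_⟩
      · rw [blockSum_square (m := a + 1) hA.symm (by omega) (by omega)]
        simp [hA.diag]
      · rw [show a + 1 - a - 1 = 0 by omega]
        exact .nil
    have hirr := hA.irremovable a b hab hb (by omega) hab1
    have h1 := hA.le_one a b
    obtain h | h | h := hA.triangle_alternatives hS hH hab1 hb hab5 fun B c d hB hcd hc hd h5 =>
      ih (d - c) (by omega) B c d hB rfl (by omega) hc hd h5
    · omega
    · omega
    · exact h.2

theorem IsOuterFive.blockSum_seven_lt (hA : IsOuterFive 7 A) : blockSum A 0 7 0 7 < 40 := by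
  have h : ∀ i j, i < j → j < 7 → A i j = 0 ∨
      blockSum A 0 i (i + 1) j + blockSum A (i + 1) j (j + 1) 7 ≤ 5 := fun i j hij hj => by
    rw [or_iff_not_imp_left, blockSum_comm hA.symm]
    exact hA.cross i j hij hj
  have hsq : ∀ p < 7, blockSum A p 7 p 7 =
      2 * blockSum A p (p + 1) (p + 1) 7 + blockSum A (p + 1) 7 (p + 1) 7 := fun p hp => by
    rw [blockSum_square (m := p + 1) hA.symm (by omega) (by omega), blockSum_single, hA.diag,
      zero_add]
  rw [hsq 0 (by simp), hsq 1 (by simp), hsq 2 (by simp), hsq 3 (by simp), hsq 4 (by simp),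
    hsq 5 (by simp), hsq 6 (by simp)]
  have h₀ := h 0 3
  have h₁ := h 1 4
  have h₂ := h 2 5
  have h₃ := h 3 6
  have h₄ := h 0 4
  have h₅ := h 1 5
  have h₆ := h 2 6
  simp [blockSum, sum_Ico_eq_sum_range, sum_range_succ] at h₀ h₁ h₂ h₃ h₄ h₅ h₆ ⊢
  have h1 : ∀ i, A i 1 ≤ 1 ∧ A i 2 ≤ 1 ∧ A i 3 ≤ 1 ∧ A i 4 ≤ 1 ∧ A i 5 ≤ 1 ∧ A i 6 ≤ 1 := fun i =>
    ⟨hA.le_one i 1, hA.le_one i 2, hA.le_one i 3, hA.le_one i 4, hA.le_one i 5, hA.le_one i 6⟩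
  have := h1 0
  have := h1 1
  have := h1 2
  have := h1 3
  have := h1 4
  have := h1 5
  omega

theorem totalBound {S : List SideRecord} {H : List SplitGroup} (hS : sidesOK S H = true)
    (hH : groupsOK S H = true) (h0 : ⟨0, 0, 0⟩ ∈ S) (hn : 3 ≤ n) : TotalBound n := by
  induction n using Nat.strong_induction_on with
  | _ n ih =>
    intro A hA
    by_contra! hlarge
    have hB := isCritical_fillCycle hA hn (fun m hm hmn => ih m hmn hm) hlarge
    have hle := blockSum_le_blockSum hA.le_fillCycle 0 n 0 n
    have hcross : crossCount n (fillCycle n A) 0 (n - 1) = 0 := by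
      rw [crossCount, blockSum_eq_zero_of_le_right le_rfl, blockSum_eq_zero_of_le_right (by omega)]
    have h1 := hB.le_one 0 (n - 1)
    have h := hB.triangle_alternatives hS hH (a := 0) (b := n - 1) (by omega) (by omega)
      (by omega) fun B c d hB' hcd hc hd h5 =>
        IsCritical.isCovered hS hH h0 _ B c d hB' rfl (by omega) hc hd h5
    rw [hcross, Nat.sub_add_cancel (by omega)] at h
    obtain h | ⟨-, hn7, h⟩ | h := h
    · omega
    · obtain rfl : n = 7 := by omega
      have := hB.blockSum_seven_lt
      omega
    · exact h.1 rfl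

end critical

section layout

open Finset

variable {n : ℕ} [NeZero n]

open Classical in
/-- The adjacency function of `G` on the positions `0, …, n - 1`, where `σ` gives the position of
each vertex. -/
noncomputable def layoutAdj (σ : Fin n ≃ Fin n) (G : SimpleGraph (Fin n)) (i j : ℕ) : ℕ :=
  if G.Adj (σ.symm (Fin.ofNat n i)) (σ.symm (Fin.ofNat n j)) then 1 else 0

theorem layoutAdj_ne_zero {σ : Fin n ≃ Fin n} {G : SimpleGraph (Fin n)} {i j : ℕ} :
    layoutAdj σ G i j ≠ 0 ↔ G.Adj (σ.symm (Fin.ofNat n i)) (σ.symm (Fin.ofNat n j)) := by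
  simp [layoutAdj]

theorem two_mul_ncard_edgeSet (σ : Fin n ≃ Fin n) (G : SimpleGraph (Fin n)) :
    2 * G.edgeSet.ncard = blockSum (layoutAdj σ G) 0 n 0 n := by
  classical
  rw [← G.coe_edgeFinset, Set.ncard_coe_finset, ← G.sum_degrees_eq_twice_card_edges, blockSum,
    ← range_eq_Ico, sum_range, ← Equiv.sum_comp σ.symm]
  refine sum_congr rfl fun i _ => ?_
  rw [sum_range, ← G.card_neighborFinset_eq_degree, G.neighborFinset_eq_filter, card_filter,
    ← Equiv.sum_comp σ.symm]
  refine sum_congr rfl fun j _ => ?_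
  simp [layoutAdj]

theorem crossing_of_interleave (σ : Fin n ≃ Fin n) {i j p q : ℕ} (hij : i < j) (hj : j < n)
    (hip : i < p) (hpj : p < j) (hq : q < n) (hq' : q < i ∨ j < q) :
    crossing n σ s(σ.symm (Fin.ofNat n i), σ.symm (Fin.ofNat n j))
      s(σ.symm (Fin.ofNat n p), σ.symm (Fin.ofNat n q)) := by
  have hval : ∀ k < n, (Fin.ofNat n k).val = k := fun k hk => Nat.mod_eq_of_lt hk
  have hne : ∀ k < n, ∀ l < n, k ≠ l → σ.symm (Fin.ofNat n k) ≠ σ.symm (Fin.ofNat n l) :=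
    fun k hk l hl hkl h => hkl <| by
      rw [← hval k hk, ← hval l hl, σ.symm.injective h]
  have hmod : ∀ k, i ≤ k → k < n → (k + n - i) % n = k - i := fun k h₁ h₂ => by
    rw [show k + n - i = k - i + n by omega, Nat.add_mod_right, Nat.mod_eq_of_lt (by omega)]
  refine ⟨_, _, _, _, rfl, rfl, hne _ ?_ _ ?_ ?_, hne _ ?_ _ ?_ ?_, hne _ ?_ _ ?_ ?_,
    hne _ ?_ _ ?_ ?_, hne _ ?_ _ ?_ ?_, hne _ ?_ _ ?_ ?_, ?_⟩
  any_goals omega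
  simp only [Equiv.apply_symm_apply, cycBtw]
  rw [hval i (by omega), hval j hj, hval p (by omega), hval q hq, hmod p hip.le (by omega),
    hmod j hij.le hj]
  rcases hq' with h | h
  · rw [Nat.mod_eq_of_lt (show q + n - i < n by omega)]
    omega
  · rw [hmod q (by omega) hq]
    omega

theorem OuterKPlanarOrd.isOuterFive {σ : Fin n ≃ Fin n} {G : SimpleGraph (Fin n)}
    (h : OuterKPlanarOrd n 5 σ G) : IsOuterFive n (layoutAdj σ G) where
  le_one i j := by
    rw [layoutAdj]
    split_ifs <;> omega
  symm i j := by
    classical exact if_congr (G.adj_comm _ _) rfl rfl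
  diag i := by simp [layoutAdj]
  cross i j hij hj hadj := by
    classical
    have hval : ∀ k < n, (Fin.ofNat n k).val = k := fun k hk => Nat.mod_eq_of_lt hk
    refine le_trans ?_ (h s(_, _) (layoutAdj_ne_zero.1 hadj))
    have hcard : crossCount n (layoutAdj σ G) i j =
        #{x ∈ Ico (i + 1) j ×ˢ (Ico 0 i ∪ Ico (j + 1) n) | layoutAdj σ G x.1 x.2 ≠ 0} := by
      rw [crossCount, blockSum, blockSum, ← sum_add_distrib, card_filter, sum_product]
      refine sum_congr rfl fun p _ => ?_
      rw [← sum_union]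
      · refine sum_congr rfl fun q _ => ?_
        simp [layoutAdj]
      · exact disjoint_left.2 fun q h₁ h₂ => by
          rw [mem_Ico] at h₁ h₂
          omega
    rw [hcard, ← Set.ncard_coe_finset]
    refine Set.ncard_le_ncard_of_injOn
      (fun x => s(σ.symm (Fin.ofNat n x.1), σ.symm (Fin.ofNat n x.2))) ?_ ?_ (Set.toFinite _)
    · rintro ⟨p, q⟩ hx
      simp only [coe_filter, mem_product, mem_union, mem_Ico, Set.mem_ofPred_eq] at hx
      exact ⟨layoutAdj_ne_zero.1 hx.2,
        crossing_of_interleave σ hij hj (by omega) (by omega) (by omega) (by omega)⟩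
    · rintro ⟨p, q⟩ hx ⟨p', q'⟩ hx' heq
      simp only [coe_filter, mem_product, mem_union, mem_Ico, Set.mem_ofPred_eq] at hx hx'
      simp only [Sym2.eq_iff, σ.symm.injective.eq_iff, Fin.ext_iff] at heq
      rw [hval p (by omega), hval q (by omega), hval p' (by omega), hval q' (by omega)] at heq
      rw [Prod.mk.injEq]
      omega

end layout

def sideTable : List SideRecord := [
  ⟨0, 0, 0⟩, ⟨1, 2, 20⟩, ⟨1, 2, 30⟩, ⟨1, 2, 40⟩, ⟨1, 2, 50⟩, ⟨2, 5, 2111⟩, ⟨2, 4, 3010⟩,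
  ⟨2, 5, 3111⟩, ⟨2, 4, 4010⟩, ⟨2, 5, 4111⟩, ⟨2, 5, 1121⟩, ⟨2, 4, 2020⟩, ⟨2, 5, 2121⟩, ⟨2, 4, 3020⟩,
  ⟨2, 5, 3121⟩, ⟨2, 5, 31⟩, ⟨2, 4, 1030⟩, ⟨2, 5, 1131⟩, ⟨2, 4, 2030⟩, ⟨2, 5, 2131⟩, ⟨2, 4, 40⟩,
  ⟨2, 5, 41⟩, ⟨2, 4, 1040⟩, ⟨2, 5, 1141⟩, ⟨2, 4, 50⟩, ⟨3, 9, 121312⟩, ⟨3, 8, 211211⟩,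
  ⟨3, 9, 221312⟩, ⟨3, 8, 311211⟩, ⟨3, 7, 301110⟩, ⟨3, 9, 2212⟩, ⟨3, 8, 112211⟩, ⟨3, 9, 122312⟩,
  ⟨3, 8, 212211⟩, ⟨3, 7, 202110⟩, ⟨3, 8, 3111⟩, ⟨3, 9, 3212⟩, ⟨3, 8, 113211⟩, ⟨3, 7, 103110⟩,
  ⟨3, 8, 4110⟩, ⟨3, 9, 1222⟩, ⟨3, 8, 111221⟩, ⟨3, 9, 121322⟩, ⟨3, 8, 211221⟩, ⟨3, 7, 201120⟩,
  ⟨3, 9, 221322⟩, ⟨3, 8, 2121⟩, ⟨3, 9, 2222⟩, ⟨3, 8, 112221⟩, ⟨3, 7, 102120⟩, ⟨3, 8, 3121⟩,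
  ⟨3, 7, 3020⟩, ⟨3, 9, 3222⟩, ⟨3, 9, 32⟩, ⟨3, 8, 1131⟩, ⟨3, 9, 1232⟩, ⟨3, 8, 111231⟩,
  ⟨3, 7, 101130⟩, ⟨3, 8, 2131⟩, ⟨3, 7, 2030⟩, ⟨3, 9, 2232⟩, ⟨3, 8, 42⟩, ⟨3, 8, 1041⟩,
  ⟨4, 14, 1313⟩, ⟨4, 13, 121312⟩, ⟨4, 12, 11131311⟩, ⟨4, 11, 20121312⟩, ⟨4, 11, 21121210⟩,
  ⟨4, 12, 21121411⟩, ⟨4, 12, 23141311⟩, ⟨4, 12, 211311⟩, ⟨4, 13, 231412⟩, ⟨4, 11, 10221210⟩,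
  ⟨4, 12, 13241311⟩, ⟨4, 12, 11231413⟩, ⟨4, 11, 311210⟩, ⟨4, 12, 331311⟩, ⟨4, 13, 2312⟩,
  ⟨4, 13, 2213⟩, ⟨4, 12, 112311⟩, ⟨4, 11, 10122210⟩, ⟨4, 12, 13142311⟩, ⟨4, 12, 11132413⟩,
  ⟨4, 12, 212311⟩, ⟨4, 11, 202210⟩, ⟨4, 12, 3211⟩, ⟨4, 11, 103210⟩, ⟨4, 11, 4010⟩, ⟨4, 13, 1322⟩,
  ⟨4, 13, 1223⟩, ⟨4, 12, 111321⟩, ⟨4, 13, 121423⟩, ⟨4, 11, 12131220⟩, ⟨4, 11, 10121221⟩,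
  ⟨4, 12, 11141221⟩, ⟨4, 12, 11131423⟩, ⟨4, 12, 211221⟩, ⟨4, 11, 201320⟩, ⟨4, 12, 2121⟩,
  ⟨4, 13, 2322⟩, ⟨4, 13, 2223⟩, ⟨4, 12, 112321⟩, ⟨4, 11, 102220⟩, ⟨4, 12, 3221⟩, ⟨4, 11, 3120⟩,
  ⟨4, 12, 1132⟩, ⟨4, 11, 101231⟩, ⟨4, 12, 111333⟩, ⟨4, 12, 2132⟩, ⟨4, 11, 2031⟩, ⟨4, 11, 1040⟩,
  ⟨5, 17, 121412⟩, ⟨5, 16, 12141311⟩, ⟨5, 16, 11131412⟩, ⟨5, 15, 1112131211⟩, ⟨5, 15, 20131210⟩,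
  ⟨5, 15, 20121310⟩, ⟨5, 16, 24151311⟩, ⟨5, 16, 21131514⟩, ⟨5, 16, 201313⟩, ⟨5, 16, 221311⟩,
  ⟨5, 15, 10231210⟩, ⟨5, 16, 14251311⟩, ⟨5, 15, 331211⟩, ⟨5, 15, 311213⟩, ⟨5, 16, 301414⟩,
  ⟨5, 17, 2412⟩, ⟨5, 16, 112411⟩, ⟨5, 15, 10122310⟩, ⟨5, 16, 11132514⟩, ⟨5, 15, 202310⟩,
  ⟨5, 16, 212514⟩, ⟨5, 16, 3412⟩, ⟨5, 15, 113511⟩, ⟨5, 17, 1224⟩, ⟨5, 16, 131320⟩, ⟨5, 16, 111322⟩,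
  ⟨5, 15, 10121320⟩, ⟨5, 15, 10131220⟩, ⟨5, 16, 14151321⟩, ⟨5, 16, 11131524⟩, ⟨5, 15, 201220⟩,
  ⟨5, 16, 241321⟩, ⟨5, 16, 211324⟩, ⟨5, 16, 2321⟩, ⟨5, 16, 2123⟩, ⟨5, 15, 102320⟩, ⟨5, 16, 142521⟩,
  ⟨5, 15, 3121⟩, ⟨5, 16, 1234⟩, ⟨5, 15, 111233⟩, ⟨5, 16, 141430⟩, ⟨5, 15, 131231⟩, ⟨5, 15, 2131⟩,
  ⟨6, 20, 13151411⟩, ⟨6, 20, 11141513⟩, ⟨6, 19, 1113141311⟩, ⟨6, 19, 20131513⟩, ⟨6, 19, 21121311⟩,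
  ⟨6, 19, 24141211⟩, ⟨6, 19, 21111414⟩, ⟨6, 20, 211511⟩, ⟨6, 19, 13251211⟩, ⟨6, 19, 10211513⟩,
  ⟨6, 19, 11231312⟩, ⟨6, 19, 311311⟩, ⟨6, 19, 301215⟩, ⟨6, 19, 11122513⟩, ⟨6, 19, 13152110⟩,
  ⟨6, 19, 12132311⟩, ⟨6, 19, 212311⟩, ⟨6, 19, 202513⟩, ⟨6, 20, 3115⟩, ⟨6, 19, 4114⟩,
  ⟨6, 20, 111521⟩, ⟨6, 19, 13151320⟩, ⟨6, 19, 11131221⟩, ⟨6, 19, 11121424⟩, ⟨6, 19, 14141121⟩,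
  ⟨6, 19, 211221⟩, ⟨6, 19, 251320⟩, ⟨6, 19, 201325⟩, ⟨6, 20, 2521⟩, ⟨6, 20, 2125⟩, ⟨6, 19, 112321⟩,
  ⟨6, 19, 132520⟩, ⟨6, 19, 3121⟩, ⟨6, 20, 1531⟩, ⟨6, 19, 111331⟩, ⟨6, 19, 151230⟩, ⟨6, 19, 2131⟩,
  ⟨6, 19, 1441⟩, ⟨7, 23, 21131215⟩, ⟨7, 23, 11241412⟩, ⟨7, 23, 321215⟩, ⟨7, 23, 12142411⟩,
  ⟨7, 23, 15121321⟩, ⟨7, 23, 211321⟩, ⟨7, 23, 151232⟩]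

def splitTable : List SplitGroup := [
  ⟨50, 0, [
    ⟨1, 2, 0, 0, 50⟩, ⟨1, 3, 0, 0, 51⟩, ⟨2, 4, 0, 0, 4010⟩, ⟨2, 4, 0, 0, 3020⟩, ⟨2, 4, 0, 0, 2030⟩,
    ⟨2, 4, 0, 0, 1040⟩, ⟨2, 4, 0, 0, 50⟩, ⟨2, 5, 0, 0, 4111⟩, ⟨2, 5, 0, 0, 3121⟩,
    ⟨2, 5, 0, 0, 2131⟩, ⟨2, 5, 0, 0, 1141⟩, ⟨2, 5, 0, 0, 51⟩, ⟨2, 6, 0, 0, 4212⟩,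
    ⟨2, 6, 0, 0, 3222⟩, ⟨2, 6, 0, 0, 2232⟩, ⟨2, 6, 0, 0, 1242⟩, ⟨3, 8, 0, 0, 311211⟩,
    ⟨3, 8, 0, 0, 212211⟩, ⟨3, 8, 0, 0, 113211⟩, ⟨3, 8, 0, 0, 4110⟩, ⟨3, 8, 0, 0, 211221⟩,
    ⟨3, 8, 0, 0, 112221⟩, ⟨3, 8, 0, 0, 3121⟩, ⟨3, 8, 0, 0, 111231⟩, ⟨3, 8, 0, 0, 2131⟩,
    ⟨3, 8, 0, 0, 1041⟩, ⟨3, 9, 0, 0, 321312⟩, ⟨3, 9, 0, 0, 222312⟩, ⟨3, 9, 0, 0, 123312⟩,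
    ⟨3, 9, 0, 0, 4211⟩, ⟨3, 9, 0, 0, 221322⟩, ⟨3, 9, 0, 0, 122322⟩, ⟨3, 9, 0, 0, 3222⟩,
    ⟨3, 9, 0, 0, 121332⟩, ⟨3, 9, 0, 0, 2232⟩, ⟨3, 9, 0, 0, 1142⟩, ⟨3, 10, 0, 0, 231423⟩,
    ⟨3, 10, 0, 0, 3323⟩, ⟨3, 10, 0, 0, 2333⟩, ⟨4, 12, 0, 0, 22131311⟩, ⟨4, 12, 0, 0, 21121411⟩,
    ⟨4, 12, 0, 0, 11231311⟩, ⟨4, 12, 0, 0, 321311⟩, ⟨4, 12, 0, 0, 11132311⟩, ⟨4, 12, 0, 0, 212311⟩,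
    ⟨4, 12, 0, 0, 113311⟩, ⟨4, 12, 0, 0, 4111⟩, ⟨4, 12, 0, 0, 11131322⟩, ⟨4, 12, 0, 0, 11141221⟩,
    ⟨4, 12, 0, 0, 211221⟩, ⟨4, 12, 0, 0, 112321⟩, ⟨4, 12, 0, 0, 3221⟩, ⟨4, 12, 0, 0, 111332⟩,
    ⟨4, 12, 0, 0, 2132⟩, ⟨4, 12, 0, 0, 1141⟩, ⟨4, 13, 0, 0, 22131512⟩, ⟨4, 13, 0, 0, 24151412⟩,
    ⟨4, 13, 0, 0, 14251412⟩, ⟨4, 13, 0, 0, 12241514⟩, ⟨4, 13, 0, 0, 341412⟩,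
    ⟨4, 13, 0, 0, 14152412⟩, ⟨4, 13, 0, 0, 12142514⟩, ⟨4, 13, 0, 0, 222412⟩,
    ⟨4, 13, 0, 0, 12151322⟩, ⟨4, 13, 0, 0, 12141524⟩, ⟨4, 13, 0, 0, 221322⟩, ⟨4, 13, 0, 0, 122422⟩,
    ⟨4, 13, 0, 0, 3322⟩, ⟨4, 13, 0, 0, 121434⟩, ⟨4, 13, 0, 0, 2233⟩, ⟨5, 16, 0, 0, 1213141312⟩,
    ⟨5, 16, 0, 0, 21141311⟩, ⟨5, 16, 0, 0, 21131411⟩, ⟨5, 16, 0, 0, 11241311⟩,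
    ⟨5, 16, 0, 0, 341312⟩, ⟨5, 16, 0, 0, 321314⟩, ⟨5, 16, 0, 0, 301414⟩, ⟨5, 16, 0, 0, 11132411⟩,
    ⟨5, 16, 0, 0, 212411⟩, ⟨5, 16, 0, 0, 11131421⟩, ⟨5, 16, 0, 0, 11141321⟩, ⟨5, 16, 0, 0, 211321⟩,
    ⟨5, 16, 0, 0, 112421⟩, ⟨5, 16, 0, 0, 3222⟩, ⟨5, 16, 0, 0, 121334⟩, ⟨5, 16, 0, 0, 141430⟩,
    ⟨5, 16, 0, 0, 141332⟩, ⟨5, 16, 0, 0, 2232⟩, ⟨5, 17, 0, 0, 311515⟩, ⟨5, 17, 0, 0, 251422⟩,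
    ⟨5, 17, 0, 0, 221425⟩, ⟨5, 17, 0, 0, 151531⟩, ⟨6, 20, 0, 0, 1214151412⟩,
    ⟨6, 20, 0, 0, 22131412⟩, ⟨6, 20, 0, 0, 25151312⟩, ⟨6, 20, 0, 0, 22121515⟩,
    ⟨6, 20, 0, 0, 12241413⟩, ⟨6, 20, 0, 0, 321412⟩, ⟨6, 20, 0, 0, 13142412⟩, ⟨6, 20, 0, 0, 222412⟩,
    ⟨6, 20, 0, 0, 4215⟩, ⟨6, 20, 0, 0, 12141322⟩, ⟨6, 20, 0, 0, 12131525⟩, ⟨6, 20, 0, 0, 15151222⟩,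
    ⟨6, 20, 0, 0, 221322⟩, ⟨6, 20, 0, 0, 122422⟩, ⟨6, 20, 0, 0, 3222⟩, ⟨6, 20, 0, 0, 121432⟩,
    ⟨6, 20, 0, 0, 2232⟩, ⟨6, 20, 0, 0, 1542⟩, ⟨7, 24, 0, 0, 12251513⟩, ⟨7, 24, 0, 0, 13152512⟩,
    ⟨7, 24, 0, 0, 221422⟩]⟩,
  ⟨140, 0, [
    ⟨1, 2, 0, 1, 40⟩, ⟨1, 3, 1, 1, 41⟩, ⟨2, 4, 0, 1, 3010⟩, ⟨2, 4, 0, 1, 2020⟩, ⟨2, 4, 0, 1, 1030⟩,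
    ⟨2, 4, 0, 1, 40⟩, ⟨2, 5, 1, 1, 3111⟩, ⟨2, 5, 1, 1, 2121⟩, ⟨2, 5, 1, 1, 1131⟩, ⟨2, 5, 1, 1, 41⟩,
    ⟨2, 6, 2, 1, 3212⟩, ⟨2, 6, 2, 1, 2222⟩, ⟨2, 6, 2, 1, 1232⟩, ⟨2, 6, 2, 1, 42⟩,
    ⟨3, 8, 1, 1, 211211⟩, ⟨3, 8, 1, 1, 112211⟩, ⟨3, 8, 1, 1, 3110⟩, ⟨3, 8, 1, 1, 111221⟩,
    ⟨3, 8, 1, 1, 2121⟩, ⟨3, 8, 1, 1, 1131⟩, ⟨3, 8, 0, 1, 41⟩, ⟨3, 9, 2, 1, 221312⟩,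
    ⟨3, 9, 2, 1, 122312⟩, ⟨3, 9, 2, 1, 3211⟩, ⟨3, 9, 2, 1, 121322⟩, ⟨3, 9, 2, 1, 2222⟩,
    ⟨3, 9, 2, 1, 1232⟩, ⟨3, 9, 1, 1, 42⟩, ⟨3, 10, 3, 1, 241513⟩, ⟨3, 10, 3, 1, 3413⟩,
    ⟨3, 10, 3, 1, 131423⟩, ⟨3, 10, 3, 1, 2323⟩, ⟨3, 10, 3, 1, 1333⟩, ⟨4, 12, 2, 1, 12131311⟩,
    ⟨4, 12, 1, 1, 11121411⟩, ⟨4, 12, 1, 1, 12151311⟩, ⟨4, 12, 1, 1, 221311⟩, ⟨4, 12, 1, 1, 112311⟩,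
    ⟨4, 12, 1, 1, 3111⟩, ⟨4, 12, 1, 1, 111221⟩, ⟨4, 12, 1, 1, 2224⟩, ⟨4, 12, 2, 1, 2221⟩,
    ⟨4, 12, 1, 1, 2321⟩, ⟨4, 12, 1, 1, 1132⟩, ⟨4, 12, 1, 1, 1231⟩, ⟨4, 12, 1, 1, 41⟩,
    ⟨4, 13, 2, 1, 12131512⟩, ⟨4, 13, 4, 1, 14151412⟩, ⟨4, 13, 2, 1, 231412⟩, ⟨4, 13, 2, 1, 122412⟩,
    ⟨4, 13, 2, 1, 3412⟩, ⟨4, 13, 2, 1, 121322⟩, ⟨4, 13, 2, 1, 2325⟩, ⟨4, 13, 3, 1, 2322⟩,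
    ⟨4, 13, 2, 1, 2422⟩, ⟨4, 13, 2, 1, 1233⟩, ⟨5, 16, 1, 1, 11141311⟩, ⟨5, 16, 1, 1, 11131411⟩,
    ⟨5, 16, 4, 1, 221311⟩, ⟨5, 16, 1, 1, 241311⟩, ⟨5, 16, 2, 1, 221314⟩, ⟨5, 16, 0, 1, 201414⟩,
    ⟨5, 16, 1, 1, 221411⟩, ⟨5, 16, 1, 1, 112411⟩, ⟨5, 16, 4, 1, 3114⟩, ⟨5, 16, 2, 1, 3312⟩,
    ⟨5, 16, 1, 1, 111321⟩, ⟨5, 16, 0, 1, 151520⟩, ⟨5, 16, 1, 1, 2225⟩, ⟨5, 16, 3, 1, 2221⟩,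
    ⟨5, 16, 1, 1, 2421⟩, ⟨5, 16, 2, 1, 2222⟩, ⟨5, 16, 4, 1, 1430⟩, ⟨5, 16, 2, 1, 1232⟩,
    ⟨5, 17, 1, 1, 211515⟩, ⟨5, 17, 5, 1, 3215⟩, ⟨5, 17, 5, 1, 151422⟩, ⟨5, 17, 2, 1, 121425⟩,
    ⟨5, 17, 4, 1, 2325⟩, ⟨5, 17, 5, 1, 1531⟩, ⟨6, 20, 2, 1, 12131412⟩, ⟨6, 20, 5, 1, 15151312⟩,
    ⟨6, 20, 2, 1, 12121515⟩, ⟨6, 20, 5, 1, 231315⟩, ⟨6, 20, 2, 1, 221412⟩, ⟨6, 20, 2, 1, 122412⟩,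
    ⟨6, 20, 2, 1, 3215⟩, ⟨6, 20, 2, 1, 3312⟩, ⟨6, 20, 5, 1, 151222⟩, ⟨6, 20, 2, 1, 121322⟩,
    ⟨6, 20, 2, 1, 2222⟩, ⟨6, 20, 2, 1, 1232⟩, ⟨6, 20, 5, 1, 42⟩, ⟨7, 24, 5, 1, 13151513⟩,
    ⟨7, 24, 2, 1, 231512⟩, ⟨7, 24, 3, 1, 152512⟩, ⟨7, 24, 5, 1, 142512⟩, ⟨7, 24, 2, 1, 121422⟩,
    ⟨7, 24, 4, 1, 2322⟩]⟩,
  ⟨230, 0, [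
    ⟨1, 2, 0, 1, 30⟩, ⟨1, 3, 2, 1, 31⟩, ⟨2, 4, 0, 1, 2010⟩, ⟨2, 4, 0, 2, 2110⟩, ⟨2, 4, 0, 1, 1020⟩,
    ⟨2, 4, 0, 2, 1120⟩, ⟨2, 4, 0, 2, 30⟩, ⟨2, 5, 2, 1, 2111⟩, ⟨2, 5, 2, 2, 2211⟩,
    ⟨2, 5, 2, 1, 1121⟩, ⟨2, 5, 2, 2, 1221⟩, ⟨2, 5, 2, 2, 31⟩, ⟨2, 6, 4, 1, 2212⟩,
    ⟨2, 6, 4, 2, 2312⟩, ⟨2, 6, 4, 1, 1222⟩, ⟨2, 6, 4, 2, 1322⟩, ⟨2, 6, 4, 2, 32⟩,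
    ⟨3, 8, 2, 1, 111211⟩, ⟨3, 8, 3, 2, 121211⟩, ⟨3, 8, 2, 2, 121311⟩, ⟨3, 8, 2, 1, 2110⟩,
    ⟨3, 8, 2, 2, 2211⟩, ⟨3, 8, 2, 1, 1121⟩, ⟨3, 8, 2, 2, 1221⟩, ⟨3, 8, 1, 2, 31⟩,
    ⟨3, 9, 4, 1, 121312⟩, ⟨3, 9, 5, 2, 131312⟩, ⟨3, 9, 4, 2, 131412⟩, ⟨3, 9, 4, 1, 2211⟩,
    ⟨3, 9, 4, 2, 2312⟩, ⟨3, 9, 4, 1, 1222⟩, ⟨3, 9, 4, 2, 1322⟩, ⟨3, 9, 3, 2, 32⟩,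
    ⟨3, 10, 6, 2, 141513⟩, ⟨3, 10, 6, 2, 2413⟩, ⟨3, 10, 6, 1, 1323⟩, ⟨3, 10, 6, 2, 1423⟩,
    ⟨3, 10, 6, 1, 33⟩, ⟨4, 12, 2, 2, 121311⟩, ⟨4, 12, 2, 1, 2111⟩, ⟨4, 12, 3, 2, 2311⟩,
    ⟨4, 12, 2, 2, 2411⟩, ⟨4, 12, 2, 2, 1224⟩, ⟨4, 12, 2, 1, 1221⟩, ⟨4, 12, 3, 2, 1221⟩,
    ⟨4, 12, 2, 2, 31⟩, ⟨4, 13, 4, 2, 131412⟩, ⟨4, 13, 4, 1, 2412⟩, ⟨4, 13, 5, 2, 2412⟩,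
    ⟨4, 13, 4, 2, 2512⟩, ⟨4, 13, 4, 2, 1325⟩, ⟨4, 13, 4, 1, 1322⟩, ⟨4, 13, 5, 2, 1322⟩,
    ⟨4, 13, 6, 2, 34⟩, ⟨4, 13, 4, 1, 33⟩, ⟨5, 16, 2, 1, 141311⟩, ⟨5, 16, 5, 2, 121311⟩,
    ⟨5, 16, 4, 1, 121314⟩, ⟨5, 16, 0, 1, 101414⟩, ⟨5, 16, 2, 2, 121411⟩, ⟨5, 16, 4, 2, 2114⟩,
    ⟨5, 16, 2, 1, 2411⟩, ⟨5, 16, 4, 2, 2311⟩, ⟨5, 16, 2, 1, 2315⟩, ⟨5, 16, 2, 2, 2511⟩,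
    ⟨5, 16, 2, 2, 1225⟩, ⟨5, 16, 2, 1, 1321⟩, ⟨5, 16, 4, 2, 1221⟩, ⟨5, 16, 4, 2, 1520⟩,
    ⟨5, 16, 5, 2, 34⟩, ⟨5, 16, 8, 2, 30⟩, ⟨5, 16, 7, 2, 32⟩, ⟨5, 16, 4, 1, 32⟩,
    ⟨5, 17, 2, 1, 111515⟩, ⟨5, 17, 7, 2, 131515⟩, ⟨5, 17, 6, 2, 2215⟩, ⟨5, 17, 10, 1, 1422⟩,
    ⟨5, 17, 4, 1, 1425⟩, ⟨5, 17, 6, 2, 1325⟩, ⟨5, 17, 10, 2, 31⟩, ⟨6, 20, 10, 1, 151312⟩,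
    ⟨6, 20, 7, 2, 131315⟩, ⟨6, 20, 4, 1, 121412⟩, ⟨6, 20, 4, 2, 131412⟩, ⟨6, 20, 4, 1, 2215⟩,
    ⟨6, 20, 4, 2, 2312⟩, ⟨6, 20, 10, 2, 1222⟩, ⟨6, 20, 4, 1, 1222⟩, ⟨6, 20, 4, 2, 1322⟩,
    ⟨6, 20, 6, 2, 32⟩, ⟨6, 20, 4, 1, 32⟩, ⟨7, 24, 4, 2, 131512⟩, ⟨7, 24, 6, 2, 2412⟩,
    ⟨7, 24, 4, 1, 1422⟩, ⟨7, 24, 6, 2, 1322⟩]⟩,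
  ⟨320, 0, [
    ⟨1, 2, 0, 1, 20⟩, ⟨1, 3, 3, 1, 21⟩, ⟨2, 4, 0, 1, 1010⟩, ⟨2, 4, 0, 2, 1110⟩, ⟨2, 4, 0, 2, 20⟩,
    ⟨2, 5, 3, 1, 1111⟩, ⟨2, 5, 3, 2, 1211⟩, ⟨2, 5, 3, 2, 21⟩, ⟨2, 6, 6, 1, 1212⟩,
    ⟨2, 6, 6, 2, 1312⟩, ⟨2, 6, 6, 2, 22⟩, ⟨3, 8, 3, 1, 1110⟩, ⟨3, 8, 4, 3, 1311⟩,
    ⟨3, 8, 3, 2, 1211⟩, ⟨3, 8, 4, 3, 21⟩, ⟨3, 8, 2, 2, 21⟩, ⟨3, 9, 6, 1, 1211⟩, ⟨3, 9, 7, 3, 1412⟩,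
    ⟨3, 9, 6, 2, 1312⟩, ⟨3, 9, 7, 3, 22⟩, ⟨3, 9, 5, 2, 22⟩, ⟨3, 10, 10, 3, 1513⟩,
    ⟨3, 10, 9, 2, 1413⟩, ⟨3, 10, 9, 2, 23⟩, ⟨4, 12, 3, 1, 1111⟩, ⟨4, 12, 3, 2, 1311⟩,
    ⟨4, 12, 4, 3, 1311⟩, ⟨4, 12, 5, 3, 24⟩, ⟨4, 12, 7, 3, 21⟩, ⟨4, 12, 6, 3, 22⟩,
    ⟨4, 12, 3, 2, 21⟩, ⟨4, 13, 6, 2, 1412⟩, ⟨4, 13, 7, 3, 1412⟩, ⟨4, 13, 6, 2, 25⟩,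
    ⟨4, 13, 10, 3, 22⟩, ⟨4, 13, 7, 2, 22⟩, ⟨5, 16, 0, 1, 1414⟩, ⟨5, 16, 4, 2, 1114⟩,
    ⟨5, 16, 3, 2, 1411⟩, ⟨5, 16, 5, 3, 1311⟩, ⟨5, 16, 3, 2, 1315⟩, ⟨5, 16, 5, 3, 25⟩,
    ⟨5, 16, 3, 2, 25⟩, ⟨5, 16, 5, 2, 21⟩, ⟨5, 16, 8, 3, 20⟩, ⟨5, 17, 3, 1, 1515⟩,
    ⟨5, 17, 7, 2, 1215⟩, ⟨5, 17, 12, 2, 1512⟩, ⟨5, 17, 11, 3, 1415⟩, ⟨5, 17, 8, 2, 25⟩,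
    ⟨5, 17, 11, 3, 21⟩, ⟨6, 20, 6, 1, 1215⟩, ⟨6, 20, 12, 3, 1312⟩, ⟨6, 20, 7, 3, 1412⟩,
    ⟨6, 20, 6, 2, 1312⟩, ⟨6, 20, 8, 3, 22⟩, ⟨6, 20, 6, 2, 22⟩, ⟨7, 24, 6, 2, 1512⟩,
    ⟨7, 24, 8, 3, 1412⟩, ⟨7, 24, 8, 2, 22⟩]⟩,
  ⟨40, 0, [
    ⟨1, 2, 0, 0, 40⟩, ⟨1, 3, 0, 0, 41⟩, ⟨2, 5, 0, 0, 3111⟩, ⟨2, 5, 0, 0, 2121⟩, ⟨2, 5, 0, 0, 1131⟩,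
    ⟨2, 5, 0, 0, 41⟩, ⟨2, 6, 0, 0, 3212⟩, ⟨2, 6, 0, 0, 2222⟩, ⟨2, 6, 0, 0, 1232⟩, ⟨2, 6, 0, 0, 42⟩,
    ⟨3, 9, 0, 0, 221312⟩, ⟨3, 9, 0, 0, 122312⟩, ⟨3, 9, 0, 0, 3212⟩, ⟨3, 9, 0, 0, 121322⟩,
    ⟨3, 9, 0, 0, 2222⟩, ⟨3, 9, 0, 0, 1232⟩, ⟨3, 9, 0, 0, 43⟩, ⟨3, 10, 0, 0, 231413⟩,
    ⟨3, 10, 0, 0, 132413⟩, ⟨3, 10, 0, 0, 3313⟩, ⟨3, 10, 0, 0, 131423⟩, ⟨3, 10, 0, 0, 2323⟩,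
    ⟨3, 10, 0, 0, 1333⟩, ⟨4, 13, 0, 0, 12141412⟩, ⟨4, 13, 0, 0, 221412⟩, ⟨4, 13, 0, 0, 122412⟩,
    ⟨4, 13, 0, 0, 3312⟩, ⟨4, 13, 0, 0, 121422⟩, ⟨4, 13, 0, 0, 2222⟩, ⟨4, 13, 0, 0, 1233⟩,
    ⟨4, 14, 0, 0, 241513⟩, ⟨4, 14, 0, 0, 131524⟩, ⟨4, 14, 0, 0, 2423⟩, ⟨4, 14, 0, 0, 2324⟩,
    ⟨5, 17, 0, 0, 13151412⟩, ⟨5, 17, 0, 0, 12141513⟩, ⟨5, 17, 0, 0, 211414⟩, ⟨5, 17, 0, 0, 231412⟩,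
    ⟨5, 17, 0, 0, 122512⟩, ⟨5, 17, 0, 0, 3513⟩, ⟨5, 17, 0, 0, 141421⟩, ⟨5, 17, 0, 0, 121423⟩,
    ⟨5, 17, 0, 0, 2422⟩, ⟨5, 17, 0, 0, 2224⟩, ⟨5, 17, 0, 0, 1335⟩]⟩,
  ⟨130, 0, [
    ⟨1, 2, 0, 1, 30⟩, ⟨1, 3, 1, 1, 31⟩, ⟨2, 5, 1, 1, 2111⟩, ⟨2, 5, 1, 1, 1121⟩, ⟨2, 5, 1, 1, 31⟩,
    ⟨2, 6, 2, 1, 2212⟩, ⟨2, 6, 2, 1, 1222⟩, ⟨2, 6, 2, 1, 32⟩, ⟨3, 9, 2, 1, 121312⟩,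
    ⟨3, 9, 2, 1, 2212⟩, ⟨3, 9, 2, 1, 1222⟩, ⟨3, 9, 2, 1, 32⟩, ⟨3, 10, 3, 1, 131413⟩,
    ⟨3, 10, 3, 1, 2313⟩, ⟨3, 10, 3, 1, 1323⟩, ⟨3, 10, 3, 1, 33⟩, ⟨4, 13, 2, 1, 121412⟩,
    ⟨4, 13, 2, 1, 2312⟩, ⟨4, 13, 2, 1, 1222⟩, ⟨4, 13, 2, 1, 33⟩, ⟨4, 14, 4, 1, 141513⟩,
    ⟨4, 14, 3, 1, 2513⟩, ⟨4, 14, 4, 1, 2414⟩, ⟨4, 14, 4, 1, 1423⟩, ⟨4, 14, 3, 1, 1324⟩,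
    ⟨5, 17, 2, 1, 141513⟩, ⟨5, 17, 1, 1, 111414⟩, ⟨5, 17, 3, 1, 131412⟩, ⟨5, 17, 1, 1, 151511⟩,
    ⟨5, 17, 4, 1, 2214⟩, ⟨5, 17, 4, 1, 2412⟩, ⟨5, 17, 2, 1, 2415⟩, ⟨5, 17, 2, 1, 2512⟩,
    ⟨5, 17, 4, 1, 1421⟩, ⟨5, 17, 2, 1, 1423⟩, ⟨5, 17, 4, 1, 1323⟩, ⟨5, 17, 2, 1, 1224⟩,
    ⟨5, 17, 3, 1, 35⟩]⟩,
  ⟨41, 2, [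
    ⟨2, 6, 0, 0, 3212⟩, ⟨2, 6, 0, 0, 2222⟩, ⟨2, 6, 0, 0, 1232⟩, ⟨2, 6, 0, 0, 42⟩,
    ⟨3, 9, 0, 0, 221312⟩, ⟨3, 9, 0, 0, 122312⟩, ⟨3, 9, 0, 0, 3211⟩, ⟨3, 9, 0, 0, 121322⟩,
    ⟨3, 9, 0, 0, 2222⟩, ⟨3, 9, 0, 0, 1232⟩, ⟨4, 12, 0, 0, 12131311⟩, ⟨4, 12, 0, 0, 221311⟩,
    ⟨4, 12, 0, 0, 2221⟩, ⟨4, 12, 0, 0, 1231⟩, ⟨4, 13, 0, 0, 12131512⟩, ⟨4, 13, 0, 0, 241514⟩,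
    ⟨4, 13, 0, 0, 122412⟩, ⟨4, 13, 0, 0, 121322⟩, ⟨4, 13, 0, 0, 2422⟩, ⟨4, 13, 0, 0, 1233⟩,
    ⟨5, 16, 0, 0, 221314⟩, ⟨5, 16, 0, 0, 151520⟩, ⟨5, 16, 0, 0, 2222⟩, ⟨5, 16, 0, 0, 1232⟩,
    ⟨5, 17, 0, 0, 121425⟩, ⟨6, 20, 0, 0, 12131412⟩, ⟨6, 20, 0, 0, 12121515⟩, ⟨6, 20, 0, 0, 221412⟩,
    ⟨6, 20, 0, 0, 122412⟩, ⟨6, 20, 0, 0, 3215⟩, ⟨6, 20, 0, 0, 121322⟩, ⟨6, 20, 0, 0, 2222⟩,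
    ⟨6, 20, 0, 0, 1232⟩, ⟨7, 24, 0, 0, 251513⟩, ⟨7, 24, 0, 0, 121422⟩]⟩,
  ⟨220, 0, [
    ⟨1, 2, 0, 1, 20⟩, ⟨1, 3, 2, 1, 21⟩, ⟨2, 5, 2, 1, 1111⟩, ⟨2, 5, 2, 2, 1211⟩, ⟨2, 5, 2, 2, 21⟩,
    ⟨2, 6, 4, 1, 1212⟩, ⟨2, 6, 4, 2, 1312⟩, ⟨2, 6, 4, 2, 22⟩, ⟨3, 9, 4, 1, 1212⟩,
    ⟨3, 9, 4, 2, 1312⟩, ⟨3, 9, 4, 2, 22⟩, ⟨3, 10, 6, 1, 1313⟩, ⟨3, 10, 6, 2, 1413⟩,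
    ⟨3, 10, 6, 2, 23⟩, ⟨4, 13, 4, 2, 1312⟩, ⟨4, 13, 4, 2, 25⟩, ⟨4, 13, 6, 2, 22⟩,
    ⟨4, 13, 4, 1, 22⟩, ⟨4, 13, 5, 2, 23⟩, ⟨4, 14, 7, 2, 1513⟩, ⟨4, 14, 7, 2, 1414⟩,
    ⟨4, 14, 8, 2, 24⟩, ⟨4, 14, 8, 1, 23⟩, ⟨4, 14, 6, 1, 24⟩, ⟨5, 17, 2, 1, 1414⟩,
    ⟨5, 17, 5, 2, 1214⟩, ⟨5, 17, 6, 1, 1412⟩, ⟨5, 17, 7, 2, 1412⟩, ⟨5, 17, 5, 2, 1511⟩,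
    ⟨5, 17, 8, 2, 21⟩, ⟨5, 17, 6, 2, 23⟩, ⟨5, 17, 4, 1, 24⟩]⟩,
  ⟨410, 0, [
    ⟨1, 2, 0, 1, 10⟩, ⟨1, 3, 4, 1, 11⟩, ⟨2, 4, 0, 2, 10⟩, ⟨2, 5, 4, 2, 11⟩, ⟨2, 6, 8, 2, 12⟩,
    ⟨3, 8, 4, 1, 10⟩, ⟨3, 8, 5, 3, 11⟩, ⟨3, 8, 3, 2, 11⟩, ⟨3, 9, 8, 1, 11⟩, ⟨3, 9, 9, 3, 12⟩,
    ⟨3, 9, 7, 2, 12⟩, ⟨3, 10, 13, 3, 13⟩, ⟨3, 10, 12, 2, 13⟩, ⟨4, 12, 8, 4, 11⟩, ⟨4, 12, 5, 3, 11⟩,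
    ⟨4, 12, 4, 2, 11⟩, ⟨4, 13, 12, 4, 12⟩, ⟨4, 13, 9, 3, 12⟩, ⟨4, 13, 8, 2, 15⟩, ⟨5, 16, 4, 2, 14⟩,
    ⟨5, 16, 9, 4, 11⟩, ⟨5, 16, 6, 3, 11⟩, ⟨5, 16, 8, 3, 10⟩, ⟨5, 17, 8, 2, 15⟩, ⟨5, 17, 12, 3, 11⟩,
    ⟨6, 20, 11, 4, 12⟩, ⟨6, 20, 9, 3, 12⟩, ⟨6, 20, 8, 2, 12⟩, ⟨7, 24, 10, 3, 12⟩]⟩,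
  ⟨41, 1, [
    ⟨1, 3, 0, 0, 41⟩, ⟨2, 5, 0, 0, 3111⟩, ⟨2, 5, 0, 0, 2121⟩, ⟨2, 5, 0, 0, 1131⟩, ⟨2, 5, 0, 0, 41⟩,
    ⟨3, 8, 0, 0, 211211⟩, ⟨3, 8, 0, 0, 112211⟩, ⟨3, 8, 0, 0, 3110⟩, ⟨3, 8, 0, 0, 111221⟩,
    ⟨3, 8, 0, 0, 2121⟩, ⟨3, 8, 0, 0, 1131⟩, ⟨3, 9, 0, 0, 42⟩, ⟨4, 12, 0, 0, 11121411⟩,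
    ⟨4, 12, 0, 0, 231311⟩, ⟨4, 12, 0, 0, 112311⟩, ⟨4, 12, 0, 0, 3111⟩, ⟨4, 12, 0, 0, 111221⟩,
    ⟨4, 12, 0, 0, 2321⟩, ⟨4, 12, 0, 0, 1132⟩, ⟨4, 12, 0, 0, 41⟩, ⟨5, 16, 0, 0, 11141311⟩,
    ⟨5, 16, 0, 0, 11131411⟩, ⟨5, 16, 0, 0, 241311⟩, ⟨5, 16, 0, 0, 112411⟩, ⟨5, 16, 0, 0, 111321⟩,
    ⟨5, 16, 0, 0, 2421⟩, ⟨5, 17, 0, 0, 211515⟩]⟩,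
  ⟨131, 2, [
    ⟨2, 6, 2, 1, 2212⟩, ⟨2, 6, 2, 1, 1222⟩, ⟨2, 6, 2, 1, 32⟩, ⟨3, 9, 2, 1, 121312⟩,
    ⟨3, 9, 2, 1, 2211⟩, ⟨3, 9, 2, 1, 1222⟩, ⟨3, 9, 1, 1, 32⟩, ⟨4, 12, 1, 1, 121311⟩,
    ⟨4, 13, 2, 1, 131512⟩, ⟨4, 13, 2, 1, 2412⟩, ⟨4, 13, 2, 1, 1322⟩, ⟨4, 13, 2, 1, 33⟩,
    ⟨5, 16, 4, 1, 121311⟩, ⟨5, 16, 2, 1, 121314⟩, ⟨5, 16, 1, 1, 121411⟩, ⟨5, 16, 1, 1, 1225⟩,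
    ⟨5, 16, 3, 1, 1221⟩, ⟨5, 16, 2, 1, 1222⟩, ⟨5, 16, 2, 1, 32⟩, ⟨5, 17, 5, 1, 2215⟩,
    ⟨5, 17, 2, 1, 1425⟩, ⟨6, 20, 2, 1, 121412⟩, ⟨6, 20, 2, 1, 2412⟩, ⟨6, 20, 2, 1, 2215⟩,
    ⟨6, 20, 2, 1, 1222⟩, ⟨6, 20, 2, 1, 32⟩, ⟨7, 24, 2, 1, 1422⟩]⟩,
  ⟨500, 0, [
    ⟨1, 2, 0, 1, 0⟩, ⟨1, 3, 5, 1, 0⟩, ⟨2, 4, 0, 2, 0⟩, ⟨2, 5, 5, 2, 0⟩, ⟨2, 6, 10, 2, 0⟩,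
    ⟨3, 8, 6, 3, 0⟩, ⟨3, 8, 4, 2, 0⟩, ⟨3, 9, 11, 3, 0⟩, ⟨3, 9, 9, 2, 0⟩, ⟨3, 10, 16, 3, 0⟩,
    ⟨3, 10, 15, 2, 0⟩, ⟨4, 12, 9, 4, 0⟩, ⟨4, 12, 5, 2, 0⟩, ⟨4, 12, 6, 3, 0⟩, ⟨4, 13, 14, 4, 0⟩,
    ⟨4, 13, 11, 3, 0⟩, ⟨5, 16, 14, 5, 0⟩, ⟨5, 16, 10, 4, 0⟩, ⟨5, 16, 7, 3, 0⟩, ⟨5, 17, 13, 3, 0⟩,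
    ⟨6, 20, 17, 5, 0⟩, ⟨6, 20, 13, 4, 0⟩, ⟨6, 20, 11, 3, 0⟩, ⟨6, 20, 10, 2, 0⟩, ⟨7, 24, 20, 4, 0⟩,
    ⟨7, 24, 12, 3, 0⟩]⟩,
  ⟨131, 1, [
    ⟨1, 3, 1, 1, 31⟩, ⟨2, 5, 1, 1, 2111⟩, ⟨2, 5, 1, 1, 1121⟩, ⟨2, 5, 1, 1, 31⟩,
    ⟨3, 8, 1, 1, 111211⟩, ⟨3, 8, 1, 1, 2110⟩, ⟨3, 8, 1, 1, 1121⟩, ⟨3, 8, 0, 1, 31⟩,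
    ⟨4, 12, 1, 1, 121411⟩, ⟨4, 12, 1, 1, 2111⟩, ⟨4, 12, 1, 1, 1221⟩, ⟨4, 12, 1, 1, 31⟩,
    ⟨5, 16, 1, 1, 141311⟩, ⟨5, 16, 1, 1, 131411⟩, ⟨5, 16, 4, 1, 2114⟩, ⟨5, 16, 1, 1, 2411⟩,
    ⟨5, 16, 1, 1, 1321⟩, ⟨5, 16, 4, 1, 1520⟩, ⟨5, 17, 1, 1, 111515⟩]⟩,
  ⟨30, 0, [
    ⟨1, 2, 0, 0, 30⟩, ⟨1, 3, 0, 0, 31⟩, ⟨2, 6, 0, 0, 2212⟩, ⟨2, 6, 0, 0, 1222⟩, ⟨2, 6, 0, 0, 32⟩,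
    ⟨3, 10, 0, 0, 131413⟩, ⟨3, 10, 0, 0, 2313⟩, ⟨3, 10, 0, 0, 1323⟩, ⟨3, 10, 0, 0, 33⟩,
    ⟨4, 14, 0, 0, 131413⟩, ⟨4, 14, 0, 0, 2413⟩, ⟨4, 14, 0, 0, 2314⟩, ⟨4, 14, 0, 0, 1423⟩,
    ⟨4, 14, 0, 0, 1324⟩, ⟨5, 18, 0, 0, 131513⟩, ⟨5, 18, 0, 0, 2513⟩, ⟨5, 18, 0, 0, 1325⟩]⟩,
  ⟨221, 2, [
    ⟨2, 5, 2, 2, 1211⟩, ⟨2, 6, 4, 1, 1212⟩, ⟨2, 6, 4, 2, 22⟩, ⟨3, 8, 2, 2, 1211⟩,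
    ⟨3, 9, 4, 1, 1211⟩, ⟨3, 9, 3, 2, 22⟩, ⟨4, 12, 2, 2, 1311⟩, ⟨5, 16, 2, 2, 1411⟩,
    ⟨5, 16, 4, 2, 1311⟩, ⟨5, 16, 2, 2, 25⟩, ⟨5, 16, 4, 2, 21⟩, ⟨5, 17, 6, 2, 1215⟩,
    ⟨6, 20, 4, 1, 1412⟩, ⟨6, 20, 4, 1, 1215⟩, ⟨6, 20, 4, 1, 22⟩, ⟨6, 20, 6, 2, 22⟩]⟩,
  ⟨221, 3, [
    ⟨2, 6, 4, 2, 1312⟩, ⟨3, 9, 4, 2, 1312⟩, ⟨3, 10, 6, 1, 23⟩, ⟨4, 13, 4, 2, 1412⟩,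
    ⟨4, 13, 4, 2, 25⟩, ⟨4, 13, 5, 2, 22⟩, ⟨4, 13, 4, 1, 22⟩, ⟨5, 16, 2, 2, 1315⟩,
    ⟨5, 16, 2, 1, 21⟩, ⟨5, 17, 10, 1, 1512⟩, ⟨5, 17, 6, 2, 25⟩, ⟨6, 20, 4, 2, 1312⟩,
    ⟨6, 20, 4, 2, 22⟩, ⟨7, 24, 4, 2, 1512⟩, ⟨7, 24, 6, 2, 1412⟩, ⟨7, 24, 6, 2, 22⟩]⟩,
  ⟨32, 3, [
    ⟨2, 5, 0, 0, 2211⟩, ⟨2, 6, 0, 0, 1322⟩, ⟨3, 8, 0, 0, 121211⟩, ⟨3, 9, 0, 0, 2312⟩,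
    ⟨3, 9, 0, 0, 1322⟩, ⟨4, 12, 0, 0, 121311⟩, ⟨4, 12, 0, 0, 2311⟩, ⟨4, 12, 0, 0, 1221⟩,
    ⟨5, 16, 0, 0, 141312⟩, ⟨5, 16, 0, 0, 121411⟩, ⟨5, 16, 0, 0, 2411⟩, ⟨5, 16, 0, 0, 1421⟩,
    ⟨5, 16, 0, 0, 1322⟩, ⟨5, 16, 0, 0, 34⟩, ⟨6, 20, 0, 0, 131515⟩, ⟨6, 20, 0, 0, 1322⟩]⟩,
  ⟨32, 4, [
    ⟨2, 6, 0, 0, 2312⟩, ⟨3, 9, 0, 0, 131312⟩, ⟨3, 10, 0, 0, 1423⟩, ⟨4, 13, 0, 0, 131412⟩,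
    ⟨4, 13, 0, 0, 2412⟩, ⟨4, 13, 0, 0, 1322⟩, ⟨4, 13, 0, 0, 34⟩, ⟨5, 16, 0, 0, 141311⟩,
    ⟨5, 16, 0, 0, 2312⟩, ⟨5, 16, 0, 0, 1221⟩, ⟨5, 16, 0, 0, 1520⟩, ⟨5, 16, 0, 0, 30⟩,
    ⟨6, 20, 0, 0, 131412⟩, ⟨6, 20, 0, 0, 2312⟩, ⟨6, 20, 0, 0, 32⟩, ⟨7, 24, 0, 0, 131512⟩]⟩,
  ⟨310, 0, [
    ⟨1, 2, 0, 1, 10⟩, ⟨1, 3, 3, 1, 11⟩, ⟨2, 5, 3, 2, 11⟩, ⟨2, 6, 6, 2, 12⟩, ⟨3, 9, 7, 3, 12⟩,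
    ⟨3, 9, 6, 2, 12⟩, ⟨3, 10, 10, 3, 13⟩, ⟨3, 10, 9, 2, 13⟩, ⟨4, 13, 8, 3, 12⟩, ⟨4, 13, 6, 2, 12⟩,
    ⟨4, 14, 12, 3, 14⟩, ⟨4, 14, 11, 2, 13⟩, ⟨4, 14, 10, 2, 14⟩, ⟨5, 17, 6, 2, 14⟩,
    ⟨5, 17, 9, 3, 11⟩]⟩,
  ⟨400, 0, [
    ⟨1, 2, 0, 1, 0⟩, ⟨1, 3, 4, 1, 0⟩, ⟨2, 5, 4, 2, 0⟩, ⟨2, 6, 8, 2, 0⟩, ⟨3, 9, 9, 3, 0⟩,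
    ⟨3, 9, 8, 2, 0⟩, ⟨3, 10, 13, 3, 0⟩, ⟨3, 10, 12, 2, 0⟩, ⟨4, 13, 12, 4, 0⟩, ⟨4, 13, 10, 3, 0⟩,
    ⟨4, 13, 8, 2, 0⟩, ⟨4, 14, 16, 3, 0⟩, ⟨4, 14, 14, 2, 0⟩, ⟨5, 17, 14, 4, 0⟩, ⟨5, 17, 10, 3, 0⟩]⟩,
  ⟨31, 2, [
    ⟨2, 6, 0, 0, 2212⟩, ⟨2, 6, 0, 0, 1222⟩, ⟨2, 6, 0, 0, 32⟩, ⟨3, 9, 0, 0, 121312⟩,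
    ⟨3, 9, 0, 0, 2212⟩, ⟨3, 9, 0, 0, 1222⟩, ⟨3, 9, 0, 0, 32⟩, ⟨4, 13, 0, 0, 121412⟩,
    ⟨4, 13, 0, 0, 2412⟩, ⟨4, 13, 0, 0, 1222⟩, ⟨4, 13, 0, 0, 33⟩, ⟨5, 17, 0, 0, 141513⟩,
    ⟨5, 17, 0, 0, 2512⟩, ⟨5, 17, 0, 0, 1423⟩, ⟨5, 17, 0, 0, 1224⟩]⟩,
  ⟨311, 2, [
    ⟨2, 6, 6, 2, 12⟩, ⟨3, 9, 6, 1, 11⟩, ⟨3, 9, 7, 3, 12⟩, ⟨3, 9, 5, 2, 12⟩, ⟨4, 12, 4, 3, 14⟩,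
    ⟨4, 12, 6, 3, 12⟩, ⟨4, 13, 10, 3, 12⟩, ⟨4, 13, 7, 2, 12⟩, ⟨5, 16, 3, 2, 15⟩, ⟨5, 16, 5, 3, 14⟩,
    ⟨5, 17, 7, 2, 15⟩, ⟨6, 20, 8, 3, 12⟩, ⟨6, 20, 6, 2, 12⟩, ⟨7, 24, 8, 2, 12⟩]⟩,
  ⟨120, 0, [
    ⟨1, 2, 0, 1, 20⟩, ⟨1, 3, 1, 1, 21⟩, ⟨2, 6, 2, 1, 1212⟩, ⟨2, 6, 2, 1, 22⟩, ⟨3, 10, 3, 1, 1313⟩,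
    ⟨3, 10, 3, 1, 23⟩, ⟨4, 14, 3, 1, 1413⟩, ⟨4, 14, 3, 1, 1314⟩, ⟨4, 14, 4, 1, 23⟩,
    ⟨4, 14, 3, 1, 24⟩, ⟨5, 18, 3, 1, 1513⟩, ⟨5, 18, 5, 1, 1413⟩, ⟨5, 18, 3, 1, 25⟩]⟩,
  ⟨221, 1, [
    ⟨1, 3, 2, 1, 21⟩, ⟨2, 4, 0, 2, 1110⟩, ⟨2, 5, 2, 1, 1111⟩, ⟨2, 5, 2, 2, 21⟩, ⟨3, 8, 2, 1, 1110⟩,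
    ⟨3, 8, 1, 2, 21⟩, ⟨4, 12, 2, 1, 1111⟩, ⟨4, 12, 2, 2, 21⟩, ⟨5, 16, 4, 2, 1114⟩,
    ⟨5, 17, 2, 1, 1515⟩, ⟨5, 17, 10, 2, 21⟩]⟩,
  ⟨401, 1, [
    ⟨1, 3, 4, 1, 0⟩, ⟨2, 5, 4, 2, 0⟩, ⟨3, 8, 5, 3, 0⟩, ⟨3, 8, 3, 2, 0⟩, ⟨3, 9, 8, 1, 0⟩,
    ⟨4, 12, 8, 4, 0⟩, ⟨4, 12, 5, 3, 0⟩, ⟨4, 12, 4, 2, 0⟩, ⟨5, 16, 9, 4, 0⟩, ⟨5, 16, 6, 3, 0⟩,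
    ⟨5, 17, 12, 3, 0⟩]⟩,
  ⟨122, 2, [
    ⟨2, 5, 1, 1, 1211⟩, ⟨2, 6, 2, 1, 22⟩, ⟨3, 8, 1, 1, 1211⟩, ⟨3, 9, 2, 1, 22⟩,
    ⟨4, 12, 1, 1, 1311⟩, ⟨4, 12, 1, 1, 21⟩, ⟨5, 16, 1, 1, 1411⟩, ⟨5, 16, 3, 1, 1311⟩,
    ⟨5, 16, 2, 1, 22⟩, ⟨6, 20, 2, 1, 1515⟩, ⟨6, 20, 2, 1, 22⟩]⟩,
  ⟨122, 3, [
    ⟨2, 6, 2, 1, 1312⟩, ⟨3, 9, 2, 1, 1312⟩, ⟨3, 10, 3, 1, 23⟩, ⟨4, 13, 2, 1, 1412⟩,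
    ⟨4, 13, 2, 1, 22⟩, ⟨5, 16, 1, 1, 1315⟩, ⟨5, 16, 2, 1, 1312⟩, ⟨5, 16, 1, 1, 21⟩,
    ⟨6, 20, 2, 1, 1312⟩, ⟨7, 24, 2, 1, 1512⟩, ⟨7, 24, 4, 1, 1412⟩]⟩,
  ⟨212, 2, [
    ⟨2, 5, 2, 2, 11⟩, ⟨2, 6, 4, 1, 12⟩, ⟨3, 8, 2, 2, 11⟩, ⟨3, 9, 4, 1, 12⟩, ⟨4, 12, 3, 2, 11⟩,
    ⟨4, 12, 2, 1, 11⟩, ⟨4, 12, 2, 2, 14⟩, ⟨5, 16, 4, 2, 11⟩, ⟨5, 16, 2, 2, 15⟩, ⟨6, 20, 10, 2, 12⟩,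
    ⟨6, 20, 4, 1, 12⟩]⟩,
  ⟨41, 5, [
    ⟨4, 13, 0, 0, 231412⟩, ⟨4, 13, 0, 0, 3412⟩, ⟨5, 16, 0, 0, 3312⟩, ⟨5, 16, 0, 0, 2221⟩,
    ⟨5, 17, 0, 0, 151422⟩, ⟨5, 17, 0, 0, 1531⟩, ⟨6, 20, 0, 0, 15151312⟩, ⟨6, 20, 0, 0, 3312⟩,
    ⟨6, 20, 0, 0, 151222⟩, ⟨6, 20, 0, 0, 42⟩, ⟨7, 24, 0, 0, 231512⟩]⟩,
  ⟨311, 1, [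
    ⟨1, 3, 3, 1, 11⟩, ⟨2, 5, 3, 2, 11⟩, ⟨3, 8, 3, 1, 10⟩, ⟨3, 8, 4, 3, 11⟩, ⟨3, 8, 2, 2, 11⟩,
    ⟨4, 12, 7, 3, 11⟩, ⟨4, 12, 3, 2, 11⟩, ⟨5, 16, 4, 2, 14⟩, ⟨5, 16, 5, 2, 11⟩,
    ⟨5, 17, 11, 3, 11⟩]⟩,
  ⟨212, 3, [
    ⟨2, 6, 4, 2, 12⟩, ⟨3, 9, 4, 2, 12⟩, ⟨3, 10, 6, 1, 13⟩, ⟨4, 12, 2, 2, 11⟩, ⟨4, 13, 5, 2, 12⟩,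
    ⟨4, 13, 4, 1, 12⟩, ⟨4, 13, 4, 2, 15⟩, ⟨5, 16, 2, 1, 11⟩, ⟨6, 20, 4, 2, 12⟩, ⟨7, 24, 6, 2, 12⟩]⟩,
  ⟨131, 3, [
    ⟨3, 10, 3, 1, 1323⟩, ⟨3, 10, 3, 1, 33⟩, ⟨4, 13, 2, 1, 131412⟩, ⟨5, 16, 3, 1, 2311⟩,
    ⟨5, 16, 2, 1, 2312⟩, ⟨5, 17, 4, 1, 1325⟩, ⟨6, 20, 5, 1, 131315⟩, ⟨6, 20, 2, 1, 2312⟩,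
    ⟨7, 24, 2, 1, 131512⟩, ⟨7, 24, 4, 1, 1322⟩]⟩,
  ⟨121, 2, [
    ⟨2, 6, 2, 1, 1212⟩, ⟨2, 6, 2, 1, 22⟩, ⟨3, 9, 2, 1, 1212⟩, ⟨3, 9, 2, 1, 22⟩,
    ⟨4, 13, 2, 1, 1412⟩, ⟨4, 13, 2, 1, 22⟩, ⟨5, 17, 4, 1, 1214⟩, ⟨5, 17, 4, 1, 1511⟩,
    ⟨5, 17, 2, 1, 24⟩]⟩,
  ⟨401, 2, [
    ⟨2, 6, 8, 2, 0⟩, ⟨3, 9, 9, 3, 0⟩, ⟨3, 9, 7, 2, 0⟩, ⟨4, 13, 12, 4, 0⟩, ⟨4, 13, 9, 3, 0⟩,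
    ⟨6, 20, 11, 4, 0⟩, ⟨6, 20, 9, 3, 0⟩, ⟨6, 20, 8, 2, 0⟩, ⟨7, 24, 10, 3, 0⟩]⟩,
  ⟨31, 3, [
    ⟨3, 10, 0, 0, 131413⟩, ⟨3, 10, 0, 0, 2313⟩, ⟨3, 10, 0, 0, 1323⟩, ⟨3, 10, 0, 0, 33⟩,
    ⟨4, 13, 0, 0, 2312⟩, ⟨4, 14, 0, 0, 1324⟩, ⟨5, 17, 0, 0, 131412⟩, ⟨5, 17, 0, 0, 151511⟩,
    ⟨5, 17, 0, 0, 35⟩]⟩,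
  ⟨32, 5, [
    ⟨3, 10, 0, 0, 141513⟩, ⟨3, 10, 0, 0, 2413⟩, ⟨5, 16, 0, 0, 121311⟩, ⟨5, 16, 0, 0, 2311⟩,
    ⟨5, 17, 0, 0, 1325⟩, ⟨5, 17, 0, 0, 31⟩, ⟨6, 20, 0, 0, 1222⟩, ⟨7, 24, 0, 0, 2512⟩,
    ⟨7, 24, 0, 0, 1322⟩]⟩,
  ⟨210, 0, [
    ⟨1, 2, 0, 1, 10⟩, ⟨1, 3, 2, 1, 11⟩, ⟨2, 6, 4, 2, 12⟩, ⟨3, 10, 6, 2, 13⟩, ⟨4, 14, 7, 2, 13⟩,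
    ⟨4, 14, 6, 2, 15⟩, ⟨4, 14, 6, 1, 14⟩, ⟨5, 18, 8, 2, 13⟩]⟩,
  ⟨302, 3, [
    ⟨2, 6, 6, 2, 0⟩, ⟨3, 8, 4, 3, 0⟩, ⟨3, 9, 6, 2, 0⟩, ⟨4, 12, 4, 3, 0⟩, ⟨4, 12, 3, 2, 0⟩,
    ⟨5, 16, 5, 3, 0⟩, ⟨6, 20, 12, 3, 0⟩, ⟨6, 20, 6, 2, 0⟩]⟩,
  ⟨302, 4, [
    ⟨3, 9, 7, 3, 0⟩, ⟨3, 10, 9, 2, 0⟩, ⟨4, 13, 7, 3, 0⟩, ⟨4, 13, 6, 2, 0⟩, ⟨5, 16, 0, 1, 0⟩,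
    ⟨5, 16, 3, 2, 0⟩, ⟨6, 20, 7, 3, 0⟩, ⟨7, 24, 8, 3, 0⟩]⟩,
  ⟨131, 5, [
    ⟨5, 16, 1, 1, 121311⟩, ⟨5, 16, 0, 1, 1520⟩, ⟨5, 17, 5, 1, 1422⟩, ⟨5, 17, 2, 1, 1325⟩,
    ⟨5, 17, 5, 1, 31⟩, ⟨6, 20, 5, 1, 151312⟩, ⟨7, 24, 3, 1, 2512⟩, ⟨7, 24, 2, 1, 1322⟩]⟩,
  ⟨300, 0, [
    ⟨1, 2, 0, 1, 0⟩, ⟨1, 3, 3, 1, 0⟩, ⟨2, 6, 6, 2, 0⟩, ⟨3, 10, 10, 3, 0⟩, ⟨3, 10, 9, 2, 0⟩,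
    ⟨4, 14, 10, 3, 0⟩, ⟨5, 18, 11, 3, 0⟩]⟩,
  ⟨41, 0, [
    ⟨1, 2, 0, 0, 40⟩, ⟨2, 4, 0, 0, 3010⟩, ⟨2, 4, 0, 0, 2020⟩, ⟨2, 4, 0, 0, 1030⟩, ⟨2, 4, 0, 0, 40⟩,
    ⟨3, 8, 0, 0, 41⟩, ⟨5, 16, 0, 0, 201414⟩]⟩,
  ⟨21, 3, [
    ⟨3, 10, 0, 0, 1313⟩, ⟨3, 10, 0, 0, 23⟩, ⟨4, 14, 0, 0, 1413⟩, ⟨4, 14, 0, 0, 1314⟩,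
    ⟨4, 14, 0, 0, 24⟩, ⟨5, 18, 0, 0, 1513⟩, ⟨5, 18, 0, 0, 25⟩]⟩,
  ⟨311, 3, [
    ⟨3, 10, 9, 2, 13⟩, ⟨4, 12, 4, 3, 11⟩, ⟨4, 13, 6, 2, 15⟩, ⟨4, 13, 7, 3, 15⟩, ⟨5, 16, 5, 3, 11⟩,
    ⟨6, 20, 7, 3, 15⟩, ⟨7, 24, 8, 3, 15⟩]⟩,
  ⟨23, 4, [
    ⟨4, 12, 0, 0, 21⟩, ⟨4, 13, 0, 0, 1412⟩, ⟨4, 13, 0, 0, 24⟩, ⟨5, 16, 0, 0, 1311⟩,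
    ⟨5, 16, 0, 0, 20⟩, ⟨6, 20, 0, 0, 1412⟩, ⟨6, 20, 0, 0, 22⟩]⟩,
  ⟨32, 2, [
    ⟨2, 4, 0, 0, 2110⟩, ⟨2, 5, 0, 0, 1221⟩, ⟨2, 6, 0, 0, 32⟩, ⟨3, 8, 0, 0, 2211⟩,
    ⟨3, 8, 0, 0, 1221⟩, ⟨3, 9, 0, 0, 32⟩]⟩,
  ⟨121, 3, [
    ⟨3, 10, 3, 1, 1313⟩, ⟨3, 10, 3, 1, 23⟩, ⟨4, 13, 2, 1, 1312⟩, ⟨4, 14, 3, 1, 24⟩,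
    ⟨5, 17, 3, 1, 1412⟩, ⟨5, 17, 4, 1, 23⟩]⟩,
  ⟨131, 4, [
    ⟨3, 10, 3, 1, 141513⟩, ⟨3, 10, 3, 1, 2413⟩, ⟨5, 16, 1, 1, 2315⟩, ⟨5, 16, 1, 1, 1221⟩,
    ⟨5, 16, 4, 1, 30⟩, ⟨7, 24, 4, 1, 2412⟩]⟩,
  ⟨22, 4, [
    ⟨3, 10, 0, 0, 1413⟩, ⟨4, 13, 0, 0, 22⟩, ⟨4, 14, 0, 0, 1513⟩, ⟨5, 17, 0, 0, 1415⟩,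
    ⟨5, 17, 0, 0, 1511⟩, ⟨5, 17, 0, 0, 21⟩]⟩,
  ⟨212, 4, [
    ⟨3, 10, 6, 2, 13⟩, ⟨4, 13, 4, 2, 12⟩, ⟨5, 16, 0, 1, 14⟩, ⟨5, 16, 2, 2, 11⟩, ⟨5, 17, 10, 1, 12⟩,
    ⟨7, 24, 4, 1, 12⟩]⟩,
  ⟨23, 3, [
    ⟨3, 9, 0, 0, 1412⟩, ⟨3, 9, 0, 0, 22⟩, ⟨4, 12, 0, 0, 1311⟩, ⟨4, 12, 0, 0, 22⟩,
    ⟨5, 16, 0, 0, 1511⟩, ⟨5, 16, 0, 0, 25⟩]⟩,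
  ⟨121, 4, [
    ⟨4, 14, 4, 1, 1513⟩, ⟨4, 14, 4, 1, 1414⟩, ⟨4, 14, 4, 1, 23⟩, ⟨5, 17, 2, 1, 1513⟩,
    ⟨5, 17, 4, 1, 21⟩, ⟨5, 17, 2, 1, 23⟩]⟩,
  ⟨311, 4, [
    ⟨4, 13, 7, 3, 12⟩, ⟨4, 13, 6, 2, 12⟩, ⟨5, 16, 0, 1, 14⟩, ⟨5, 16, 3, 2, 11⟩, ⟨6, 20, 7, 3, 12⟩,
    ⟨7, 24, 8, 3, 12⟩]⟩,
  ⟨112, 4, [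
    ⟨4, 14, 4, 1, 13⟩, ⟨4, 14, 3, 1, 14⟩, ⟨5, 17, 1, 1, 14⟩, ⟨5, 17, 3, 1, 12⟩, ⟨5, 17, 4, 1, 11⟩,
    ⟨5, 17, 2, 1, 13⟩]⟩,
  ⟨31, 1, [
    ⟨1, 3, 0, 0, 31⟩, ⟨2, 5, 0, 0, 2111⟩, ⟨2, 5, 0, 0, 1121⟩, ⟨2, 5, 0, 0, 31⟩,
    ⟨5, 17, 0, 0, 111414⟩]⟩,
  ⟨131, 0, [
    ⟨1, 2, 0, 1, 30⟩, ⟨2, 4, 0, 1, 2010⟩, ⟨2, 4, 0, 1, 1020⟩, ⟨2, 4, 0, 1, 30⟩,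
    ⟨5, 16, 0, 1, 101414⟩]⟩,
  ⟨221, 0, [
    ⟨1, 2, 0, 1, 20⟩, ⟨2, 4, 0, 1, 1010⟩, ⟨2, 4, 0, 2, 20⟩, ⟨5, 16, 0, 1, 1414⟩,
    ⟨5, 16, 8, 2, 20⟩]⟩,
  ⟨211, 2, [
    ⟨2, 6, 4, 2, 12⟩, ⟨3, 9, 4, 2, 12⟩, ⟨4, 13, 6, 2, 12⟩, ⟨4, 13, 4, 1, 12⟩, ⟨5, 17, 5, 2, 14⟩]⟩,
  ⟨301, 2, [
    ⟨2, 6, 6, 2, 0⟩, ⟨3, 9, 7, 3, 0⟩, ⟨3, 9, 6, 2, 0⟩, ⟨4, 13, 8, 3, 0⟩, ⟨4, 13, 6, 2, 0⟩]⟩,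
  ⟨22, 3, [
    ⟨2, 6, 0, 0, 1312⟩, ⟨3, 9, 0, 0, 1312⟩, ⟨3, 10, 0, 0, 23⟩, ⟨4, 13, 0, 0, 1312⟩,
    ⟨4, 13, 0, 0, 23⟩]⟩,
  ⟨41, 3, [
    ⟨3, 10, 0, 0, 131423⟩, ⟨3, 10, 0, 0, 2323⟩, ⟨3, 10, 0, 0, 1333⟩, ⟨4, 13, 0, 0, 2322⟩,
    ⟨7, 24, 0, 0, 152512⟩]⟩,
  ⟨221, 4, [
    ⟨3, 10, 6, 2, 1413⟩, ⟨3, 10, 6, 2, 23⟩, ⟨5, 16, 2, 1, 1311⟩, ⟨5, 17, 4, 1, 25⟩,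
    ⟨7, 24, 4, 1, 22⟩]⟩,
  ⟨122, 4, [
    ⟨3, 10, 3, 1, 1413⟩, ⟨5, 16, 1, 1, 1311⟩, ⟨5, 16, 4, 1, 20⟩, ⟨5, 17, 2, 1, 25⟩,
    ⟨7, 24, 2, 1, 22⟩]⟩,
  ⟨302, 5, [
    ⟨3, 10, 10, 3, 0⟩, ⟨5, 17, 7, 2, 0⟩, ⟨5, 17, 3, 1, 0⟩, ⟨5, 17, 11, 3, 0⟩, ⟨7, 24, 6, 2, 0⟩]⟩,
  ⟨23, 5, [
    ⟨3, 10, 0, 0, 1513⟩, ⟨4, 13, 0, 0, 22⟩, ⟨5, 17, 0, 0, 21⟩, ⟨6, 20, 0, 0, 1312⟩,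
    ⟨7, 24, 0, 0, 1412⟩]⟩,
  ⟨203, 3, [
    ⟨3, 8, 2, 2, 0⟩, ⟨3, 9, 4, 1, 0⟩, ⟨3, 9, 5, 2, 0⟩, ⟨4, 12, 2, 2, 0⟩, ⟨5, 16, 5, 2, 0⟩]⟩,
  ⟨203, 4, [
    ⟨3, 9, 4, 2, 0⟩, ⟨4, 13, 4, 2, 0⟩, ⟨5, 16, 0, 1, 0⟩, ⟨5, 16, 2, 2, 0⟩, ⟨6, 20, 4, 2, 0⟩]⟩,
  ⟨211, 4, [
    ⟨4, 14, 7, 2, 14⟩, ⟨4, 14, 6, 1, 14⟩, ⟨5, 17, 2, 1, 14⟩, ⟨5, 17, 7, 2, 12⟩, ⟨5, 17, 6, 1, 12⟩]⟩,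
  ⟨122, 5, [
    ⟨5, 16, 0, 1, 1114⟩, ⟨5, 16, 0, 1, 20⟩, ⟨5, 17, 5, 1, 1512⟩, ⟨5, 17, 5, 1, 21⟩,
    ⟨7, 24, 2, 1, 1412⟩]⟩,
  ⟨212, 5, [
    ⟨5, 16, 0, 1, 12⟩, ⟨5, 16, 4, 2, 10⟩, ⟨5, 17, 2, 1, 15⟩, ⟨5, 17, 6, 2, 15⟩, ⟨7, 24, 4, 2, 12⟩]⟩,
  ⟨121, 1, [
    ⟨1, 3, 1, 1, 21⟩, ⟨2, 5, 1, 1, 1111⟩, ⟨2, 5, 1, 1, 21⟩, ⟨5, 17, 1, 1, 1414⟩]⟩,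
  ⟨401, 0, [
    ⟨1, 2, 0, 1, 0⟩, ⟨2, 4, 0, 2, 0⟩, ⟨3, 8, 4, 1, 0⟩, ⟨5, 16, 8, 3, 0⟩]⟩,
  ⟨32, 1, [
    ⟨2, 4, 0, 0, 1120⟩, ⟨2, 5, 0, 0, 31⟩, ⟨3, 8, 0, 0, 31⟩, ⟨4, 12, 0, 0, 31⟩]⟩,
  ⟨202, 3, [
    ⟨2, 6, 4, 2, 0⟩, ⟨3, 9, 4, 2, 0⟩, ⟨3, 10, 6, 1, 0⟩, ⟨4, 13, 4, 2, 0⟩]⟩,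
  ⟨302, 1, [
    ⟨2, 4, 0, 2, 0⟩, ⟨2, 5, 3, 1, 0⟩, ⟨3, 8, 3, 1, 0⟩, ⟨4, 12, 3, 1, 0⟩]⟩,
  ⟨302, 2, [
    ⟨2, 5, 3, 2, 0⟩, ⟨2, 6, 6, 1, 0⟩, ⟨3, 8, 3, 2, 0⟩, ⟨3, 9, 6, 1, 0⟩]⟩,
  ⟨211, 3, [
    ⟨3, 10, 6, 2, 13⟩, ⟨4, 13, 4, 2, 12⟩, ⟨4, 14, 8, 1, 13⟩, ⟨5, 17, 6, 2, 13⟩]⟩,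
  ⟨202, 4, [
    ⟨3, 10, 6, 2, 0⟩, ⟨4, 14, 7, 2, 0⟩, ⟨5, 17, 5, 2, 0⟩, ⟨5, 17, 2, 1, 0⟩]⟩,
  ⟨113, 3, [
    ⟨3, 9, 2, 1, 12⟩, ⟨4, 13, 2, 1, 12⟩, ⟨5, 16, 1, 1, 11⟩, ⟨6, 20, 2, 1, 12⟩]⟩,
  ⟨203, 5, [
    ⟨3, 10, 6, 2, 0⟩, ⟨5, 17, 2, 1, 0⟩, ⟨5, 17, 7, 2, 0⟩, ⟨7, 24, 4, 2, 0⟩]⟩,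
  ⟨41, 4, [
    ⟨4, 13, 0, 0, 14151412⟩, ⟨4, 13, 0, 0, 241412⟩, ⟨5, 16, 0, 0, 221411⟩, ⟨5, 16, 0, 0, 1430⟩]⟩,
  ⟨121, 5, [
    ⟨4, 14, 3, 1, 1513⟩, ⟨4, 14, 3, 1, 1414⟩, ⟨5, 17, 1, 1, 1214⟩, ⟨5, 17, 1, 1, 1511⟩]⟩,
  ⟨22, 5, [
    ⟨4, 14, 0, 0, 1414⟩, ⟨4, 14, 0, 0, 24⟩, ⟨5, 17, 0, 0, 1412⟩, ⟨5, 17, 0, 0, 1214⟩]⟩,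
  ⟨211, 1, [
    ⟨1, 3, 2, 1, 11⟩, ⟨2, 5, 2, 2, 11⟩, ⟨5, 17, 8, 2, 11⟩]⟩,
  ⟨301, 1, [
    ⟨1, 3, 3, 1, 0⟩, ⟨2, 5, 3, 2, 0⟩, ⟨5, 17, 9, 3, 0⟩]⟩,
  ⟨311, 0, [
    ⟨1, 2, 0, 1, 10⟩, ⟨2, 4, 0, 2, 10⟩, ⟨5, 16, 8, 3, 10⟩]⟩,
  ⟨22, 2, [
    ⟨2, 5, 0, 0, 1211⟩, ⟨2, 6, 0, 0, 22⟩, ⟨3, 9, 0, 0, 22⟩]⟩,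
  ⟨112, 2, [
    ⟨2, 6, 2, 1, 12⟩, ⟨3, 9, 2, 1, 12⟩, ⟨4, 13, 2, 1, 12⟩]⟩,
  ⟨122, 1, [
    ⟨2, 4, 0, 1, 1110⟩, ⟨2, 5, 1, 1, 21⟩, ⟨3, 8, 1, 1, 21⟩]⟩,
  ⟨202, 2, [
    ⟨2, 5, 2, 2, 0⟩, ⟨2, 6, 4, 1, 0⟩, ⟨3, 9, 4, 1, 0⟩]⟩,
  ⟨212, 1, [
    ⟨2, 4, 0, 2, 10⟩, ⟨2, 5, 2, 1, 11⟩, ⟨3, 8, 2, 1, 11⟩]⟩,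
  ⟨111, 3, [
    ⟨3, 10, 3, 1, 13⟩, ⟨4, 14, 3, 1, 14⟩, ⟨4, 14, 4, 1, 13⟩]⟩,
  ⟨201, 3, [
    ⟨3, 10, 6, 2, 0⟩, ⟨4, 14, 7, 2, 0⟩, ⟨5, 18, 8, 2, 0⟩]⟩,
  ⟨301, 3, [
    ⟨3, 10, 10, 3, 0⟩, ⟨3, 10, 9, 2, 0⟩, ⟨4, 14, 11, 2, 0⟩]⟩,
  ⟨311, 5, [
    ⟨3, 10, 10, 3, 13⟩, ⟨5, 17, 3, 1, 15⟩, ⟨7, 24, 6, 2, 12⟩]⟩,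
  ⟨112, 3, [
    ⟨3, 10, 3, 1, 13⟩, ⟨5, 17, 3, 1, 15⟩, ⟨5, 17, 4, 1, 13⟩]⟩,
  ⟨13, 4, [
    ⟨3, 10, 0, 0, 13⟩, ⟨4, 13, 0, 0, 12⟩, ⟨5, 17, 0, 0, 11⟩]⟩,
  ⟨103, 4, [
    ⟨3, 10, 3, 1, 0⟩, ⟨4, 13, 2, 1, 0⟩, ⟨5, 17, 1, 1, 0⟩]⟩,
  ⟨31, 4, [
    ⟨4, 14, 0, 0, 141513⟩, ⟨4, 14, 0, 0, 1423⟩, ⟨5, 17, 0, 0, 1421⟩]⟩,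
  ⟨31, 5, [
    ⟨4, 14, 0, 0, 2513⟩, ⟨5, 17, 0, 0, 2415⟩, ⟨5, 17, 0, 0, 1323⟩]⟩,
  ⟨301, 4, [
    ⟨4, 14, 12, 3, 0⟩, ⟨4, 14, 10, 2, 0⟩, ⟨5, 17, 6, 2, 0⟩]⟩,
  ⟨14, 4, [
    ⟨4, 12, 0, 0, 11⟩, ⟨5, 16, 0, 0, 11⟩, ⟨6, 20, 0, 0, 12⟩]⟩,
  ⟨104, 4, [
    ⟨4, 12, 1, 1, 0⟩, ⟨5, 16, 1, 1, 0⟩, ⟨6, 20, 2, 1, 0⟩]⟩,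
  ⟨221, 5, [
    ⟨5, 16, 0, 1, 1114⟩, ⟨5, 16, 2, 2, 1311⟩, ⟨5, 16, 4, 2, 20⟩]⟩,
  ⟨113, 5, [
    ⟨5, 16, 0, 1, 10⟩, ⟨5, 17, 5, 1, 12⟩, ⟨5, 17, 2, 1, 15⟩]⟩,
  ⟨20, 0, [
    ⟨1, 3, 0, 0, 21⟩, ⟨4, 15, 0, 0, 1414⟩]⟩,
  ⟨110, 0, [
    ⟨1, 3, 1, 1, 11⟩, ⟨4, 15, 4, 1, 14⟩]⟩,
  ⟨200, 0, [
    ⟨1, 3, 2, 1, 0⟩, ⟨4, 15, 8, 2, 0⟩]⟩,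
  ⟨21, 2, [
    ⟨2, 6, 0, 0, 1212⟩, ⟨2, 6, 0, 0, 22⟩]⟩,
  ⟨401, 3, [
    ⟨3, 10, 13, 3, 0⟩, ⟨3, 10, 12, 2, 0⟩]⟩,
  ⟨3, 4, [
    ⟨3, 10, 0, 0, 0⟩, ⟨4, 14, 0, 0, 0⟩]⟩,
  ⟨23, 2, [
    ⟨3, 8, 0, 0, 1311⟩, ⟨3, 8, 0, 0, 21⟩]⟩,
  ⟨113, 2, [
    ⟨3, 8, 1, 1, 11⟩, ⟨4, 12, 1, 1, 11⟩]⟩,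
  ⟨113, 4, [
    ⟨3, 10, 3, 1, 13⟩, ⟨7, 24, 2, 1, 12⟩]⟩,
  ⟨203, 2, [
    ⟨3, 8, 2, 1, 0⟩, ⟨3, 8, 3, 2, 0⟩]⟩,
  ⟨111, 4, [
    ⟨4, 14, 3, 1, 13⟩, ⟨5, 18, 5, 1, 13⟩]⟩,
  ⟨211, 5, [
    ⟨4, 14, 7, 2, 13⟩, ⟨5, 17, 5, 2, 11⟩]⟩,
  ⟨401, 5, [
    ⟨4, 13, 8, 2, 0⟩, ⟨5, 17, 8, 2, 0⟩]⟩,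
  ⟨102, 4, [
    ⟨4, 14, 3, 1, 0⟩, ⟨5, 18, 5, 1, 0⟩]⟩,
  ⟨104, 5, [
    ⟨4, 13, 2, 1, 0⟩, ⟨7, 24, 5, 1, 0⟩]⟩,
  ⟨0, 0, [
    ⟨0, 1, 0, 0, 0⟩]⟩,
  ⟨11, 1, [
    ⟨1, 3, 0, 0, 11⟩]⟩,
  ⟨21, 0, [
    ⟨1, 2, 0, 0, 20⟩]⟩,
  ⟨21, 1, [
    ⟨1, 3, 0, 0, 21⟩]⟩,
  ⟨31, 0, [
    ⟨1, 2, 0, 0, 30⟩]⟩,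
  ⟨101, 1, [
    ⟨1, 3, 1, 1, 0⟩]⟩,
  ⟨111, 0, [
    ⟨1, 2, 0, 1, 10⟩]⟩,
  ⟨111, 1, [
    ⟨1, 3, 1, 1, 11⟩]⟩,
  ⟨121, 0, [
    ⟨1, 2, 0, 1, 20⟩]⟩,
  ⟨201, 0, [
    ⟨1, 2, 0, 1, 0⟩]⟩,
  ⟨201, 1, [
    ⟨1, 3, 2, 1, 0⟩]⟩,
  ⟨211, 0, [
    ⟨1, 2, 0, 1, 10⟩]⟩,
  ⟨301, 0, [
    ⟨1, 2, 0, 1, 0⟩]⟩,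
  ⟨111, 2, [
    ⟨2, 6, 2, 1, 12⟩]⟩,
  ⟨201, 2, [
    ⟨2, 6, 4, 2, 0⟩]⟩,
  ⟨12, 2, [
    ⟨2, 6, 0, 0, 12⟩]⟩,
  ⟨22, 1, [
    ⟨2, 5, 0, 0, 21⟩]⟩,
  ⟨32, 0, [
    ⟨2, 4, 0, 0, 30⟩]⟩,
  ⟨102, 2, [
    ⟨2, 6, 2, 1, 0⟩]⟩,
  ⟨112, 1, [
    ⟨2, 5, 1, 1, 11⟩]⟩,
  ⟨122, 0, [
    ⟨2, 4, 0, 1, 20⟩]⟩,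
  ⟨202, 1, [
    ⟨2, 5, 2, 1, 0⟩]⟩,
  ⟨212, 0, [
    ⟨2, 4, 0, 1, 10⟩]⟩,
  ⟨302, 0, [
    ⟨2, 4, 0, 1, 0⟩]⟩,
  ⟨12, 3, [
    ⟨3, 10, 0, 0, 13⟩]⟩,
  ⟨102, 3, [
    ⟨3, 10, 3, 1, 0⟩]⟩,
  ⟨13, 3, [
    ⟨3, 9, 0, 0, 12⟩]⟩,
  ⟨103, 3, [
    ⟨3, 9, 2, 1, 0⟩]⟩,
  ⟨11, 4, [
    ⟨4, 15, 0, 0, 14⟩]⟩,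
  ⟨21, 4, [
    ⟨4, 14, 0, 0, 23⟩]⟩,
  ⟨101, 4, [
    ⟨4, 15, 4, 1, 0⟩]⟩,
  ⟨201, 5, [
    ⟨4, 14, 6, 2, 0⟩]⟩,
  ⟨201, 4, [
    ⟨4, 14, 6, 1, 0⟩]⟩,
  ⟨2, 4, [
    ⟨4, 15, 0, 0, 0⟩]⟩,
  ⟨12, 4, [
    ⟨4, 14, 0, 0, 13⟩]⟩,
  ⟨13, 5, [
    ⟨4, 14, 0, 0, 14⟩]⟩,
  ⟨103, 5, [
    ⟨4, 14, 4, 1, 0⟩]⟩,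
  ⟨4, 4, [
    ⟨4, 13, 0, 0, 0⟩]⟩,
  ⟨14, 3, [
    ⟨4, 12, 0, 0, 12⟩]⟩,
  ⟨14, 5, [
    ⟨4, 13, 0, 0, 12⟩]⟩,
  ⟨104, 3, [
    ⟨4, 12, 2, 1, 0⟩]⟩,
  ⟨111, 5, [
    ⟨5, 18, 3, 1, 13⟩]⟩,
  ⟨401, 4, [
    ⟨5, 16, 4, 2, 0⟩]⟩,
  ⟨12, 5, [
    ⟨5, 18, 0, 0, 13⟩]⟩,
  ⟨102, 5, [
    ⟨5, 18, 3, 1, 0⟩]⟩,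
  ⟨112, 5, [
    ⟨5, 17, 1, 1, 11⟩]⟩,
  ⟨3, 5, [
    ⟨5, 18, 0, 0, 0⟩]⟩,
  ⟨4, 5, [
    ⟨5, 17, 0, 0, 0⟩]⟩,
  ⟨5, 4, [
    ⟨5, 16, 0, 0, 0⟩]⟩,
  ⟨5, 5, [
    ⟨6, 20, 0, 0, 0⟩]⟩]

set_option maxRecDepth 100000 in
theorem sidesOK_tables : sidesOK sideTable splitTable = true := by decide +kernel

set_option maxRecDepth 100000 in
theorem groupsOK_tables : groupsOK sideTable splitTable = true := by decide +kernel

/-- An `n`-vertex outer `5`-planar graph has at most `(389/98)(n-2)` edges. -/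
theorem outer_five_planar_edge_bound_improved (n : ℕ) (hn : 3 ≤ n) (G : SimpleGraph (Fin n))
    (hG : IsOuterKPlanar n 5 G) :
    (G.edgeSet.ncard : ℝ) ≤ (389 / 98) * ((n : ℝ) - 2) := by
  have : NeZero n := ⟨by omega⟩
  obtain ⟨σ, hσ⟩ := hG
  have h := totalBound sidesOK_tables groupsOK_tables (List.mem_cons_self ..) hn _ hσ.isOuterFive
  rw [← two_mul_ncard_edgeSet] at h
  have h' : 98 * G.edgeSet.ncard + 389 * 2 ≤ 389 * n := by omega
  have h'' : 98 * (G.edgeSet.ncard : ℝ) + 389 * 2 ≤ 389 * n := by exact_mod_cast h'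
  linarith
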